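/- arXiv:1904.07713 — 2 statements merged into one kernel-verified Lean document; each statement's English description precedes it below -/
import Mathlib

section
/- Let n ≥ 1, a > 1, b = √(a² − 1), and let Ω ⊆ ℝⁿ be a nonempty open connected set. Let u : Ω → ℝ be a C² function satisfying (√(a²+1)/(2b)) · Σ_{i=1}^n ln((λ_i(D²u(x)) + a − b)/(λ_i(D²u(x)) + a + b)) = −u(x) + (1/2)⟨x, Du(x)⟩ for all x ∈ Ω, such that either D²u(x) > −(a−b)I for every x ∈ Ω, or D²u(x) < −(a+b)I for every x ∈ Ω. Assume that |Du| = ∞ on ∂Ω or |u| = ∞ on ∂Ω. Then Ω = ℝⁿ and u is a quadratic polynomial. -/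
open Real Filter Matrix
open scoped RealInnerProductSpace

noncomputable section

/-- The Hessian matrix of `u` at `x`, with entries the second iterated derivatives
in the coordinate directions. -/
def Hess (n : ℕ) (u : EuclideanSpace ℝ (Fin n) → ℝ) (x : EuclideanSpace ℝ (Fin n)) :
    Matrix (Fin n) (Fin n) ℝ :=
  Matrix.of fun i j =>
    iteratedFDeriv ℝ 2 u x ![EuclideanSpace.single i 1, EuclideanSpace.single j 1]

open Classical in
/-- The eigenvalues of a real symmetric matrix (junk value `0` if not symmetric). -/
def eigs {n : ℕ} (A : Matrix (Fin n) (Fin n) ℝ) : Fin n → ℝ :=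
  if h : A.IsHermitian then h.eigenvalues else 0

/-- `u` is a quadratic polynomial:
`u x = (1/2)⟨x, A x⟩ + ⟨β, x⟩ + c` with `A` symmetric. -/
def IsQuadPoly (n : ℕ) (u : EuclideanSpace ℝ (Fin n) → ℝ) : Prop :=
  ∃ (A : Matrix (Fin n) (Fin n) ℝ) (β : EuclideanSpace ℝ (Fin n)) (c : ℝ), A.IsSymm ∧
    ∀ x, u x = (1/2) * (∑ i, ∑ j, A i j * x i * x j) + ⟪β, x⟫ + c


/-! ### Matrix lemmas -/

lemma posDef_inv_factor {n : ℕ} {A : Matrix (Fin n) (Fin n) ℝ} (hA : A.PosDef) :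
    ∃ C : Matrix (Fin n) (Fin n) ℝ, A⁻¹ = Cᴴ * C := by
  have h := hA.inv.posSemidef
  open scoped MatrixOrder Matrix.Norms.L2Operator in
  obtain ⟨C, hC⟩ := CStarAlgebra.nonneg_iff_eq_star_mul_self.mp h.nonneg
  exact ⟨C, hC⟩

lemma trace_inv_mul_nonneg {n : ℕ} {A D : Matrix (Fin n) (Fin n) ℝ} (hA : A.PosDef)
    (hD : D.PosSemidef) : 0 ≤ (A⁻¹ * D).trace := by
  obtain ⟨C, hC⟩ := posDef_inv_factor hA
  have := (hD.mul_mul_conjTranspose_same C).trace_nonneg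
  rw [hC, Matrix.mul_assoc, Matrix.trace_mul_comm]
  exact this

lemma log_det_le_trace {n : ℕ} {K : Matrix (Fin n) (Fin n) ℝ} (hK : K.PosDef) :
    Real.log K.det ≤ K.trace - n := by
  rw [hK.1.det_eq_prod_eigenvalues, hK.1.trace_eq_sum_eigenvalues]
  simp only [RCLike.ofReal_real_eq_id, id]
  rw [Real.log_prod (fun i _ => (hK.eigenvalues_pos i).ne')]
  calc ∑ i, Real.log (hK.1.eigenvalues i) ≤ ∑ i, (hK.1.eigenvalues i - 1) :=
        Finset.sum_le_sum fun i _ => Real.log_le_sub_one_of_pos (hK.eigenvalues_pos i)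
    _ = _ := by simp [Finset.sum_sub_distrib]

lemma log_det_sub_le {n : ℕ} {A B : Matrix (Fin n) (Fin n) ℝ} (hA : A.PosDef) (hB : B.PosDef) :
    Real.log B.det - Real.log A.det ≤ (A⁻¹ * (B - A)).trace := by
  obtain ⟨C, hC⟩ := posDef_inv_factor hA
  have hdet : IsUnit A.det := hA.det_pos.ne'.isUnit
  have hCu : C.det ≠ 0 := by
    intro h
    have h1 := congrArg Matrix.det hC
    rw [Matrix.det_mul, h, mul_zero] at h1
    exact hA.inv.det_pos.ne' h1
  have hCU : IsUnit C := by rw [Matrix.isUnit_iff_isUnit_det]; exact hCu.isUnit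
  have hK : (C * B * Cᴴ).PosDef := by
    have := (Matrix.IsUnit.posDef_star_right_conjugate_iff (x := B) hCU).2 hB
    simpa [Matrix.star_eq_conjTranspose] using this
  have h := log_det_le_trace hK
  have h2 : (C * B * Cᴴ).det = B.det * (A⁻¹).det := by
    rw [hC]; simp only [Matrix.det_mul]; ring
  have h3 : (C * B * Cᴴ).trace = (A⁻¹ * B).trace := by
    rw [hC, Matrix.mul_assoc Cᴴ, Matrix.trace_mul_comm Cᴴ]
  have h4 : Real.log (B.det * (A⁻¹).det) = Real.log B.det - Real.log A.det := by
    rw [Real.log_mul hB.det_pos.ne' hA.inv.det_pos.ne', Matrix.det_nonsing_inv,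
      Ring.inverse_eq_inv', Real.log_inv]; ring
  rw [h2, h3, h4] at h
  rw [mul_sub, Matrix.nonsing_inv_mul _ hdet, Matrix.trace_sub, Matrix.trace_one]
  simpa using h

lemma trace_le_of_one_le {n : ℕ} {R : Matrix (Fin n) (Fin n) ℝ} (hR : (R - 1).PosSemidef) {m : ℝ}
    (hm : Real.log R.det ≤ m) : R.trace ≤ n * Real.exp m := by
  have hH : R.IsHermitian := by
    have := hR.1.add (Matrix.isHermitian_one (n := Fin n) (α := ℝ))
    simpa using this
  have h1 : ∀ i, 1 ≤ hH.eigenvalues i := by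
    intro i
    have h := hR.dotProduct_mulVec_nonneg (x := (hH.eigenvectorBasis i).ofLp)
    rw [Matrix.sub_mulVec, hH.mulVec_eigenvectorBasis, Matrix.one_mulVec] at h
    have hn : (hH.eigenvectorBasis i).ofLp ⬝ᵥ (hH.eigenvectorBasis i).ofLp = 1 := by
      have := hH.eigenvectorBasis.orthonormal.1 i
      have h2 : ⟪hH.eigenvectorBasis i, hH.eigenvectorBasis i⟫ = 1 := by
        rw [real_inner_self_eq_norm_sq, this]; norm_num
      rw [PiLp.inner_apply] at h2
      simp only [RCLike.inner_apply, conj_trivial] at h2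
      exact h2
    simp [dotProduct_sub, dotProduct_smul, hn] at h
    linarith
  rw [hH.det_eq_prod_eigenvalues] at hm
  rw [hH.trace_eq_sum_eigenvalues]
  simp only [RCLike.ofReal_real_eq_id, id] at hm ⊢
  rw [Real.log_prod (fun i _ => by have := h1 i; linarith)] at hm
  calc ∑ i, hH.eigenvalues i ≤ ∑ i : Fin n, Real.exp m := by
        refine Finset.sum_le_sum fun i _ => ?_
        have hi : 0 < hH.eigenvalues i := by have := h1 i; linarith
        rw [← Real.log_le_iff_le_exp hi]
        refine le_trans ?_ hm
        exact Finset.single_le_sum (f := fun i => Real.log (hH.eigenvalues i))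
          (fun j _ => Real.log_nonneg (h1 j)) (Finset.mem_univ i)
    _ = _ := by simp

lemma sum_log_eigs {n : ℕ} {H : Matrix (Fin n) (Fin n) ℝ} (hH : H.IsHermitian) (c d : ℝ)
    (hc : (H + c • (1 : Matrix (Fin n) (Fin n) ℝ)).det ≠ 0)
    (hd : (H + d • (1 : Matrix (Fin n) (Fin n) ℝ)).det ≠ 0) :
    ∑ i, Real.log ((eigs H i + c) / (eigs H i + d)) =
      Real.log (H + c • (1 : Matrix (Fin n) (Fin n) ℝ)).det
        - Real.log (H + d • (1 : Matrix (Fin n) (Fin n) ℝ)).det := by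
  have key : ∀ c : ℝ, (H + c • (1 : Matrix (Fin n) (Fin n) ℝ)).det
      = ∏ i, (hH.eigenvalues i + c) := by
    intro c
    have h := congrArg (Polynomial.eval (-c)) hH.charpoly_eq
    rw [Matrix.eval_charpoly, Polynomial.eval_prod] at h
    simp only [Polynomial.eval_sub, Polynomial.eval_X, Polynomial.eval_C,
      RCLike.ofReal_real_eq_id, id] at h
    have e1 : H + c • (1 : Matrix (Fin n) (Fin n) ℝ) = -(Matrix.scalar (Fin n) (-c) - H) := by
      ext i j; by_cases hij : i = j <;> simp [hij]
    rw [e1, Matrix.det_neg, h, ← Finset.card_univ, ← Finset.prod_const, ← Finset.prod_mul_distrib]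
    exact Finset.prod_congr rfl fun i _ => by ring
  rw [key] at hc hd ⊢
  rw [key]
  rw [Finset.prod_ne_zero_iff] at hc hd
  rw [Real.log_prod hc, Real.log_prod hd, ← Finset.sum_sub_distrib]
  refine Finset.sum_congr rfl fun i hi => ?_
  rw [eigs, dif_pos hH, Real.log_div (hc i hi) (hd i hi)]

/-! ### Second order condition and the viscosity inequality -/

/-- The continuous linear map attached to a matrix. -/
abbrev mT {n : ℕ} (M : Matrix (Fin n) (Fin n) ℝ) :
    EuclideanSpace ℝ (Fin n) →L[ℝ] EuclideanSpace ℝ (Fin n) :=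
  Matrix.toEuclideanCLM (n := Fin n) (𝕜 := ℝ) M

lemma second_order {n : ℕ} {k : EuclideanSpace ℝ (Fin n) → ℝ}
    {gk : EuclideanSpace ℝ (Fin n) → EuclideanSpace ℝ (Fin n)} {B : Matrix (Fin n) (Fin n) ℝ}
    {x : EuclideanSpace ℝ (Fin n)} (hk : ∀ x, HasFDerivAt k (innerSL ℝ (gk x)) x)
    (hgk : HasFDerivAt gk (mT B) x) (hmax : IsLocalMax k x) (v : EuclideanSpace ℝ (Fin n)) :
    ⟪mT B v, v⟫ ≤ 0 := by
  by_contra! hpos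
  have hl : ∀ s : ℝ, HasDerivAt (fun s : ℝ => x + s • v) v s := by
    intro s
    simpa using ((hasDerivAt_id s).smul_const v).const_add x
  have hK : ∀ s : ℝ, HasDerivAt (fun s : ℝ => k (x + s • v)) ⟪gk (x + s • v), v⟫ s := by
    intro s
    exact (hk (x + s • v)).comp_hasDerivAt s (hl s)
  have hd : deriv (fun s : ℝ => k (x + s • v)) = fun s => ⟪gk (x + s • v), v⟫ :=
    funext fun s => (hK s).deriv
  have hgk' : HasFDerivAt gk (mT B) (x + (0 : ℝ) • v) := by simpa using hgk
  have h2 : HasDerivAt (fun s : ℝ => ⟪gk (x + s • v), v⟫) ⟪mT B v, v⟫ 0 := by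
    have h3 := hgk'.comp_hasDerivAt (0 : ℝ) (hl 0)
    have h4 := h3.inner ℝ (hasDerivAt_const (0 : ℝ) v)
    simpa using h4
  have hmax' : IsLocalMax (fun s : ℝ => k (x + s • v)) 0 := by
    have hc : ContinuousAt (fun s : ℝ => x + s • v) 0 := (hl 0).continuousAt
    have : Tendsto (fun s : ℝ => x + s • v) (nhds 0) (nhds x) := by
      simpa [ContinuousAt] using hc
    have h5 := this.eventually hmax
    simpa [IsLocalMax, IsMaxFilter] using h5
  have hmin : IsLocalMin (fun s : ℝ => k (x + s • v)) 0 := by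
    apply isLocalMin_of_deriv_deriv_pos
    · rw [hd, h2.deriv]; exact hpos
    · exact hmax'.deriv_eq_zero
    · exact (hK 0).continuousAt
  have hconst : (fun s : ℝ => k (x + s • v)) =ᶠ[nhds 0] fun _ => k (x + (0 : ℝ) • v) := by
    filter_upwards [hmax', hmin] with s h1 h2
    exact le_antisymm h1 h2
  have h6 := hconst.deriv.deriv_eq
  rw [hd, h2.deriv] at h6
  simp at h6
  linarith

/-- Entire solutions of the transformed equation `κ log det D²φ = -φ + ⟨y, Dφ⟩ / 2`,
with `g = Dφ`, `Q = D²φ` and `0 < Q ≤ 1`. -/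
structure Sol (n : ℕ) (κ : ℝ) (φ : EuclideanSpace ℝ (Fin n) → ℝ)
    (g : EuclideanSpace ℝ (Fin n) → EuclideanSpace ℝ (Fin n))
    (Q : EuclideanSpace ℝ (Fin n) → Matrix (Fin n) (Fin n) ℝ) : Prop where
  kpos : 0 < κ
  hφ : ∀ y, HasFDerivAt φ (innerSL ℝ (g y)) y
  hg : ∀ y, HasFDerivAt g (mT (Q y)) y
  hQc : Continuous Q
  hQ : ∀ y, (Q y).PosDef
  hQ1 : ∀ y, ((Q y)⁻¹ - 1).PosSemidef
  eq : ∀ y, κ * Real.log (Q y).det = -φ y + (1/2) * ⟪y, g y⟫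

/-- The phase function. -/
def phase {n : ℕ} (φ : EuclideanSpace ℝ (Fin n) → ℝ)
    (g : EuclideanSpace ℝ (Fin n) → EuclideanSpace ℝ (Fin n)) (y : EuclideanSpace ℝ (Fin n)) : ℝ :=
  -φ y + (1/2) * ⟪y, g y⟫

lemma mT_symm {n : ℕ} {M : Matrix (Fin n) (Fin n) ℝ} (hM : M.IsHermitian)
    (x y : EuclideanSpace ℝ (Fin n)) : ⟪x, mT M y⟫ = ⟪mT M x, y⟫ := by
  rw [real_inner_comm y, Matrix.inner_toEuclideanCLM, Matrix.inner_toEuclideanCLM,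
    Matrix.dotProduct_mulVec, ← Matrix.mulVec_transpose, dotProduct_comm]
  have : Mᵀ = M := by simpa [Matrix.IsHermitian] using hM
  rw [this]

lemma posSemidef_of_mT {n : ℕ} {M : Matrix (Fin n) (Fin n) ℝ} (hM : M.IsHermitian)
    (h : ∀ v, 0 ≤ ⟪mT M v, v⟫) : M.PosSemidef := by
  refine Matrix.PosSemidef.of_dotProduct_mulVec_nonneg hM fun x => ?_
  have := h (WithLp.toLp 2 x)
  rw [← mT_symm hM, Matrix.inner_toEuclideanCLM] at this
  simpa using this

namespace Sol

variable {n : ℕ} {κ : ℝ} {φ : EuclideanSpace ℝ (Fin n) → ℝ}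
    {g : EuclideanSpace ℝ (Fin n) → EuclideanSpace ℝ (Fin n)}
    {Q : EuclideanSpace ℝ (Fin n) → Matrix (Fin n) (Fin n) ℝ}

lemma hasFDerivAt_phase (S : Sol n κ φ g Q) (y : EuclideanSpace ℝ (Fin n)) :
    HasFDerivAt (phase φ g) (innerSL ℝ ((1/2 : ℝ) • (mT (Q y) y - g y))) y := by
  have h1 := ((S.hφ y).neg).add (((hasFDerivAt_id y).inner ℝ (S.hg y)).const_mul (1/2 : ℝ))
  refine (h1.congr_fderiv ?_)
  ext v
  have h3 := mT_symm (S.hQ y).1 y v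
  have h4 := real_inner_comm v (g y)
  simp [fderivInnerCLM_apply, h3, -Matrix.ofLp_toEuclideanCLM]
  linarith

lemma continuous_g (S : Sol n κ φ g Q) : Continuous g :=
  continuous_iff_continuousAt.2 fun y => (S.hg y).continuousAt

lemma continuous_mT (S : Sol n κ φ g Q) : Continuous fun y => mT (Q y) := by
  have : Continuous (mT : Matrix (Fin n) (Fin n) ℝ → _) :=
    (Matrix.toEuclideanCLM (n := Fin n) (𝕜 := ℝ)).toAlgEquiv.toLinearMap.continuous_of_finiteDimensional
  exact this.comp S.hQc

lemma continuous_gphase (S : Sol n κ φ g Q) :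
    Continuous fun y => (1/2 : ℝ) • (mT (Q y) y - g y) :=
  Continuous.const_smul (Continuous.sub (S.continuous_mT.clm_apply continuous_id) S.continuous_g)
    (1/2 : ℝ)

lemma continuous_phase (S : Sol n κ φ g Q) : Continuous (phase φ g) :=
  continuous_iff_continuousAt.2 fun y => (S.hasFDerivAt_phase y).continuousAt

lemma scaling (S : Sol n κ φ g Q) {t : ℝ} (ht : 1 < t) (x : EuclideanSpace ℝ (Fin n)) :
    ∃ s ∈ Set.Ioo 1 t, (t ^ 2)⁻¹ * φ (t • x) - φ x = 2 * (t - 1) * ((s ^ 3)⁻¹ * phase φ g (s • x)) := by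
  have hd : ∀ s : ℝ, s ≠ 0 → HasDerivAt (fun s : ℝ => (s ^ 2)⁻¹ * φ (s • x))
      (2 * ((s ^ 3)⁻¹ * phase φ g (s • x))) s := by
    intro s hs
    have h1 : HasDerivAt (fun s : ℝ => φ (s • x)) ⟪g (s • x), x⟫ s := by
      have := (S.hφ (s • x)).comp_hasDerivAt s ((hasDerivAt_id s).smul_const x)
      exact this.congr_deriv (by simp)
    have h2 := ((hasDerivAt_pow 2 s).inv (pow_ne_zero 2 hs)).mul h1
    refine h2.congr_deriv ?_
    simp only [phase, inner_smul_left, real_inner_comm (g (s • x)) x, Pi.inv_apply]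
    rw [real_inner_comm]
    simp
    field_simp
  obtain ⟨s, hs, h⟩ := exists_hasDerivAt_eq_slope (fun s : ℝ => (s ^ 2)⁻¹ * φ (s • x)) _ ht
    (fun s hs => (hd s (by have := hs.1; linarith)).continuousAt.continuousWithinAt)
    (fun s hs => hd s (by have := hs.1; linarith))
  refine ⟨s, hs, ?_⟩
  have ht' : t - 1 ≠ 0 := by linarith
  rw [eq_div_iff ht'] at h
  simp only [one_pow, inv_one, one_mul, one_smul] at h
  linear_combination -h

lemma mvt_phase (S : Sol n κ φ g Q) {t : ℝ} (ht : 1 < t) (x : EuclideanSpace ℝ (Fin n)) :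
    ∃ s ∈ Set.Ioo 1 t, phase φ g (t • x) - phase φ g x =
      (t - 1) * ⟪(1/2 : ℝ) • (mT (Q (s • x)) (s • x) - g (s • x)), x⟫ := by
  have hd : ∀ s : ℝ, HasDerivAt (fun s : ℝ => phase φ g (s • x))
      ⟪(1/2 : ℝ) • (mT (Q (s • x)) (s • x) - g (s • x)), x⟫ s := by
    intro s
    have := (S.hasFDerivAt_phase (s • x)).comp_hasDerivAt s ((hasDerivAt_id s).smul_const x)
    exact this.congr_deriv (by simp only [innerSL_apply_apply, one_smul])
  obtain ⟨s, hs, h⟩ := exists_hasDerivAt_eq_slope (fun s : ℝ => phase φ g (s • x)) _ ht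
    (fun s hs => (hd s).continuousAt.continuousWithinAt)
    (fun s hs => hd s)
  refine ⟨s, hs, ?_⟩
  have ht' : t - 1 ≠ 0 := by linarith
  rw [h, one_smul]
  field_simp

/-- Estimate at an interior maximum point of the difference of the rescaled solution. -/
lemma at_max (S : Sol n κ φ g Q) {ψ : EuclideanSpace ℝ (Fin n) → ℝ}
    {gψ : EuclideanSpace ℝ (Fin n) → EuclideanSpace ℝ (Fin n)} {P : Matrix (Fin n) (Fin n) ℝ}
    (hψ : ∀ x, HasFDerivAt ψ (innerSL ℝ (gψ x)) x) (hgψ : ∀ x, HasFDerivAt gψ (mT P) x)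
    (hP : P.IsHermitian) {t : ℝ} (ht : 1 < t) {x : EuclideanSpace ℝ (Fin n)}
    (hmax : IsLocalMax (fun x => (t ^ 2)⁻¹ * φ (t • x) - φ x - 2 * (t - 1) * ψ x) x) :
    phase φ g (t • x) - phase φ g x ≤ (t - 1) * (2 * κ * ((Q x)⁻¹ * P).trace) := by
  have ht0 : t ≠ 0 := by linarith
  have hk : ∀ x, HasFDerivAt (fun x => (t ^ 2)⁻¹ * φ (t • x) - φ x - 2 * (t - 1) * ψ x)
      (innerSL ℝ (t⁻¹ • g (t • x) - g x - (2 * (t - 1)) • gψ x)) x := by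
    intro x
    have h1 := (((((S.hφ (t • x)).comp x ((hasFDerivAt_id x).const_smul t)).const_mul
      (t ^ 2)⁻¹).sub (S.hφ x)).sub ((hψ x).const_mul (2 * (t - 1))))
    refine h1.congr_fderiv ?_
    ext v
    simp
    field_simp
  have hgk : HasFDerivAt (fun x => t⁻¹ • g (t • x) - g x - (2 * (t - 1)) • gψ x)
      (mT (Q (t • x) - Q x - (2 * (t - 1)) • P)) x := by
    have h1 := (((((S.hg (t • x)).comp x ((hasFDerivAt_id x).const_smul t)).const_smul
      t⁻¹).sub (S.hg x)).sub ((hgψ x).const_smul (2 * (t - 1))))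
    refine h1.congr_fderiv ?_
    simp only [mT, map_sub, map_smul]
    ext1 v
    simp [smul_smul, ht0]
  have h2 := second_order hk hgk hmax
  have hps : (-(Q (t • x) - Q x - (2 * (t - 1)) • P)).PosSemidef := by
    refine posSemidef_of_mT ?_ ?_
    · have hP' : ((2 * (t - 1)) • P).IsHermitian := by
        rw [Matrix.IsHermitian, Matrix.conjTranspose_smul, hP.eq]; simp
      exact ((((S.hQ (t • x)).1.sub (S.hQ x).1)).sub hP').neg
    · intro v
      have := h2 v
      rw [mT, map_neg]
      rw [_root_.neg_apply, inner_neg_left]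
      linarith
  have h3 := trace_inv_mul_nonneg (S.hQ x) hps
  have h4 := log_det_sub_le (S.hQ x) (S.hQ (t • x))
  have h5 : phase φ g (t • x) - phase φ g x
      = κ * (Real.log (Q (t • x)).det - Real.log (Q x).det) := by
    rw [mul_sub, S.eq, S.eq]; rfl
  rw [h5]
  have h6 : ((Q x)⁻¹ * (Q (t • x) - Q x)).trace ≤ 2 * (t - 1) * ((Q x)⁻¹ * P).trace := by
    have e : -(Q (t • x) - Q x - (2 * (t - 1)) • P) =
        (2 * (t - 1)) • P - (Q (t • x) - Q x) := by abel
    rw [e, mul_sub, Matrix.trace_sub, Matrix.mul_smul, Matrix.trace_smul, smul_eq_mul] at h3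
    linarith
  have := mul_le_mul_of_nonneg_left (h4.trans h6) S.kpos.le
  linarith

end Sol

namespace Sol

variable {n : ℕ} {κ : ℝ} {φ : EuclideanSpace ℝ (Fin n) → ℝ}
    {g : EuclideanSpace ℝ (Fin n) → EuclideanSpace ℝ (Fin n)}
    {Q : EuclideanSpace ℝ (Fin n) → Matrix (Fin n) (Fin n) ℝ}

lemma continuous_trace (S : Sol n κ φ g Q) (P : Matrix (Fin n) (Fin n) ℝ) :
    Continuous fun x => ((Q x)⁻¹ * P).trace := by
  have hinv : Continuous fun x => (Q x)⁻¹ := by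
    have : (fun x => (Q x)⁻¹) = fun x => ((Q x).det)⁻¹ • (Q x).adjugate := by
      funext x; rw [Matrix.inv_def, Ring.inverse_eq_inv']
    rw [this]
    exact (S.hQc.matrix_det.inv₀ fun x => (S.hQ x).det_pos.ne').smul S.hQc.matrix_adjugate
  exact (hinv.matrix_mul continuous_const).matrix_trace

lemma visc_strict (S : Sol n κ φ g Q) {ψ : EuclideanSpace ℝ (Fin n) → ℝ}
    {gψ : EuclideanSpace ℝ (Fin n) → EuclideanSpace ℝ (Fin n)} {P : Matrix (Fin n) (Fin n) ℝ}
    (hψ : ∀ x, HasFDerivAt ψ (innerSL ℝ (gψ x)) x) (hgψ : ∀ x, HasFDerivAt gψ (mT P) x)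
    (hP : P.IsHermitian) {x₀ : EuclideanSpace ℝ (Fin n)} {ρ : ℝ} (hρ : 0 < ρ)
    (hstrict : ∀ x ∈ Metric.closedBall x₀ ρ, x ≠ x₀ →
      phase φ g x - ψ x < phase φ g x₀ - ψ x₀) :
    ⟪(1/2 : ℝ) • (mT (Q x₀) x₀ - g x₀), x₀⟫ ≤ 2 * κ * ((Q x₀)⁻¹ * P).trace := by
  have hψc : Continuous ψ := continuous_iff_continuousAt.2 fun y => (hψ y).continuousAt
  have hφc : Continuous φ := continuous_iff_continuousAt.2 fun y => (S.hφ y).continuousAt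
  have hfc := S.continuous_phase
  let t : ℕ → ℝ := fun k => 1 + 1 / ((k : ℝ) + 1)
  have ht1 : ∀ k, 1 < t k := fun k => by
    have : 0 < 1 / ((k : ℝ) + 1) := by positivity
    simp only [t]; linarith
  have htl : Tendsto t atTop (nhds 1) := by
    have := (tendsto_one_div_add_atTop_nhds_zero_nat (𝕜 := ℝ)).const_add 1
    simpa [t] using this
  have hx : ∀ k, ∃ x ∈ Metric.closedBall x₀ ρ, IsMaxOn
      (fun x => ((t k) ^ 2)⁻¹ * φ (t k • x) - φ x - 2 * (t k - 1) * ψ x)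
      (Metric.closedBall x₀ ρ) x := by
    intro k
    refine (isCompact_closedBall x₀ ρ).exists_isMaxOn ⟨x₀, by simp [hρ.le]⟩ ?_
    fun_prop
  choose x hxm hxmax using hx
  choose s hs hseq using fun k => S.scaling (ht1 k) (x k)
  choose s' hs' hseq' using fun k => S.scaling (ht1 k) x₀
  have squeeze : ∀ s : ℕ → ℝ, (∀ k, s k ∈ Set.Ioo 1 (t k)) → Tendsto s atTop (nhds 1) := by
    intro s hs
    exact tendsto_of_tendsto_of_tendsto_of_le_of_le tendsto_const_nhds htl
      (fun k => (hs k).1.le) (fun k => (hs k).2.le)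
  obtain ⟨xb, hxb, σ, hσ, hlim⟩ := (isCompact_closedBall x₀ ρ).tendsto_subseq hxm
  have hσt := hσ.tendsto_atTop
  have hsσ : Tendsto (fun k => s (σ k)) atTop (nhds 1) := (squeeze s hs).comp hσt
  have hs'σ : Tendsto (fun k => s' (σ k)) atTop (nhds 1) := (squeeze s' hs').comp hσt
  have hlim' : Tendsto (fun k => x (σ k)) atTop (nhds xb) := hlim
  have hc : Continuous fun p : ℝ × EuclideanSpace ℝ (Fin n) => phase φ g (p.1 • p.2) := by fun_prop
  have lim1 : Tendsto (fun k => ((s (σ k)) ^ 3)⁻¹ * phase φ g (s (σ k) • x (σ k)) - ψ (x (σ k)))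
      atTop (nhds (phase φ g xb - ψ xb)) := by
    have h1 := (hc.tendsto (1, xb)).comp (hsσ.prodMk_nhds hlim')
    have h2 := (((hsσ.pow 3).inv₀ (by norm_num)).mul h1).sub ((hψc.tendsto xb).comp hlim')
    simpa using h2
  have lim2 : Tendsto (fun k => ((s' (σ k)) ^ 3)⁻¹ * phase φ g (s' (σ k) • x₀) - ψ x₀)
      atTop (nhds (phase φ g x₀ - ψ x₀)) := by
    have h1 := (hc.tendsto (1, x₀)).comp (hs'σ.prodMk_nhds (tendsto_const_nhds (x := x₀)))
    have h2 := (((hs'σ.pow 3).inv₀ (by norm_num)).mul h1).sub (tendsto_const_nhds (x := ψ x₀))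
    simpa using h2
  have hle : phase φ g x₀ - ψ x₀ ≤ phase φ g xb - ψ xb := by
    refine le_of_tendsto_of_tendsto' lim2 lim1 fun k => ?_
    have h1 := hxmax (σ k) (show x₀ ∈ Metric.closedBall x₀ ρ by simp [hρ.le])
    simp only [Set.mem_ofPred_eq] at h1
    rw [hseq, hseq'] at h1
    have h2 : 0 < 2 * (t (σ k) - 1) := by have := ht1 (σ k); linarith
    refine le_of_mul_le_mul_left ?_ h2
    linarith
  have hxb0 : xb = x₀ := by
    by_contra hne
    exact absurd (hstrict xb hxb hne) (not_lt.2 hle)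
  subst hxb0
  choose r hr hreq using fun k => S.mvt_phase (ht1 k) (x k)
  have hrσ : Tendsto (fun k => r (σ k)) atTop (nhds 1) := (squeeze r hr).comp hσt
  have lim3 : Tendsto (fun k => ⟪(1/2 : ℝ) • (mT (Q (r (σ k) • x (σ k))) (r (σ k) • x (σ k))
      - g (r (σ k) • x (σ k))), x (σ k)⟫) atTop (nhds ⟪(1/2 : ℝ) • (mT (Q xb) xb - g xb), xb⟫) := by
    have hrx : Tendsto (fun k => r (σ k) • x (σ k)) atTop (nhds xb) := by
      simpa using hrσ.smul hlim'
    exact ((S.continuous_gphase.tendsto xb).comp hrx).inner hlim'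
  have lim4 : Tendsto (fun k => 2 * κ * ((Q (x (σ k)))⁻¹ * P).trace) atTop
      (nhds (2 * κ * ((Q xb)⁻¹ * P).trace)) :=
    (((S.continuous_trace P).tendsto xb).comp hlim').const_mul _
  refine le_of_tendsto_of_tendsto lim3 lim4 ?_
  have hev : ∀ᶠ k in atTop, x (σ k) ∈ Metric.ball xb ρ :=
    hlim'.eventually (Metric.ball_mem_nhds xb hρ)
  filter_upwards [hev] with k hk
  have hmax : IsLocalMax (fun x => ((t (σ k)) ^ 2)⁻¹ * φ (t (σ k) • x) - φ x
      - 2 * (t (σ k) - 1) * ψ x) (x (σ k)) :=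
    (hxmax (σ k)).isLocalMax (mem_of_superset (Metric.isOpen_ball.mem_nhds hk)
      Metric.ball_subset_closedBall)
  have h1 := S.at_max hψ hgψ hP (ht1 (σ k)) hmax
  rw [hreq] at h1
  exact le_of_mul_le_mul_left h1 (by have := ht1 (σ k); linarith)

/-- The viscosity inequality for the phase function. -/
lemma visc (S : Sol n κ φ g Q) {ψ : EuclideanSpace ℝ (Fin n) → ℝ}
    {gψ : EuclideanSpace ℝ (Fin n) → EuclideanSpace ℝ (Fin n)} {P : Matrix (Fin n) (Fin n) ℝ}
    (hψ : ∀ x, HasFDerivAt ψ (innerSL ℝ (gψ x)) x) (hgψ : ∀ x, HasFDerivAt gψ (mT P) x)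
    (hP : P.IsHermitian) {x₀ : EuclideanSpace ℝ (Fin n)}
    (hmax : IsLocalMax (fun x => phase φ g x - ψ x) x₀) :
    ⟪gψ x₀, x₀⟫ ≤ 2 * κ * ((Q x₀)⁻¹ * P).trace := by
  have hgr : (1/2 : ℝ) • (mT (Q x₀) x₀ - g x₀) = gψ x₀ := by
    have h1 := hmax.hasFDerivAt_eq_zero ((S.hasFDerivAt_phase x₀).sub (hψ x₀))
    rw [sub_eq_zero] at h1
    exact (innerSL_inj (𝕜 := ℝ)).1 h1
  rw [← hgr]
  obtain ⟨ρ, hρ, hball⟩ := Metric.eventually_nhds_iff_ball.1 hmax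
  have key : ∀ δ : ℝ, 0 < δ → ⟪(1/2 : ℝ) • (mT (Q x₀) x₀ - g x₀), x₀⟫ ≤
      2 * κ * ((Q x₀)⁻¹ * (P + (2 * δ) • (1 : Matrix (Fin n) (Fin n) ℝ))).trace := by
    intro δ hδ
    refine S.visc_strict (ψ := fun x => ψ x + δ * ⟪x - x₀, x - x₀⟫)
      (gψ := fun x => gψ x + (2 * δ) • (x - x₀)) ?_ ?_ ?_ (half_pos hρ) ?_
    · intro x
      have hs := (hasFDerivAt_id (𝕜 := ℝ) x).sub_const x₀
      have h1 := (hψ x).add ((hs.inner ℝ hs).const_mul δ)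
      refine h1.congr_fderiv ?_
      ext v
      simp [fderivInnerCLM_apply, real_inner_comm v]
      rw [inner_sub_right]
      ring
    · intro x
      have h1 := (hgψ x).add (((hasFDerivAt_id x).sub_const x₀).const_smul (2 * δ))
      refine h1.congr_fderiv ?_
      simp only [mT, map_add, map_smul, map_one]
      rfl
    · refine hP.add ?_
      rw [Matrix.IsHermitian, Matrix.conjTranspose_smul]; simp
    · intro x hx hne
      have h1 := hball x (Metric.closedBall_subset_ball (half_lt_self hρ) hx)
      have h2 : 0 < δ * ⟪x - x₀, x - x₀⟫ :=
        mul_pos hδ (real_inner_self_pos.2 (sub_ne_zero.2 hne))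
      simp only [sub_self, inner_zero_left, mul_zero, add_zero]
      linarith
  have hlim : Tendsto (fun δ : ℝ => 2 * κ *
      ((Q x₀)⁻¹ * (P + (2 * δ) • (1 : Matrix (Fin n) (Fin n) ℝ))).trace) (nhdsWithin 0 (Set.Ioi 0))
      (nhds (2 * κ * ((Q x₀)⁻¹ * P).trace)) := by
    have hc : Continuous fun δ : ℝ => 2 * κ *
      ((Q x₀)⁻¹ * (P + (2 * δ) • (1 : Matrix (Fin n) (Fin n) ℝ))).trace := by
      refine continuous_const.mul (Continuous.matrix_trace ?_)
      exact continuous_const.matrix_mul (continuous_const.add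
        ((continuous_const.mul continuous_id).smul continuous_const))
    have := hc.tendsto 0
    simp only [mul_zero, zero_smul, add_zero] at this
    exact this.mono_left nhdsWithin_le_nhds
  refine ge_of_tendsto hlim ?_
  filter_upwards [self_mem_nhdsWithin] with δ hδ
  exact key δ hδ

end Sol

namespace Sol

variable {n : ℕ} {κ : ℝ} {φ : EuclideanSpace ℝ (Fin n) → ℝ}
    {g : EuclideanSpace ℝ (Fin n) → EuclideanSpace ℝ (Fin n)}
    {Q : EuclideanSpace ℝ (Fin n) → Matrix (Fin n) (Fin n) ℝ}

lemma log_det_inv (S : Sol n κ φ g Q) (y : EuclideanSpace ℝ (Fin n)) :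
    Real.log ((Q y)⁻¹).det = -(phase φ g y / κ) := by
  have h : phase φ g y = κ * Real.log (Q y).det := (S.eq y).symm
  rw [h, Matrix.det_nonsing_inv, Ring.inverse_eq_inv', Real.log_inv]
  field_simp [S.kpos.ne']

lemma phase_nonpos (S : Sol n κ φ g Q) (y : EuclideanSpace ℝ (Fin n)) : phase φ g y ≤ 0 := by
  have hR := (S.hQ y).inv
  have h1 := log_det_sub_le hR Matrix.PosDef.one
  have h2 := trace_inv_mul_nonneg hR (S.hQ1 y)
  rw [← neg_sub (Q y)⁻¹, mul_neg, Matrix.trace_neg, S.log_det_inv] at h1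
  simp only [Matrix.det_one, Real.log_one] at h1
  have h3 : phase φ g y / κ ≤ 0 := by linarith
  have h4 := S.kpos
  have h5 : phase φ g y = phase φ g y / κ * κ := by field_simp
  rw [h5]
  exact mul_nonpos_of_nonpos_of_nonneg h3 h4.le

lemma exists_max (S : Sol n κ φ g Q) : ∃ x₁, ∀ x, phase φ g x ≤ phase φ g x₁ := by
  set C : ℝ := n * Real.exp (-(phase φ g 0 / κ)) with hC
  have hfc := S.continuous_phase
  have hC0 : 0 ≤ C := by positivity
  have main : ∀ ε : ℝ, 0 < ε → ∃ xe : EuclideanSpace ℝ (Fin n), ‖xe‖ ^ 2 ≤ 2 * κ * C ∧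
      ∀ x, phase φ g x - ε / 2 * ⟪x, x⟫ ≤ phase φ g xe := by
    intro ε hε
    have hcont : Continuous fun x => phase φ g x - ε / 2 * ⟪x, x⟫ := by fun_prop
    obtain ⟨xe, hxe⟩ := hcont.exists_forall_ge' (0 : EuclideanSpace ℝ (Fin n)) (by
      have h1 : ∀ᶠ x : EuclideanSpace ℝ (Fin n) in cocompact _,
          -(phase φ g 0) * 2 / ε + 1 ≤ ‖x‖ := tendsto_norm_cocompact_atTop.eventually_ge_atTop _
      filter_upwards [h1] with x hx
      have h2 := S.phase_nonpos x
      have h3 := S.phase_nonpos 0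
      have h4 : 0 ≤ -(phase φ g 0) * 2 / ε := div_nonneg (by linarith) hε.le
      have h5 : -(phase φ g 0) * 2 / ε ≤ ‖x‖ ^ 2 := by nlinarith
      have h6 : -(phase φ g 0) * 2 ≤ ‖x‖ ^ 2 * ε := (div_le_iff₀ hε).1 h5
      simp only [inner_zero_left, mul_zero, sub_zero]
      rw [real_inner_self_eq_norm_sq]
      linarith)
    have hv := S.visc (ψ := fun x => ε / 2 * ⟪x, x⟫) (gψ := fun x => ε • x)
      (P := ε • (1 : Matrix (Fin n) (Fin n) ℝ)) (x₀ := xe) (by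
        intro x
        have hs := hasFDerivAt_id (𝕜 := ℝ) x
        refine ((hs.inner ℝ hs).const_mul (ε / 2)).congr_fderiv ?_
        ext v
        simp [fderivInnerCLM_apply, real_inner_comm v]
        ring) (by
        intro x
        refine ((hasFDerivAt_id (𝕜 := ℝ) x).const_smul ε).congr_fderiv ?_
        simp only [mT, map_smul, map_one]
        rfl) (by rw [Matrix.IsHermitian, Matrix.conjTranspose_smul]; simp)
        (Filter.Eventually.of_forall hxe)
    have h0 := hxe 0
    have hnn : 0 ≤ ε / 2 * ⟪xe, xe⟫ := mul_nonneg (by linarith) real_inner_self_nonneg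
    simp only [inner_zero_left, mul_zero, sub_zero] at h0
    have htr : ((Q xe)⁻¹).trace ≤ C := by
      refine trace_le_of_one_le (S.hQ1 xe) ?_
      rw [S.log_det_inv]
      have : phase φ g 0 / κ ≤ phase φ g xe / κ :=
        div_le_div_of_nonneg_right (by linarith) S.kpos.le
      linarith
    refine ⟨xe, ?_, fun x => by have := hxe x; linarith⟩
    rw [inner_smul_left, real_inner_self_eq_norm_sq, Matrix.mul_smul, Matrix.trace_smul,
      mul_one, smul_eq_mul] at hv
    simp only [conj_trivial] at hv
    have hv2 : ε * ‖xe‖ ^ 2 ≤ ε * (2 * κ * ((Q xe)⁻¹).trace) := by linarith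
    have hv3 := le_of_mul_le_mul_left hv2 hε
    have := mul_le_mul_of_nonneg_left htr (by have := S.kpos; positivity : 0 ≤ 2 * κ)
    linarith
  obtain ⟨x₁, -, hx₁⟩ := (isCompact_closedBall (0 : EuclideanSpace ℝ (Fin n))
    (Real.sqrt (2 * κ * C))).exists_isMaxOn ⟨0, by simp⟩ hfc.continuousOn
  refine ⟨x₁, fun x => ?_⟩
  have hall : ∀ ε : ℝ, 0 < ε → phase φ g x - ε / 2 * ⟪x, x⟫ ≤ phase φ g x₁ := by
    intro ε hε
    obtain ⟨xe, h1, h2⟩ := main ε hε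
    refine (h2 x).trans (hx₁ ?_)
    rw [mem_closedBall_zero_iff]
    exact Real.le_sqrt_of_sq_le h1
  have hlim : Tendsto (fun ε : ℝ => phase φ g x - ε / 2 * ⟪x, x⟫) (nhdsWithin 0 (Set.Ioi 0))
      (nhds (phase φ g x)) := by
    have hc : Continuous fun ε : ℝ => phase φ g x - ε / 2 * ⟪x, x⟫ := by fun_prop
    have := hc.tendsto 0
    simp only [zero_div, zero_mul, sub_zero] at this
    exact this.mono_left nhdsWithin_le_nhds
  refine le_of_tendsto hlim ?_
  filter_upwards [self_mem_nhdsWithin] with ε hε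
  exact hall ε hε

end Sol

/-- The Hopf barrier. -/
def hopf {n : ℕ} (α β : ℝ) (e x₁ x : EuclideanSpace ℝ (Fin n)) : ℝ :=
  ⟪x - x₁, e⟫ + α * ⟪x - x₁, e⟫ ^ 2 - β * ⟪x - x₁, x - x₁⟫

lemma hopf_hasFDerivAt {n : ℕ} (α β ε : ℝ) (e x₁ x : EuclideanSpace ℝ (Fin n)) :
    HasFDerivAt (fun x => -(ε * hopf α β e x₁ x))
      (innerSL ℝ ((-ε) • (e + (2 * α * ⟪x - x₁, e⟫) • e - (2 * β) • (x - x₁)))) x := by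
  have hs := (hasFDerivAt_id (𝕜 := ℝ) x).sub_const x₁
  have h1 := hs.inner ℝ (hasFDerivAt_const e x)
  have h2 := (((h1.add ((h1.pow 2).const_mul α)).sub
    ((hs.inner ℝ hs).const_mul β)).const_mul ε).neg
  refine h2.congr_fderiv ?_
  ext v
  simp [fderivInnerCLM_apply, real_inner_comm v, inner_sub_right, inner_add_right,
    inner_smul_right, inner_sub_left]
  left
  ring

lemma hopf_grad_hasFDerivAt {n : ℕ} (α β ε : ℝ) (e x₁ x : EuclideanSpace ℝ (Fin n)) :
    HasFDerivAt (fun x => (-ε) • (e + (2 * α * ⟪x - x₁, e⟫) • e - (2 * β) • (x - x₁)))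
      (mT ((-ε) • ((2 * α) • Matrix.vecMulVec e.ofLp e.ofLp
        - (2 * β) • (1 : Matrix (Fin n) (Fin n) ℝ)))) x := by
  have hs := (hasFDerivAt_id (𝕜 := ℝ) x).sub_const x₁
  have h1 := ((hs.inner ℝ (hasFDerivAt_const e x)).const_mul (2 * α)).smul_const e
  have h2 := ((h1.const_add e).sub (hs.const_smul (2 * β))).const_smul (-ε)
  refine h2.congr_fderiv ?_
  ext1 v
  have hv : mT (Matrix.vecMulVec e.ofLp e.ofLp) v = ⟪v, e⟫ • e := by
    ext i
    rw [Matrix.ofLp_toEuclideanCLM, Matrix.vecMulVec_mulVec]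
    simp [PiLp.inner_apply, dotProduct, mul_comm]
  simp only [mT, map_sub, map_smul, map_one] at hv ⊢
  simp [fderivInnerCLM_apply, hv, smul_smul]

namespace Sol

variable {n : ℕ} {κ : ℝ} {φ : EuclideanSpace ℝ (Fin n) → ℝ}
    {g : EuclideanSpace ℝ (Fin n) → EuclideanSpace ℝ (Fin n)}
    {Q : EuclideanSpace ℝ (Fin n) → Matrix (Fin n) (Fin n) ℝ}

set_option maxHeartbeats 1600000 in
/-- Strong maximum principle: the phase function is constant. -/
lemma phase_const (S : Sol n κ φ g Q) : ∃ c, ∀ x, phase φ g x = c := by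
  obtain ⟨xm, hxm⟩ := S.exists_max
  set M := phase φ g xm with hM
  refine ⟨M, fun y₀ => ?_⟩
  by_contra hne
  have hfc := S.continuous_phase
  have hclosed : IsClosed {x | phase φ g x = M} := isClosed_eq hfc continuous_const
  obtain ⟨x₁, hx₁, hdist⟩ := hclosed.exists_infDist_eq_dist ⟨xm, rfl⟩ y₀
  have hx₁' : phase φ g x₁ = M := hx₁
  set d := dist y₀ x₁ with hd
  have hdpos : 0 < d := by
    rw [hd, dist_pos]; rintro rfl; exact hne hx₁'
  have hlt : ∀ x, dist y₀ x < d → phase φ g x < M := by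
    intro x hx
    refine lt_of_le_of_ne (hxm x) fun h => ?_
    have : Metric.infDist y₀ {x | phase φ g x = M} ≤ dist y₀ x := Metric.infDist_le_dist_of_mem h
    linarith
  set e : EuclideanSpace ℝ (Fin n) := d⁻¹ • (y₀ - x₁) with he
  have henorm : ‖e‖ = 1 := by
    rw [he, norm_smul, ← dist_eq_norm, ← hd, norm_inv, Real.norm_eq_abs, abs_of_pos hdpos]
    field_simp
  have hyx : y₀ - x₁ = d • e := by rw [he, smul_smul, mul_inv_cancel₀ hdpos.ne', one_smul]
  clear_value e
  set β := 2 / d with hβ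
  have hβpos : 0 < β := by positivity
  obtain ⟨xc, -, hxc⟩ := (isCompact_closedBall x₁ 1).exists_isMaxOn ⟨x₁, by simp⟩
    (S.continuous_trace 1).continuousOn
  set C := ((Q xc)⁻¹ * 1).trace with hC
  have hCb : ∀ x ∈ Metric.closedBall x₁ 1, ((Q x)⁻¹).trace ≤ C := by
    intro x hx
    have := hxc hx
    simp only [mul_one, Set.mem_ofPred_eq] at this
    rw [hC, mul_one]; exact this
  have hC0 : 0 ≤ C := by
    rw [hC, mul_one]; exact (S.hQ xc).inv.posSemidef.trace_nonneg
  have hκ := S.kpos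
  set D := (3 + 2 * β) * (‖x₁‖ + 1) with hD
  have hD0 : 0 ≤ D := by positivity
  set α := 1 + β * C + D / (4 * κ) with hα
  have hα1 : 1 ≤ α := by
    have : 0 ≤ β * C := by positivity
    have : 0 ≤ D / (4 * κ) := by positivity
    linarith
  set ρ := 1 / (2 * α) with hρ
  have hρpos : 0 < ρ := by positivity
  have hαρ : α * ρ = 1 / 2 := by rw [hρ]; field_simp
  have hρ1 : ρ ≤ 1 / 2 := by nlinarith
  have hs : ∀ x ∈ Metric.closedBall x₁ ρ, |⟪x - x₁, e⟫| ≤ ρ := by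
    intro x hx
    have h1 := abs_real_inner_le_norm (x - x₁) e
    rw [henorm, mul_one] at h1
    rw [Metric.mem_closedBall, dist_eq_norm] at hx
    linarith
  have hhle : ∀ x ∈ Metric.closedBall x₁ ρ, hopf α β e x₁ x ≤ 1 := by
    intro x hx
    have h1 := abs_le.1 (hs x hx)
    have h2 : 0 ≤ β * ⟪x - x₁, x - x₁⟫ := mul_nonneg hβpos.le real_inner_self_nonneg
    unfold hopf
    have h3 : ⟪x - x₁, e⟫ ^ 2 ≤ ρ ^ 2 := sq_le_sq' h1.1 h1.2
    have h4 : α * ⟪x - x₁, e⟫ ^ 2 ≤ α * ρ ^ 2 := mul_le_mul_of_nonneg_left h3 (by linarith)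
    nlinarith
  -- points with nonnegative barrier lie in the ball around `y₀`
  have hin : ∀ x ∈ Metric.closedBall x₁ ρ, x ≠ x₁ → 0 ≤ hopf α β e x₁ x → phase φ g x < M := by
    intro x hx hxne hh
    refine hlt x ?_
    have h1 := abs_le.1 (hs x hx)
    set s := ⟪x - x₁, e⟫ with hsdef
    have hz : 0 < ⟪x - x₁, x - x₁⟫ := real_inner_self_pos.2 (sub_ne_zero.2 hxne)
    unfold hopf at hh
    rw [← hsdef] at hh
    have hαs : -(1/2) ≤ α * s ∧ α * s ≤ 1/2 := by constructor <;> nlinarith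
    have hfac : β * ⟪x - x₁, x - x₁⟫ ≤ s * (1 + α * s) := by linarith
    have hspos : 0 < s := by
      by_contra hneg
      have h3 : s * (1 + α * s) ≤ 0 := mul_nonpos_of_nonpos_of_nonneg (by linarith) (by linarith)
      have h4 := mul_pos hβpos hz
      linarith
    have h5 : β * ⟪x - x₁, x - x₁⟫ ≤ 2 * s := by nlinarith
    have h6 : ⟪x - x₁, x - x₁⟫ ≤ d * s := by
      have : β * ⟪x - x₁, x - x₁⟫ * d = 2 * ⟪x - x₁, x - x₁⟫ := by rw [hβ]; field_simp
      nlinarith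
    have h7 : dist y₀ x ^ 2 < d ^ 2 := by
      have : y₀ - x = d • e - (x - x₁) := by rw [← hyx]; abel
      rw [dist_eq_norm, this, norm_sub_sq_real, norm_smul, henorm, inner_smul_left,
        real_inner_comm, ← hsdef, ← real_inner_self_eq_norm_sq (x - x₁)]
      simp only [Real.norm_eq_abs, mul_one, sq_abs, conj_trivial]
      have := mul_pos hdpos hspos
      linarith
    exact lt_of_pow_lt_pow_left₀ 2 hdpos.le h7
  have hhc : Continuous (hopf α β e x₁) := by unfold hopf; fun_prop
  -- choice of ε
  obtain ⟨ε, hε, hεs⟩ : ∃ ε : ℝ, 0 < ε ∧ ∀ x ∈ Metric.sphere x₁ ρ,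
      phase φ g x + ε * hopf α β e x₁ x < M := by
    have hKc : IsCompact (Metric.sphere x₁ ρ ∩ {x | 0 ≤ hopf α β e x₁ x}) :=
      (isCompact_sphere x₁ ρ).inter_right (isClosed_le continuous_const hhc)
    have hne' : ∀ x ∈ Metric.sphere x₁ ρ, x ≠ x₁ := by
      rintro x hx rfl
      simp at hx
      linarith
    obtain ⟨m, hm, hmle⟩ : ∃ m < M, ∀ x ∈ Metric.sphere x₁ ρ ∩ {x | 0 ≤ hopf α β e x₁ x},
        phase φ g x ≤ m := by
      rcases Set.eq_empty_or_nonempty (Metric.sphere x₁ ρ ∩ {x | 0 ≤ hopf α β e x₁ x}) with h | h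
      · exact ⟨M - 1, by linarith, by simp [h]⟩
      · obtain ⟨x, hx, hxmax⟩ := hKc.exists_isMaxOn h hfc.continuousOn
        exact ⟨phase φ g x, hin x (Metric.sphere_subset_closedBall hx.1) (hne' x hx.1) hx.2,
          fun y hy => hxmax hy⟩
    refine ⟨(M - m) / 2, by linarith, fun x hx => ?_⟩
    by_cases hh : 0 ≤ hopf α β e x₁ x
    · have h1 := hmle x ⟨hx, hh⟩
      have h2 := hhle x (Metric.sphere_subset_closedBall hx)
      have h3 : (M - m) / 2 * hopf α β e x₁ x ≤ (M - m) / 2 * 1 :=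
        mul_le_mul_of_nonneg_left h2 (by linarith)
      linarith
    · have h1 := hxm x
      have h2 : (M - m) / 2 * hopf α β e x₁ x < 0 :=
        mul_neg_of_pos_of_neg (by linarith) (not_le.1 hh)
      linarith
  obtain ⟨x₂, hx₂, hx₂max⟩ := (isCompact_closedBall x₁ ρ).exists_isMaxOn ⟨x₁, by simp [hρpos.le]⟩
    (f := fun x => phase φ g x - -(ε * hopf α β e x₁ x)) (by fun_prop)
  have hx₂ball : x₂ ∈ Metric.ball x₁ ρ := by
    rcases lt_or_eq_of_le (Metric.mem_closedBall.1 hx₂) with h | h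
    · exact h
    · exfalso
      have h1 := hεs x₂ h
      have h2 := hx₂max (show x₁ ∈ Metric.closedBall x₁ ρ by simp [hρpos.le])
      simp only [Set.mem_ofPred_eq] at h2
      have h3 : hopf α β e x₁ x₁ = 0 := by simp [hopf]
      rw [h3, hx₁'] at h2
      linarith
  have hloc : IsLocalMax (fun x => phase φ g x - -(ε * hopf α β e x₁ x)) x₂ :=
    hx₂max.isLocalMax (mem_of_superset (Metric.isOpen_ball.mem_nhds hx₂ball)
      Metric.ball_subset_closedBall)
  have hv := S.visc (hopf_hasFDerivAt α β ε e x₁) (hopf_grad_hasFDerivAt α β ε e x₁) (by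
    rw [Matrix.IsHermitian, Matrix.conjTranspose_smul, Matrix.conjTranspose_sub,
      Matrix.conjTranspose_smul, Matrix.conjTranspose_smul, Matrix.conjTranspose_vecMulVec]
    simp) hloc
  have htr : ((Q x₂)⁻¹ * Matrix.vecMulVec e.ofLp e.ofLp).trace
      = e.ofLp ⬝ᵥ ((Q x₂)⁻¹ *ᵥ e.ofLp) := by
    rw [Matrix.mul_vecMulVec, Matrix.trace_vecMulVec, dotProduct_comm]
  have hge : 1 ≤ e.ofLp ⬝ᵥ ((Q x₂)⁻¹ *ᵥ e.ofLp) := by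
    have h1 := (S.hQ1 x₂).dotProduct_mulVec_nonneg (x := e.ofLp)
    have h2 : e.ofLp ⬝ᵥ e.ofLp = 1 := by
      have h3 : ⟪e, e⟫ = 1 := by rw [real_inner_self_eq_norm_sq, henorm]; norm_num
      rw [PiLp.inner_apply] at h3
      simp only [RCLike.inner_apply, conj_trivial] at h3
      exact h3
    simp only [star_trivial, Matrix.sub_mulVec, Matrix.one_mulVec, dotProduct_sub, h2] at h1
    linarith
  rw [Matrix.mul_smul, Matrix.trace_smul, mul_sub, Matrix.trace_sub, Matrix.mul_smul,
    Matrix.mul_smul, Matrix.trace_smul, Matrix.trace_smul, htr, mul_one, inner_smul_left] at hv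
  simp only [smul_eq_mul, conj_trivial] at hv
  have hx₂1 : x₂ ∈ Metric.closedBall x₁ 1 :=
    Metric.closedBall_subset_closedBall (by linarith) hx₂
  have hT := hCb x₂ hx₂1
  have hup : ⟪e + (2 * α * ⟪x₂ - x₁, e⟫) • e - (2 * β) • (x₂ - x₁), x₂⟫ ≤ D := by
    refine (real_inner_le_norm _ _).trans ?_
    have hn1 : ‖x₂ - x₁‖ ≤ 1 := by rw [← dist_eq_norm]; exact hx₂1
    have hn2 : ‖x₂‖ ≤ ‖x₁‖ + 1 := by
      have := norm_le_norm_add_norm_sub' x₂ x₁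
      linarith
    have hn3 : ‖e + (2 * α * ⟪x₂ - x₁, e⟫) • e - (2 * β) • (x₂ - x₁)‖ ≤ 3 + 2 * β := by
      refine (norm_sub_le _ _).trans ?_
      have k1 := norm_add_le e ((2 * α * ⟪x₂ - x₁, e⟫) • e)
      rw [norm_smul, henorm, Real.norm_eq_abs, abs_mul,
        abs_of_pos (by linarith : 0 < 2 * α), mul_one] at k1
      rw [norm_smul, Real.norm_eq_abs, abs_of_pos (by linarith : 0 < 2 * β)]
      have k2 := hs x₂ hx₂
      have k3 : 2 * α * |⟪x₂ - x₁, e⟫| ≤ 2 * α * ρ := mul_le_mul_of_nonneg_left k2 (by linarith)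
      have k4 : 2 * β * ‖x₂ - x₁‖ ≤ 2 * β * 1 := mul_le_mul_of_nonneg_left hn1 (by linarith)
      linarith
    exact mul_le_mul hn3 hn2 (norm_nonneg _) (by linarith)
  have hv2 : 2 * κ * (2 * α * (e.ofLp ⬝ᵥ ((Q x₂)⁻¹ *ᵥ e.ofLp)) - 2 * β * ((Q x₂)⁻¹).trace) ≤
      ⟪e + (2 * α * ⟪x₂ - x₁, e⟫) • e - (2 * β) • (x₂ - x₁), x₂⟫ := by
    refine le_of_mul_le_mul_left ?_ hε
    linarith
  have h8 : 2 * α - 2 * β * C ≤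
      2 * α * (e.ofLp ⬝ᵥ ((Q x₂)⁻¹ *ᵥ e.ofLp)) - 2 * β * ((Q x₂)⁻¹).trace := by
    have := mul_le_mul_of_nonneg_left hge (by linarith : 0 ≤ 2 * α)
    have := mul_le_mul_of_nonneg_left hT (by linarith : 0 ≤ 2 * β)
    linarith
  have h9 := mul_le_mul_of_nonneg_left h8 (by linarith : 0 ≤ 2 * κ)
  have h10 : 2 * κ * (2 * α - 2 * β * C) = 4 * κ + D := by
    rw [hα]; field_simp; ring
  linarith

end Sol

namespace Sol

variable {n : ℕ} {κ : ℝ} {φ : EuclideanSpace ℝ (Fin n) → ℝ}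
    {g : EuclideanSpace ℝ (Fin n) → EuclideanSpace ℝ (Fin n)}
    {Q : EuclideanSpace ℝ (Fin n) → Matrix (Fin n) (Fin n) ℝ}

lemma mT_eq (S : Sol n κ φ g Q) (y : EuclideanSpace ℝ (Fin n)) : mT (Q y) y = g y := by
  obtain ⟨c, hc⟩ := S.phase_const
  have h1 := S.hasFDerivAt_phase y
  have h2 : phase φ g = fun _ => c := funext hc
  rw [h2] at h1
  have h3 := h1.unique (hasFDerivAt_const c y)
  have h4 : innerSL ℝ ((1/2 : ℝ) • (mT (Q y) y - g y)) = innerSL ℝ 0 := by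
    rw [h3, map_zero]
  rw [innerSL_inj] at h4
  have h5 := (smul_eq_zero.1 h4).resolve_left (by norm_num)
  exact sub_eq_zero.1 h5

lemma linear (S : Sol n κ φ g Q) (y : EuclideanSpace ℝ (Fin n)) : g y = mT (Q 0) y := by
  have h0 : g 0 = 0 := by rw [← S.mT_eq 0, map_zero]
  have hd : ∀ t : ℝ, HasDerivAt (fun t : ℝ => g (t • y)) (mT (Q (t • y)) y) t := by
    intro t
    have h1 : HasDerivAt (fun t : ℝ => t • y) y t := by
      simpa using (hasDerivAt_id t).smul_const y
    exact (S.hg (t • y)).comp_hasDerivAt t h1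
  have hd2 : ∀ t : ℝ, 0 < t → HasDerivAt (fun t : ℝ => t⁻¹ • g (t • y)) 0 t := by
    intro t ht
    have h1 := (hasDerivAt_inv ht.ne').smul (hd t)
    refine h1.congr_deriv ?_
    have h2 := S.mT_eq (t • y)
    rw [map_smul] at h2
    rw [← h2, smul_smul, ← add_smul]
    have : t⁻¹ + -(t ^ 2)⁻¹ * t = 0 := by field_simp; ring
    rw [this, zero_smul]
  have hconst : ∀ t : ℝ, 0 < t → t⁻¹ • g (t • y) = g y := by
    intro t ht
    have := (isOpen_Ioi (a := (0:ℝ))).is_const_of_deriv_eq_zero (isPreconnected_Ioi)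
      (f := fun t : ℝ => t⁻¹ • g (t • y))
      (fun s hs => (hd2 s hs).differentiableAt.differentiableWithinAt)
      (fun s hs => (hd2 s hs).deriv) (x := t) (y := 1) ht (by simp)
    simpa using this
  have hlim := (hd 0).tendsto_slope_zero_right
  have hlim2 : Tendsto (fun _ : ℝ => g y) (nhdsWithin 0 (Set.Ioi 0)) (nhds (mT (Q 0) y)) := by
    refine (Tendsto.congr' ?_ (by simpa using hlim))
    filter_upwards [self_mem_nhdsWithin] with t ht
    simpa [h0] using hconst t ht
  exact tendsto_nhds_unique tendsto_const_nhds hlim2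

end Sol

/-- The rotated problem on `Ω`: `w` is locally strictly convex, with gradient `gw`, Hessian `N`,
and the graph does not escape at finite height. -/
structure Dat (n : ℕ) (Ω : Set (EuclideanSpace ℝ (Fin n)))
    (w : EuclideanSpace ℝ (Fin n) → ℝ)
    (gw : EuclideanSpace ℝ (Fin n) → EuclideanSpace ℝ (Fin n))
    (N : EuclideanSpace ℝ (Fin n) → Matrix (Fin n) (Fin n) ℝ) : Prop where
  ho : IsOpen Ω
  hc : IsConnected Ω
  hw : ∀ x ∈ Ω, HasFDerivAt w (innerSL ℝ (gw x)) x
  hgw : ∀ x ∈ Ω, HasFDerivAt gw (mT (N x)) x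
  hNc : ContinuousOn N Ω
  hN : ∀ x ∈ Ω, (N x).PosDef
  esc : ∀ (z : ℕ → EuclideanSpace ℝ (Fin n)) (p : EuclideanSpace ℝ (Fin n)) (C : ℝ),
    (∀ k, z k ∈ Ω) → Tendsto z atTop (nhds p) → (∀ k, ‖gw (z k)‖ ≤ C) → (∀ k, |w (z k)| ≤ C) →
    p ∈ Ω

lemma mT_mul {n : ℕ} (A B : Matrix (Fin n) (Fin n) ℝ) (v : EuclideanSpace ℝ (Fin n)) :
    mT (A * B) v = mT A (mT B v) := by
  simp [mT]

lemma continuous_mT' {n : ℕ} : Continuous (fun M : Matrix (Fin n) (Fin n) ℝ => mT M) :=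
  (Matrix.toEuclideanCLM (n := Fin n) (𝕜 := ℝ)).toAlgEquiv.toLinearMap.continuous_of_finiteDimensional

/-- An invertible matrix as a continuous linear equivalence. -/
def mTe {n : ℕ} (A : Matrix (Fin n) (Fin n) ℝ) (h : IsUnit A.det) :
    EuclideanSpace ℝ (Fin n) ≃L[ℝ] EuclideanSpace ℝ (Fin n) :=
  ContinuousLinearEquiv.equivOfInverse (mT A) (mT A⁻¹)
    (fun v => by rw [← mT_mul, Matrix.nonsing_inv_mul _ h]; simp [mT])
    (fun v => by rw [← mT_mul, Matrix.mul_nonsing_inv _ h]; simp [mT])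

namespace Dat

variable {n : ℕ} {Ω : Set (EuclideanSpace ℝ (Fin n))}
    {w : EuclideanSpace ℝ (Fin n) → ℝ}
    {gw : EuclideanSpace ℝ (Fin n) → EuclideanSpace ℝ (Fin n)}
    {N : EuclideanSpace ℝ (Fin n) → Matrix (Fin n) (Fin n) ℝ}

lemma posDef_one_add (S : Dat n Ω w gw N) {x} (hx : x ∈ Ω) : (1 + N x).PosDef :=
  Matrix.PosDef.one.add (S.hN x hx)

lemma isUnit_det (S : Dat n Ω w gw N) {x} (hx : x ∈ Ω) : IsUnit (1 + N x).det :=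
  (S.posDef_one_add hx).det_pos.ne'.isUnit

lemma strict (S : Dat n Ω w gw N) {x} (hx : x ∈ Ω) :
    HasStrictFDerivAt (fun x => x + gw x)
      (mTe (1 + N x) (S.isUnit_det hx) : EuclideanSpace ℝ (Fin n) →L[ℝ] EuclideanSpace ℝ (Fin n))
      x := by
  have h1 : ∀ᶠ y in nhds x, HasFDerivAt (fun x => x + gw x) (mT (1 + N y)) y := by
    filter_upwards [S.ho.mem_nhds hx] with y hy
    refine ((hasFDerivAt_id (𝕜 := ℝ) y).add (S.hgw y hy)).congr_fderiv ?_
    simp only [mT, map_add, map_one]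
    rfl
  have h2 : ContinuousAt (fun y => mT (1 + N y)) x := by
    have h3 : ContinuousAt (fun y => 1 + N y) x :=
      continuousAt_const.add (S.hNc.continuousAt (S.ho.mem_nhds hx))
    exact ContinuousAt.comp (f := fun y => 1 + N y) continuous_mT'.continuousAt h3
  exact hasStrictFDerivAt_of_hasFDerivAt_of_continuousAt h1 h2

lemma contract (S : Dat n Ω w gw N) {x} (hx : x ∈ Ω) (v : EuclideanSpace ℝ (Fin n)) :
    ‖(mTe (1 + N x) (S.isUnit_det hx)).symm v‖ ≤ ‖v‖ := by
  set z := (mTe (1 + N x) (S.isUnit_det hx)).symm v with hz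
  have h1 : mT (1 + N x) z = v := (mTe (1 + N x) (S.isUnit_det hx)).apply_symm_apply v
  have h2 : 0 ≤ ⟪z, mT (N x) z⟫ := by
    rw [Matrix.inner_toEuclideanCLM]
    simpa using (S.hN x hx).posSemidef.dotProduct_mulVec_nonneg (x := z.ofLp)
  have h3 : ‖z‖ ^ 2 ≤ ‖z‖ * ‖v‖ := by
    have h4 := real_inner_le_norm z v
    rw [← h1] at h4
    have h5 : mT (1 + N x) z = z + mT (N x) z := by simp [mT]
    rw [← h1]
    rw [h5, inner_add_right, real_inner_self_eq_norm_sq] at h4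
    rw [h5]
    linarith
  by_cases h : ‖z‖ = 0
  · rw [h]; exact norm_nonneg v
  · have : 0 < ‖z‖ := lt_of_le_of_ne (norm_nonneg z) (Ne.symm h)
    nlinarith

/-- `γ` lifts the segment `y₀ + t v`, `t ∈ [0, T]`, starting from `x₀`. -/
structure Lift (Ω : Set (EuclideanSpace ℝ (Fin n)))
    (gw : EuclideanSpace ℝ (Fin n) → EuclideanSpace ℝ (Fin n))
    (x₀ v : EuclideanSpace ℝ (Fin n)) (T : ℝ) (γ : ℝ → EuclideanSpace ℝ (Fin n)) : Prop where
  cont : ContinuousOn γ (Set.Icc 0 T)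
  zero : γ 0 = x₀
  mem : ∀ t ∈ Set.Icc 0 T, γ t ∈ Ω
  eq : ∀ t ∈ Set.Icc 0 T, γ t + gw (γ t) = x₀ + gw x₀ + t • v

lemma lift_deriv (S : Dat n Ω w gw N) {x₀ v : EuclideanSpace ℝ (Fin n)} {T : ℝ}
    {γ : ℝ → EuclideanSpace ℝ (Fin n)} (L : Lift Ω gw x₀ v T γ) {t : ℝ} (ht : t ∈ Set.Icc 0 T) :
    HasDerivWithinAt γ ((mTe (1 + N (γ t)) (S.isUnit_det (L.mem t ht))).symm v) (Set.Icc 0 T) t := by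
  have hs := S.strict (L.mem t ht)
  have h1 := hs.to_localInverse.hasFDerivAt
  have h2 := hs.eventually_left_inverse
  have h3 : HasDerivAt (fun s : ℝ => x₀ + gw x₀ + s • v) v t := by
    simpa using ((hasDerivAt_id t).smul_const v).const_add (x₀ + gw x₀)
  rw [L.eq t ht] at h1
  have h4 := (h1.comp_hasDerivAt t h3).hasDerivWithinAt (s := Set.Icc 0 T)
  refine h4.congr_of_eventuallyEq ?_ ?_
  · have h5 := (L.cont t ht).eventually h2
    filter_upwards [h5, self_mem_nhdsWithin] with s hs1 hs2
    rw [Function.comp_apply, ← L.eq s hs2, hs1]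
  · rw [Function.comp_apply, ← L.eq t ht, h2.self_of_nhds]

lemma lift_bound (S : Dat n Ω w gw N) (x₀ v : EuclideanSpace ℝ (Fin n)) :
    ∃ C, ∀ T ≤ 1, ∀ γ, Lift Ω gw x₀ v T γ → ∀ t ∈ Set.Icc 0 T,
      ‖γ t‖ ≤ C ∧ ‖gw (γ t)‖ ≤ C ∧ |w (γ t)| ≤ C := by
  set C1 := ‖x₀‖ + ‖v‖ with hC1
  set C2 := ‖x₀ + gw x₀‖ + ‖v‖ + C1 with hC2
  refine ⟨C1 + C2 + (|w x₀| + C2 * ‖v‖), fun T hT γ L t ht => ?_⟩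
  have p0 := norm_nonneg v
  have p1 := norm_nonneg x₀
  have p2 := norm_nonneg (x₀ + gw x₀)
  have hC20 : 0 ≤ C2 := by positivity
  have p3 : 0 ≤ C2 * ‖v‖ := by positivity
  have p4 := abs_nonneg (w x₀)
  have b1 : ∀ t ∈ Set.Icc 0 T, ‖γ t‖ ≤ C1 := by
    intro t ht
    have h1 := norm_image_sub_le_of_norm_deriv_le_segment' (fun s hs => S.lift_deriv L hs)
      (C := ‖v‖) (fun s hs => S.contract (L.mem s (Set.Ico_subset_Icc_self hs)) v) t ht
    rw [L.zero] at h1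
    have h2 := norm_le_norm_add_norm_sub' (γ t) x₀
    have h3 : ‖v‖ * (t - 0) ≤ ‖v‖ * 1 := mul_le_mul_of_nonneg_left (by linarith [ht.2]) p0
    linarith
  have b2 : ∀ t ∈ Set.Icc 0 T, ‖gw (γ t)‖ ≤ C2 := by
    intro t ht
    have h1 : gw (γ t) = x₀ + gw x₀ + t • v - γ t := by rw [← L.eq t ht]; abel
    have h2 := norm_sub_le (x₀ + gw x₀ + t • v) (γ t)
    have h3 := norm_add_le (x₀ + gw x₀) (t • v)
    rw [norm_smul, Real.norm_eq_abs, abs_of_nonneg ht.1] at h3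
    have h4 : t * ‖v‖ ≤ 1 * ‖v‖ := mul_le_mul_of_nonneg_right (by linarith [ht.2]) p0
    rw [h1]
    linarith [b1 t ht]
  have b3 : |w (γ t)| ≤ |w x₀| + C2 * ‖v‖ := by
    have h1 := norm_image_sub_le_of_norm_deriv_le_segment' (f := fun s => w (γ s))
      (f' := fun s => if hs : s ∈ Set.Icc 0 T then
        ⟪gw (γ s), (mTe (1 + N (γ s)) (S.isUnit_det (L.mem s hs))).symm v⟫ else 0) (a := 0) (b := T)
      (C := C2 * ‖v‖) (fun s hs => by
        rw [dif_pos hs]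
        exact (S.hw _ (L.mem s hs)).comp_hasDerivWithinAt s (S.lift_deriv L hs)) (fun s hs => by
        have hs' := Set.Ico_subset_Icc_self hs
        rw [dif_pos hs']
        exact (norm_inner_le_norm _ _).trans (mul_le_mul (b2 s hs') (S.contract (L.mem s hs') v)
          (norm_nonneg _) hC20)) t ht
    rw [L.zero, Real.norm_eq_abs] at h1
    have h2 : |w (γ t)| - |w x₀| ≤ |w (γ t) - w x₀| := abs_sub_abs_le_abs_sub _ _
    have h3 : C2 * ‖v‖ * (t - 0) ≤ C2 * ‖v‖ * 1 := mul_le_mul_of_nonneg_left (by linarith [ht.2]) p3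
    linarith
  refine ⟨?_, ?_, ?_⟩
  · linarith [b1 t ht]
  · linarith [b2 t ht]
  · linarith

lemma exists_lift (S : Dat n Ω w gw N) {x₀ : EuclideanSpace ℝ (Fin n)} (hx₀ : x₀ ∈ Ω)
    (v : EuclideanSpace ℝ (Fin n)) : ∃ γ, Lift Ω gw x₀ v 1 γ := by
  obtain ⟨C, hC⟩ := S.lift_bound x₀ v
  set A : Set ℝ := {T | 0 ≤ T ∧ T ≤ 1 ∧ ∃ γ, Lift Ω gw x₀ v T γ} with hA
  have h0 : (0:ℝ) ∈ A := by
    refine ⟨le_rfl, zero_le_one, fun _ => x₀, continuousOn_const, rfl, fun _ _ => hx₀, ?_⟩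
    intro t ht
    have : t = 0 := le_antisymm ht.2 ht.1
    simp [this]
  have hbdd : BddAbove A := ⟨1, fun T hT => hT.2.1⟩
  set T₁ := sSup A with hT₁
  have hT₁0 : 0 ≤ T₁ := le_csSup hbdd h0
  have hT₁1 : T₁ ≤ 1 := csSup_le ⟨0, h0⟩ fun T hT => hT.2.1
  obtain ⟨T, -, hTlim, hTA⟩ := exists_seq_tendsto_sSup ⟨0, h0⟩ hbdd
  choose hTn hTl γ hγ using hTA
  have hTmem : ∀ k, T k ∈ Set.Icc 0 (T k) := fun k => ⟨hTn k, le_rfl⟩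
  obtain ⟨p, -, σ, hσ, hp⟩ := (isCompact_closedBall (0 : EuclideanSpace ℝ (Fin n)) C).tendsto_subseq
    (x := fun k => γ k (T k)) (fun k => by
      simpa using (hC _ (hTl k) _ (hγ k) _ (hTmem k)).1)
  have hpΩ : p ∈ Ω := S.esc _ p C (fun k => (hγ (σ k)).mem _ (hTmem _)) hp
    (fun k => (hC _ (hTl _) _ (hγ (σ k)) _ (hTmem _)).2.1)
    (fun k => (hC _ (hTl _) _ (hγ (σ k)) _ (hTmem _)).2.2)
  have hs := S.strict hpΩ
  set e : OpenPartialHomeomorph (EuclideanSpace ℝ (Fin n)) (EuclideanSpace ℝ (Fin n)) :=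
    hs.toOpenPartialHomeomorph (fun x => x + gw x) with he
  have hecoe : ∀ x, e x = x + gw x := fun x => rfl
  have hpe : p ∈ e.source := hs.mem_toOpenPartialHomeomorph_source
  have hTσ : Tendsto (fun k => T (σ k)) atTop (nhds T₁) := hTlim.comp hσ.tendsto_atTop
  have hFp : e p = x₀ + gw x₀ + T₁ • v := by
    have h1 : Tendsto (fun k => e (γ (σ k) (T (σ k)))) atTop (nhds (e p)) :=
      (hs.hasFDerivAt.continuousAt.tendsto).comp hp
    have h2 : Tendsto (fun k => x₀ + gw x₀ + T (σ k) • v) atTop (nhds (x₀ + gw x₀ + T₁ • v)) :=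
      tendsto_const_nhds.add (hTσ.smul_const v)
    refine tendsto_nhds_unique (h1.congr fun k => ?_) h2
    rw [hecoe, (hγ (σ k)).eq _ (hTmem _)]
  -- target neighbourhood
  have hline : Continuous fun t : ℝ => x₀ + gw x₀ + t • v := by fun_prop
  have hO : IsOpen (e.target ∩ e.symm ⁻¹' Ω) := e.symm.isOpen_inter_preimage S.ho
  have hTin : T₁ ∈ (fun t : ℝ => x₀ + gw x₀ + t • v) ⁻¹' (e.target ∩ e.symm ⁻¹' Ω) := by
    change x₀ + gw x₀ + T₁ • v ∈ e.target ∩ e.symm ⁻¹' Ω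
    rw [← hFp]
    exact ⟨e.map_source hpe, by rw [Set.mem_preimage, e.left_inv hpe]; exact hpΩ⟩
  obtain ⟨δ, hδ, hball⟩ := Metric.isOpen_iff.1 (hO.preimage hline) T₁ hTin
  have ev1 : ∀ᶠ k in atTop, γ (σ k) (T (σ k)) ∈ e.source := hp (e.open_source.mem_nhds hpe)
  have ev2 : ∀ᶠ k in atTop, T (σ k) ∈ Metric.ball T₁ δ := hTσ (Metric.ball_mem_nhds _ hδ)
  obtain ⟨k, hk1, hk2⟩ := (ev1.and ev2).exists
  set k' := σ k
  have hTk : T k' ≤ T₁ := le_csSup hbdd ⟨hTn k', hTl k', γ k', hγ k'⟩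
  set T₂ := min 1 (T₁ + δ / 2) with hT₂
  have hT₁₂ : T₁ ≤ T₂ := le_min hT₁1 (by linarith)
  have hT₂A : T₂ ∈ A := by
    have hball' : ∀ t ∈ Set.Icc (T k') T₂,
        x₀ + gw x₀ + t • v ∈ e.target ∩ e.symm ⁻¹' Ω := by
      intro t ht
      refine hball ?_
      rw [Metric.mem_ball, Real.dist_eq, abs_lt] at hk2 ⊢
      have := ht.1
      have := ht.2.trans (min_le_right _ _)
      constructor <;> linarith
    have hval : e.symm (x₀ + gw x₀ + T k' • v) = γ k' (T k') := by
      rw [← (hγ k').eq _ (hTmem _), ← hecoe, e.left_inv hk1]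
    refine ⟨by linarith, min_le_left _ _,
      fun t => if t ≤ T k' then γ k' t else e.symm (x₀ + gw x₀ + t • v), ?_, ?_, ?_, ?_⟩
    · have hu : Set.Icc 0 T₂ = Set.Icc 0 (T k') ∪ Set.Icc (T k') T₂ :=
        (Set.Icc_union_Icc_eq_Icc (hTn k') (hTk.trans hT₁₂)).symm
      rw [hu]
      refine ContinuousOn.union_of_isClosed ?_ ?_ isClosed_Icc isClosed_Icc
      · refine (hγ k').cont.congr fun t ht => ?_
        simp only [if_pos ht.2]
      · have hc : ContinuousOn (fun t : ℝ => e.symm (x₀ + gw x₀ + t • v)) (Set.Icc (T k') T₂) :=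
          e.continuousOn_symm.comp hline.continuousOn fun t ht => (hball' t ht).1
        refine hc.congr fun t ht => ?_
        by_cases h : t ≤ T k'
        · have : t = T k' := le_antisymm h ht.1
          simp only [if_pos h]
          rw [this, hval]
        · simp only [if_neg h]
    · simp only [if_pos (hTn k')]
      exact (hγ k').zero
    · intro t ht
      by_cases h : t ≤ T k'
      · simp only [if_pos h]; exact (hγ k').mem t ⟨ht.1, h⟩
      · simp only [if_neg h]; exact (hball' t ⟨(not_le.1 h).le, ht.2⟩).2
    · intro t ht
      by_cases h : t ≤ T k'
      · simp only [if_pos h]; exact (hγ k').eq t ⟨ht.1, h⟩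
      · simp only [if_neg h]
        exact e.right_inv (hball' t ⟨(not_le.1 h).le, ht.2⟩).1
  have hle : T₂ ≤ T₁ := le_csSup hbdd hT₂A
  have hT₂1 : T₂ = 1 := by
    rcases min_choice 1 (T₁ + δ / 2) with h | h
    · exact h
    · rw [← hT₂] at h; linarith
  rw [hT₂1] at hT₂A
  exact hT₂A.2.2

end Dat

namespace Dat

variable {n : ℕ} {Ω : Set (EuclideanSpace ℝ (Fin n))}
    {w : EuclideanSpace ℝ (Fin n) → ℝ}
    {gw : EuclideanSpace ℝ (Fin n) → EuclideanSpace ℝ (Fin n)}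
    {N : EuclideanSpace ℝ (Fin n) → Matrix (Fin n) (Fin n) ℝ}

/-- The map `x ↦ x + Dw(x)` has a global continuous inverse. -/
lemma exists_inverse (S : Dat n Ω w gw N) :
    ∃ X : EuclideanSpace ℝ (Fin n) → EuclideanSpace ℝ (Fin n), Continuous X ∧ (∀ y, X y ∈ Ω) ∧
      (∀ y, X y + gw (X y) = y) ∧ ∀ x ∈ Ω, X (x + gw x) = x := by
  obtain ⟨x₀, hx₀⟩ := S.hc.nonempty
  set p : Ω → EuclideanSpace ℝ (Fin n) := fun x => x.1 + gw x.1 with hp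
  have hlocOn : IsLocalHomeomorphOn (fun x => x + gw x) Ω := by
    intro x hx
    exact ⟨(S.strict hx).toOpenPartialHomeomorph (fun x => x + gw x),
      (S.strict hx).mem_toOpenPartialHomeomorph_source, rfl⟩
  have hloc : IsLocalHomeomorph p := by
    rw [isLocalHomeomorph_iff_isLocalHomeomorphOn_univ]
    exact hlocOn.comp (S.ho.isOpenEmbedding_subtypeVal.isLocalHomeomorph.isLocalHomeomorphOn)
      (fun x _ => x.2)
  have hsep : IsSeparatedMap p := T2Space.isSeparatedMap p
  choose γ hγ using fun y => S.exists_lift hx₀ (y - (x₀ + gw x₀))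
  set G : unitInterval × EuclideanSpace ℝ (Fin n) → Ω :=
    fun q => ⟨γ q.2 q.1.1, (hγ q.2).mem _ q.1.2⟩ with hG
  have hGc : Continuous G := by
    refine hloc.continuous_lift hsep
      (f := ⟨fun q : unitInterval × EuclideanSpace ℝ (Fin n) =>
        x₀ + gw x₀ + (q.1 : ℝ) • (q.2 - (x₀ + gw x₀)), by fun_prop⟩) ?_ ?_ ?_
    · ext1 q
      exact (hγ q.2).eq _ q.1.2
    · have : ∀ y, G (0, y) = ⟨x₀, hx₀⟩ := fun y => Subtype.ext (hγ y).zero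
      simp only [this]
      exact continuous_const
    · intro y
      refine Continuous.subtype_mk ?_ _
      exact (hγ y).cont.comp_continuous continuous_subtype_val fun t => t.2
  set X : EuclideanSpace ℝ (Fin n) → Ω := fun y => G (1, y) with hX
  have hXc : Continuous X := hGc.comp (by fun_prop)
  have hpX : ∀ y, p (X y) = y := by
    intro y
    have := (hγ y).eq 1 (by simp)
    have h2 : p (X y) = γ y 1 + gw (γ y 1) := rfl
    rw [h2, this, one_smul]; abel
  have hXloc : IsLocalHomeomorph X := by
    refine IsLocalHomeomorph.of_comp (g := p) ?_ hloc hXc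
    have : p ∘ X = id := funext hpX
    rw [this]
    exact (Homeomorph.refl _).isLocalHomeomorph
  have hclopen : IsClopen (Set.range X) := by
    refine ⟨?_, hXloc.isOpenMap.isOpen_range⟩
    have : Set.range X = {x | X (p x) = x} := by
      ext x
      constructor
      · rintro ⟨y, rfl⟩
        change X (p (X y)) = X y
        rw [hpX]
      · intro h; exact ⟨p x, h⟩
    rw [this]
    exact isClosed_eq (hXc.comp hloc.continuous) continuous_id
  have : ConnectedSpace Ω := isConnected_iff_connectedSpace.1 S.hc
  have hun : Set.range X = Set.univ := hclopen.eq_univ ⟨X 0, 0, rfl⟩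
  refine ⟨fun y => (X y).1, continuous_subtype_val.comp hXc, fun y => (X y).2, hpX, fun x hx => ?_⟩
  obtain ⟨y, hy⟩ : (⟨x, hx⟩ : Ω) ∈ Set.range X := by rw [hun]; trivial
  have h1 : x + gw x = p ⟨x, hx⟩ := rfl
  rw [h1, ← hy, hpX]
  change (X y).1 = x
  rw [hy]

/-- The core Bernstein theorem for the rotated problem. -/
lemma bernstein (S : Dat n Ω w gw N) {κ : ℝ} (hκ : 0 < κ)
    (heq : ∀ x ∈ Ω, κ * (Real.log (N x).det - Real.log (1 + N x).det)
      = -w x + (1/2) * ⟪x, gw x⟫) :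
    Ω = Set.univ ∧ ∃ (A : Matrix (Fin n) (Fin n) ℝ) (c : ℝ), A.IsHermitian ∧
      ∀ x, w x = (1/2) * ⟪x, mT A x⟫ + c := by
  obtain ⟨X, hXc, hXΩ, hFX, hXF⟩ := S.exists_inverse
  have hgX : ∀ y, gw (X y) = y - X y := fun y => by
    rw [eq_sub_iff_add_eq, add_comm]; exact hFX y
  have hXd : ∀ y, HasFDerivAt X (mT (1 + N (X y))⁻¹) y := by
    intro y
    exact HasFDerivAt.of_local_left_inverse hXc.continuousAt (S.strict (hXΩ y)).hasFDerivAt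
      (Eventually.of_forall hFX)
  have hinv : ∀ y, 1 - (1 + N (X y))⁻¹ = N (X y) * (1 + N (X y))⁻¹ := by
    intro y
    have h1 := Matrix.mul_nonsing_inv _ (S.isUnit_det (hXΩ y))
    rw [add_mul, one_mul] at h1
    rw [sub_eq_iff_eq_add, add_comm, h1]
  have hNu : ∀ y, IsUnit (N (X y)).det := fun y => (S.hN _ (hXΩ y)).det_pos.ne'.isUnit
  have hQinv : ∀ y, (1 - (1 + N (X y))⁻¹)⁻¹ = 1 + (N (X y))⁻¹ := by
    intro y
    rw [hinv, Matrix.mul_inv_rev, Matrix.nonsing_inv_nonsing_inv _ (S.isUnit_det (hXΩ y)),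
      add_mul, one_mul, Matrix.mul_nonsing_inv _ (hNu y), add_comm]
  have hQpd : ∀ y, (1 - (1 + N (X y))⁻¹).PosDef := by
    intro y
    have h1 : (1 + (N (X y))⁻¹).PosDef := Matrix.PosDef.one.add (S.hN _ (hXΩ y)).inv
    rw [← hQinv] at h1
    exact Matrix.posDef_inv_iff.1 h1
  have Sφ : Sol n κ (fun y => w (X y) + (1/2) * ⟪y - X y, y - X y⟫) (fun y => y - X y)
      (fun y => 1 - (1 + N (X y))⁻¹) := by
    refine ⟨hκ, ?_, ?_, ?_, hQpd, ?_, ?_⟩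
    · intro y
      have hd := (hasFDerivAt_id (𝕜 := ℝ) y).sub (hXd y)
      have h1 := ((S.hw _ (hXΩ y)).comp y (hXd y)).add ((hd.inner ℝ hd).const_mul (1/2 : ℝ))
      refine h1.congr_fderiv ?_
      ext v
      simp [fderivInnerCLM_apply, hgX, inner_sub_left, inner_sub_right, real_inner_comm v,
        real_inner_comm (mT (1 + N (X y))⁻¹ v)]
      ring
    · intro y
      refine ((hasFDerivAt_id (𝕜 := ℝ) y).sub (hXd y)).congr_fderiv ?_
      simp only [mT, map_sub, map_one]
      rfl
    · have h1 : Continuous fun y => 1 + N (X y) :=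
        continuous_const.add (S.hNc.comp_continuous hXc hXΩ)
      refine continuous_const.sub (continuous_iff_continuousAt.2 fun y => ?_)
      exact ContinuousAt.comp (f := fun y => 1 + N (X y))
        (continuousAt_matrix_inv _ (by
          rw [Ring.inverse_eq_inv']
          exact continuousAt_inv₀ (S.isUnit_det (hXΩ y)).ne_zero)) h1.continuousAt
    · intro y
      rw [hQinv, add_sub_cancel_left]
      exact (S.hN _ (hXΩ y)).inv.posSemidef
    · intro y
      have h1 := heq _ (hXΩ y)
      rw [hinv, Matrix.det_mul, Matrix.det_nonsing_inv, Ring.inverse_eq_inv',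
        Real.log_mul (hNu y).ne_zero (inv_ne_zero (S.isUnit_det (hXΩ y)).ne_zero), Real.log_inv,
        ← sub_eq_add_neg, h1, hgX]
      simp only [inner_sub_left, inner_sub_right, real_inner_comm y (X y)]
      ring
  have hlin := Sφ.linear
  obtain ⟨c, hc⟩ := Sφ.phase_const
  -- `X` is linear
  have hXlin : ∀ y, X y = mT (1 + N (X 0))⁻¹ y := by
    intro y
    have h1 := hlin y
    simp only [mT, map_sub, map_one] at h1
    exact sub_right_injective (h1 : y - X y = y - mT (1 + N (X 0))⁻¹ y)
  have hΩ : Ω = Set.univ := by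
    refine Set.eq_univ_of_forall fun x => ?_
    have h1 := hXΩ (mT (1 + N (X 0)) x)
    rw [hXlin, ← mT_mul, Matrix.nonsing_inv_mul _ (S.isUnit_det (hXΩ 0))] at h1
    simpa [mT] using h1
  refine ⟨hΩ, N (X 0), -c, (S.hN _ (hXΩ 0)).1, fun x => ?_⟩
  have hx : x ∈ Ω := by rw [hΩ]; trivial
  have h1 : x + gw x = mT (1 + N (X 0)) x := by
    have h2 := hXlin (x + gw x)
    rw [hXF x hx] at h2
    conv_rhs => rw [h2]
    rw [← mT_mul, Matrix.mul_nonsing_inv _ (S.isUnit_det (hXΩ 0))]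
    simp [mT]
  have h3 : gw x = mT (N (X 0)) x := by
    simp only [mT, map_add, map_one] at h1
    exact add_left_cancel (h1 : x + gw x = x + mT (N (X 0)) x)
  have h4 := hc (x + gw x)
  unfold phase at h4
  beta_reduce at h4
  rw [hXF x hx, add_sub_cancel_left] at h4
  simp only [inner_add_left] at h4
  rw [← h3]
  linarith

end Dat

lemma log_det_smul_sub {n : ℕ} {c : ℝ} (hc : c ≠ 0) {A B : Matrix (Fin n) (Fin n) ℝ}
    (hA : A.det ≠ 0) (hB : B.det ≠ 0) :
    Real.log (c • A).det - Real.log (c • B).det = Real.log A.det - Real.log B.det := by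
  have h := pow_ne_zero (Fintype.card (Fin n)) hc
  rw [Matrix.det_smul, Matrix.det_smul, Real.log_mul h hA, Real.log_mul h hB]
  ring

section Calc

variable {n : ℕ} {Ω : Set (EuclideanSpace ℝ (Fin n))} {u : EuclideanSpace ℝ (Fin n) → ℝ}

lemma hasFDerivAt_of_contDiffOn (hΩo : IsOpen Ω) (hu : ContDiffOn ℝ 2 u Ω)
    {x : EuclideanSpace ℝ (Fin n)} (hx : x ∈ Ω) :
    HasFDerivAt u (innerSL ℝ (gradient u x)) x := by
  have h1 : DifferentiableAt ℝ u x :=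
    (hu.contDiffAt (hΩo.mem_nhds hx)).differentiableAt (by norm_num)
  exact h1.hasGradientAt.hasFDerivAt

lemma contDiffAt_fderiv (hΩo : IsOpen Ω) (hu : ContDiffOn ℝ 2 u Ω)
    {x : EuclideanSpace ℝ (Fin n)} (hx : x ∈ Ω) : ContDiffAt ℝ 1 (fderiv ℝ u) x :=
  (hu.contDiffAt (hΩo.mem_nhds hx)).fderiv_right (by norm_num)

lemma hess_apply (x : EuclideanSpace ℝ (Fin n)) (i j : Fin n) :
    Hess n u x i j = fderiv ℝ (fderiv ℝ u) x (EuclideanSpace.single i 1)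
      (EuclideanSpace.single j 1) := by
  simp [Hess, iteratedFDeriv_two_apply]

lemma hess_isHermitian (hΩo : IsOpen Ω) (hu : ContDiffOn ℝ 2 u Ω)
    {x : EuclideanSpace ℝ (Fin n)} (hx : x ∈ Ω) : (Hess n u x).IsHermitian := by
  have h := (hu.contDiffAt (hΩo.mem_nhds hx)).isSymmSndFDerivAt (by simp)
  ext i j
  rw [Matrix.conjTranspose_apply, star_trivial, hess_apply, hess_apply]
  exact h _ _

lemma hess_continuousOn (hΩo : IsOpen Ω) (hu : ContDiffOn ℝ 2 u Ω) :
    ContinuousOn (Hess n u) Ω := by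
  intro x hx
  refine ContinuousAt.continuousWithinAt ?_
  refine continuousAt_pi.2 fun i => continuousAt_pi.2 fun j => ?_
  simp only [hess_apply]
  have h1 : ContDiffAt ℝ 0 (fderiv ℝ (fderiv ℝ u)) x :=
    (contDiffAt_fderiv hΩo hu hx).fderiv_right (by norm_num)
  exact (h1.continuousAt.clm_apply continuousAt_const).clm_apply continuousAt_const

lemma hasFDerivAt_gradient (hΩo : IsOpen Ω) (hu : ContDiffOn ℝ 2 u Ω)
    {x : EuclideanSpace ℝ (Fin n)} (hx : x ∈ Ω) :
    HasFDerivAt (gradient u) (mT (Hess n u x)) x := by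
  have h1 := ((contDiffAt_fderiv hΩo hu hx).differentiableAt (by norm_num)).hasFDerivAt
  have h2 := ((InnerProductSpace.toDual ℝ (EuclideanSpace ℝ (Fin n))).symm
    |>.toContinuousLinearEquiv.toContinuousLinearMap.hasFDerivAt).comp x h1
  refine HasFDerivAt.congr_fderiv (f' := _) h2 ?_
  have hs := (hu.contDiffAt (hΩo.mem_nhds hx)).isSymmSndFDerivAt (by simp)
  ext v i
  have h3 : ∀ z : EuclideanSpace ℝ (Fin n), z i = ⟪z, EuclideanSpace.single i 1⟫ := by
    intro z; simp [EuclideanSpace.inner_single_right]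
  have h4 : v = ∑ j, v j • (EuclideanSpace.single j (1:ℝ) : EuclideanSpace ℝ (Fin n)) := by
    ext k; simp [Finset.sum_apply, Pi.single_apply]
  have h5 : fderiv ℝ (fderiv ℝ u) x v (EuclideanSpace.single i 1) = (Hess n u x *ᵥ v.ofLp) i := by
    rw [hs v]
    conv_lhs => rw [h4]
    rw [map_sum]
    simp only [map_smul, smul_eq_mul, Matrix.mulVec, dotProduct, hess_apply]
    exact Finset.sum_congr rfl fun j _ => mul_comm _ _
  rw [h3, Matrix.ofLp_toEuclideanCLM, ← h5]
  exact InnerProductSpace.toDual_symm_apply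

end Calc

/-- The common reduction of both admissibility cases. -/
lemma reduction {n : ℕ} {b κ₀ s q : ℝ} (hb : 0 < b) (hκ : 0 < κ₀) (hs : s = 1 ∨ s = -1)
    {Ω : Set (EuclideanSpace ℝ (Fin n))} (hΩo : IsOpen Ω) (hΩc : IsConnected Ω)
    {u : EuclideanSpace ℝ (Fin n) → ℝ} (hu : ContDiffOn ℝ 2 u Ω)
    (hpd : ∀ x ∈ Ω, (s • Hess n u x + q • (1 : Matrix (Fin n) (Fin n) ℝ)).PosDef)
    (heq : ∀ x ∈ Ω, κ₀ * (s * (Real.log (s • Hess n u x + q • (1 : Matrix (Fin n) (Fin n) ℝ)).det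
        - Real.log (s • Hess n u x + (q + 2 * b) • (1 : Matrix (Fin n) (Fin n) ℝ)).det))
      = -u x + (1/2) * ⟪x, gradient u x⟫)
    (hblow :
      (∀ p ∈ frontier Ω, ∀ z : ℕ → EuclideanSpace ℝ (Fin n), (∀ k, z k ∈ Ω) →
        Tendsto z atTop (nhds p) → Tendsto (fun k => ‖gradient u (z k)‖) atTop atTop) ∨
      (∀ p ∈ frontier Ω, ∀ z : ℕ → EuclideanSpace ℝ (Fin n), (∀ k, z k ∈ Ω) →
        Tendsto z atTop (nhds p) → Tendsto (fun k => |u (z k)|) atTop atTop)) :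
    Ω = Set.univ ∧ IsQuadPoly n u := by
  have hss : s * s = 1 := by rcases hs with h | h <;> rw [h] <;> norm_num
  have hsabs : |s| = 1 := by rcases hs with h | h <;> rw [h] <;> norm_num
  set r : ℝ := (2 * b)⁻¹ with hr
  have hrpos : 0 < r := by positivity
  have hrb : r * (2 * b) = 1 := by rw [hr]; field_simp
  set w : EuclideanSpace ℝ (Fin n) → ℝ := fun x => r * (s * u x + q / 2 * ⟪x, x⟫) with hw
  set gw : EuclideanSpace ℝ (Fin n) → EuclideanSpace ℝ (Fin n) :=
    fun x => r • (s • gradient u x + q • x) with hgw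
  set N : EuclideanSpace ℝ (Fin n) → Matrix (Fin n) (Fin n) ℝ :=
    fun x => r • (s • Hess n u x + q • (1 : Matrix (Fin n) (Fin n) ℝ)) with hN
  have hu1 : ∀ x, s * (2 * b * w x - q / 2 * ⟪x, x⟫) = u x := by
    intro x
    simp only [hw]
    linear_combination (r * (2 * b) * u x) * hss + (u x + s * (q / 2 * ⟪x, x⟫)) * hrb
  have hg1 : ∀ x, gradient u x = s • ((2 * b) • gw x - q • x) := by
    intro x
    simp only [hgw, smul_smul, mul_comm (2 * b), hrb, one_smul, add_sub_cancel_right, hss]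
  have h1N : ∀ x, 1 + N x = r • (s • Hess n u x + (q + 2 * b) • (1 : Matrix (Fin n) (Fin n) ℝ)) := by
    intro x
    simp only [hN, add_smul, smul_add, smul_smul, hrb, one_smul]
    abel
  have S : Dat n Ω w gw N := by
    refine ⟨hΩo, hΩc, ?_, ?_, ?_, fun x hx => (hpd x hx).smul hrpos, ?_⟩
    · intro x hx
      have h1 := hasFDerivAt_of_contDiffOn hΩo hu hx
      have hi := hasFDerivAt_id (𝕜 := ℝ) x
      refine (((h1.const_mul s).add ((hi.inner ℝ hi).const_mul (q / 2))).const_mul r).congr_fderiv ?_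
      ext v
      simp only [hgw]
      simp [fderivInnerCLM_apply, real_inner_comm v, inner_add_right, inner_smul_right]
      left
      ring
    · intro x hx
      have h1 := hasFDerivAt_gradient hΩo hu hx
      have hi := hasFDerivAt_id (𝕜 := ℝ) x
      refine (((h1.const_smul s).add (hi.const_smul q)).const_smul r).congr_fderiv ?_
      simp only [hN, mT, map_add, map_smul, map_one]
      rfl
    · exact (((hess_continuousOn hΩo hu).const_smul s).add continuousOn_const).const_smul r
    · intro z p C hz hzp hC1 hC2
      by_contra hp
      have hfr : p ∈ frontier Ω := by
        rw [hΩo.frontier_eq]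
        exact ⟨mem_closure_of_tendsto hzp (Eventually.of_forall hz), hp⟩
      obtain ⟨R, hR⟩ := hzp.norm.bddAbove_range
      have hR' : ∀ k, ‖z k‖ ≤ R := fun k => hR ⟨k, rfl⟩
      have key : ∀ f : ℕ → ℝ, ∀ B : ℝ, (∀ k, f k ≤ B) → ¬ Tendsto f atTop atTop := by
        intro f B hB hf
        obtain ⟨k, hk⟩ := (hf.eventually (eventually_gt_atTop B)).exists
        exact absurd (hB k) (not_le.2 hk)
      rcases hblow with h | h
      · refine key _ (2 * b * C + |q| * R) (fun k => ?_) (h p hfr z hz hzp)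
        rw [hg1, norm_smul, Real.norm_eq_abs, hsabs, one_mul]
        refine (norm_sub_le _ _).trans ?_
        rw [norm_smul (2 * b) (gw (z k)), norm_smul q (z k), Real.norm_eq_abs, Real.norm_eq_abs,
          abs_of_pos (by linarith : 0 < 2 * b)]
        gcongr
        · exact hC1 k
        · exact hR' k
      · refine key _ (2 * b * C + |q / 2| * R ^ 2) (fun k => ?_) (h p hfr z hz hzp)
        rw [← hu1, abs_mul, hsabs, one_mul]
        refine (abs_sub _ _).trans ?_
        rw [abs_mul (2 * b), abs_mul (q / 2), abs_of_pos (by linarith : 0 < 2 * b), real_inner_self_eq_norm_sq,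
          abs_of_nonneg (sq_nonneg ‖z k‖)]
        gcongr
        · exact hC2 k
        · exact hR' k
  have hdet : ∀ x ∈ Ω, (s • Hess n u x + (q + 2 * b) • (1 : Matrix (Fin n) (Fin n) ℝ)).det ≠ 0 := by
    intro x hx h0
    have h1 := (S.isUnit_det hx).ne_zero
    rw [h1N, Matrix.det_smul, h0, mul_zero] at h1
    exact h1 rfl
  obtain ⟨hΩ, A, c, hA, hwA⟩ := S.bernstein (κ := r * κ₀) (by positivity) (by
    intro x hx
    have h1 := heq x hx
    rw [h1N]
    simp only [hN]
    rw [log_det_smul_sub hrpos.ne' (hpd x hx).det_pos.ne' (hdet x hx)]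
    simp only [hw, hgw, inner_smul_right, inner_add_right]
    linear_combination (r * s) * h1 - (r * κ₀ * (Real.log (s • Hess n u x + q • (1 : Matrix (Fin n) (Fin n) ℝ)).det
        - Real.log (s • Hess n u x + (q + 2 * b) • (1 : Matrix (Fin n) (Fin n) ℝ)).det)) * hss)
  refine ⟨hΩ, s • ((2 * b) • A - q • 1), 0, s * (2 * b) * c, ?_, fun x => ?_⟩
  · have hA' : Aᵀ = A := by simpa [Matrix.IsHermitian] using hA
    simp [Matrix.IsSymm, hA']
  · have h1 : ∑ i, ∑ j, (s • ((2 * b) • A - q • (1 : Matrix (Fin n) (Fin n) ℝ))) i j * x i * x j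
        = ⟪x, mT (s • ((2 * b) • A - q • (1 : Matrix (Fin n) (Fin n) ℝ))) x⟫ := by
      rw [Matrix.inner_toEuclideanCLM]
      simp only [dotProduct, Matrix.mulVec, Finset.mul_sum]
      refine Finset.sum_congr rfl fun i _ => Finset.sum_congr rfl fun j _ => ?_
      ring
    have h2 : mT (s • ((2 * b) • A - q • (1 : Matrix (Fin n) (Fin n) ℝ))) x
        = s • ((2 * b) • mT A x - q • x) := by
      simp only [mT, map_smul, map_sub, map_one]
      rfl
    rw [h1, h2, ← hu1, hwA, inner_smul_right, inner_sub_right, inner_smul_right, inner_smul_right,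
      inner_zero_left]
    ring

theorem bernstein_domain_tau_lt_pi_div_four (n : ℕ) (hn : 1 ≤ n) (a b : ℝ)
    (ha : 1 < a) (hb : b = Real.sqrt (a ^ 2 - 1))
    (Ω : Set (EuclideanSpace ℝ (Fin n))) (hΩo : IsOpen Ω) (hΩc : IsConnected Ω)
    (u : EuclideanSpace ℝ (Fin n) → ℝ)
    (hu : ContDiffOn ℝ 2 u Ω)
    (heq : ∀ x ∈ Ω, (Real.sqrt (a ^ 2 + 1) / (2 * b)) *
        ∑ i, Real.log ((eigs (Hess n u x) i + a - b) / (eigs (Hess n u x) i + a + b))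
      = -u x + (1/2) * ⟪x, gradient u x⟫)
    (hadm : (∀ x ∈ Ω, (Hess n u x + (a - b) • (1 : Matrix (Fin n) (Fin n) ℝ)).PosDef) ∨
      (∀ x ∈ Ω, (-((a + b) • (1 : Matrix (Fin n) (Fin n) ℝ)) - Hess n u x).PosDef))
    (hblow :
      (∀ p ∈ frontier Ω, ∀ z : ℕ → EuclideanSpace ℝ (Fin n), (∀ k, z k ∈ Ω) →
        Tendsto z atTop (nhds p) → Tendsto (fun k => ‖gradient u (z k)‖) atTop atTop) ∨
      (∀ p ∈ frontier Ω, ∀ z : ℕ → EuclideanSpace ℝ (Fin n), (∀ k, z k ∈ Ω) →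
        Tendsto z atTop (nhds p) → Tendsto (fun k => |u (z k)|) atTop atTop)) :
    Ω = Set.univ ∧ IsQuadPoly n u := by
  have h1 : 0 < a ^ 2 - 1 := by nlinarith
  have hbpos : 0 < b := by rw [hb]; exact Real.sqrt_pos.2 h1
  have hκ : 0 < Real.sqrt (a ^ 2 + 1) / (2 * b) :=
    div_pos (Real.sqrt_pos.2 (by positivity)) (by positivity)
  rcases hadm with hadm | hadm
  · refine reduction (s := 1) (q := a - b) hbpos hκ (Or.inl rfl) hΩo hΩc hu
      (fun x hx => by rw [one_smul]; exact hadm x hx) (fun x hx => ?_) hblow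
    rw [← heq x hx, one_smul, one_mul, show a - b + 2 * b = a + b by ring]
    have hpd : (Hess n u x + (a + b) • (1 : Matrix (Fin n) (Fin n) ℝ)).PosDef := by
      have h2 := (hadm x hx).add (Matrix.PosDef.one.smul (by positivity : 0 < 2 * b))
      rwa [add_assoc, ← add_smul, show a - b + 2 * b = a + b by ring] at h2
    have h3 := sum_log_eigs (hess_isHermitian hΩo hu hx) (a - b) (a + b)
      (hadm x hx).det_pos.ne' hpd.det_pos.ne'
    rw [← h3]
    simp only [add_sub_assoc, add_assoc]
  · have e1 : ∀ x, -((a + b) • (1 : Matrix (Fin n) (Fin n) ℝ)) - Hess n u x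
        = (-1 : ℝ) • Hess n u x + (-(a + b)) • (1 : Matrix (Fin n) (Fin n) ℝ) := by
      intro x
      rw [neg_smul, neg_smul, one_smul]; abel
    have e2 : ∀ x, ∀ c : ℝ, (-1 : ℝ) • Hess n u x + (-c) • (1 : Matrix (Fin n) (Fin n) ℝ)
        = (-1 : ℝ) • (Hess n u x + c • (1 : Matrix (Fin n) (Fin n) ℝ)) := by
      intro x c
      rw [smul_add, smul_smul, neg_one_mul]
    refine reduction (s := -1) (q := -(a + b)) hbpos hκ (Or.inr rfl) hΩo hΩc hu
      (fun x hx => by rw [← e1]; exact hadm x hx) (fun x hx => ?_) hblow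
    have hpd1 := hadm x hx
    rw [e1] at hpd1
    have hpd2 : ((-1 : ℝ) • Hess n u x + (-(a - b)) • (1 : Matrix (Fin n) (Fin n) ℝ)).PosDef := by
      have h2 := hpd1.add (Matrix.PosDef.one.smul (by positivity : 0 < 2 * b))
      rwa [add_assoc, ← add_smul, show -(a + b) + 2 * b = -(a - b) by ring] at h2
    rw [← heq x hx, show -(a + b) + 2 * b = -(a - b) by ring]
    have hd1 := hpd1.det_pos.ne'
    have hd2 := hpd2.det_pos.ne'
    rw [e2, Matrix.det_smul] at hd1 hd2
    have hd1' := right_ne_zero_of_mul hd1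
    have hd2' := right_ne_zero_of_mul hd2
    have h3 := sum_log_eigs (hess_isHermitian hΩo hu hx) (a - b) (a + b) hd2' hd1'
    rw [e2, e2, log_det_smul_sub (by norm_num) hd1' hd2']
    have h4 : ∑ i, Real.log ((eigs (Hess n u x) i + a - b) / (eigs (Hess n u x) i + a + b))
        = ∑ i, Real.log ((eigs (Hess n u x) i + (a - b)) / (eigs (Hess n u x) i + (a + b))) := by
      simp only [add_sub_assoc, add_assoc]
    rw [h4, h3]
    ring
end
end

section
/- Let n ≥ 1, 0 < a < 1, b = √(1 − a²), and let Ω ⊆ ℝⁿ be a nonempty open connected set. Let u : Ω → ℝ be a C² function with D²u(x) > −(a+b)I for every x ∈ Ω (admissibility), satisfying (√(a²+1)/b) · Σ_{i=1}^n arctan((λ_i(D²u(x)) + a − b)/(λ_i(D²u(x)) + a + b)) = −u(x) + (1/2)⟨x, Du(x)⟩ for all x ∈ Ω. Assume that |Du| = ∞ on ∂Ω or |u| = ∞ on ∂Ω. Then Ω = ℝⁿ and u is a quadratic polynomial. -/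
open Real Filter Matrix
open scoped RealInnerProductSpace

noncomputable section

section

lemma arctan_taylor (x y : ℝ) :
    |arctan y - arctan x - (y - x) / (1 + x ^ 2)| ≤ (y - x) ^ 2 := by
  have h := Convex.norm_image_sub_le_of_norm_hasDerivWithin_le (𝕜 := ℝ)
    (f := fun t => arctan t - t / (1 + x ^ 2))
    (f' := fun t => 1 / (1 + t ^ 2) - 1 / (1 + x ^ 2)) (s := Set.uIcc x y) (x := x) (y := y)
    (C := |y - x|) (fun t _ => ((hasDerivAt_arctan t).sub
      ((hasDerivAt_id t).div_const _)).hasDerivWithinAt) ?_ (convex_uIcc x y)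
      Set.left_mem_uIcc Set.right_mem_uIcc
  · simp only [Real.norm_eq_abs] at h
    have e : arctan y - y / (1 + x ^ 2) - (arctan x - x / (1 + x ^ 2))
      = arctan y - arctan x - (y - x) / (1 + x ^ 2) := by ring
    rw [e] at h
    rw [← sq_abs (y - x), pow_two |y - x|]
    exact h
  · intro t ht
    have h1 : |t - x| ≤ |y - x| := Set.abs_sub_left_of_mem_uIcc ht
    have p1 : 0 < 1 + t ^ 2 := by positivity
    have p2 : 0 < 1 + x ^ 2 := by positivity
    have e : 1 / (1 + t ^ 2) - 1 / (1 + x ^ 2)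
      = (x - t) * ((x + t) / ((1 + t ^ 2) * (1 + x ^ 2))) := by
      field_simp; ring
    rw [e, norm_mul, Real.norm_eq_abs, Real.norm_eq_abs, abs_sub_comm]
    have h2 : |(x + t) / ((1 + t ^ 2) * (1 + x ^ 2))| ≤ 1 := by
      rw [abs_div, abs_of_pos (mul_pos p1 p2), div_le_one (mul_pos p1 p2), abs_le]
      constructor <;> nlinarith [sq_nonneg (x + 1), sq_nonneg (x - 1), sq_nonneg (t + 1),
        sq_nonneg (t - 1), sq_nonneg (x * t)]
    calc _ ≤ |t - x| * 1 := by gcongr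
      _ ≤ _ := by simpa using h1

variable {E : Type*} [NormedAddCommGroup E] [InnerProductSpace ℝ E] {n : ℕ}

lemma symm_of_eig (e : OrthonormalBasis (Fin n) ℝ E) (A : E →L[ℝ] E) (θ : Fin n → ℝ)
    (hA : ∀ i, A (e i) = θ i • e i) (x y : E) : ⟪A x, y⟫ = ⟪x, A y⟫ := by
  have key : ∀ z, A z = ∑ i, (⟪e i, z⟫ * θ i) • e i := by
    intro z
    conv_lhs => rw [← e.sum_repr' z]
    simp [hA, smul_smul]
  rw [key x, key y, sum_inner, inner_sum]
  refine Finset.sum_congr rfl fun i _ => ?_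
  rw [real_inner_smul_left, real_inner_smul_right, real_inner_comm x (e i)]
  ring

lemma klein (e e' : OrthonormalBasis (Fin n) ℝ E) (A A' : E →L[ℝ] E) (θ θ' : Fin n → ℝ)
    (hA : ∀ i, A (e i) = θ i • e i) (hA' : ∀ i, A' (e' i) = θ' i • e' i) :
    |∑ i, arctan (θ' i) - ∑ i, arctan (θ i) - ∑ i, (1 / (1 + θ i ^ 2)) * ⟪e i, (A' - A) (e i)⟫|
      ≤ ∑ i, ‖(A' - A) (e i)‖ ^ 2 := by
  have hp1 : ∀ i, ∑ j, ⟪e' j, e i⟫ ^ 2 = 1 := by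
    intro i
    have := e'.sum_sq_inner_right (e i)
    simpa using this
  have hp2 : ∀ j, ∑ i, ⟪e' j, e i⟫ ^ 2 = 1 := by
    intro j
    have := e.sum_sq_inner_left (e' j)
    simpa using this
  have hd : ∀ i j, ⟪e' j, (A' - A) (e i)⟫ = (θ' j - θ i) * ⟪e' j, e i⟫ := by
    intro i j
    rw [_root_.sub_apply, inner_sub_right, ← symm_of_eig e' A' θ' hA', hA', hA,
      real_inner_smul_left, real_inner_smul_right]
    ring
  have hn2 : ∀ i, ‖(A' - A) (e i)‖ ^ 2 = ∑ j, ⟪e' j, e i⟫ ^ 2 * (θ' j - θ i) ^ 2 := by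
    intro i
    rw [← e'.sum_sq_inner_right]
    refine Finset.sum_congr rfl fun j _ => ?_
    rw [hd]; ring
  have hin : ∀ i, ⟪e i, (A' - A) (e i)⟫ = ∑ j, ⟪e' j, e i⟫ ^ 2 * (θ' j - θ i) := by
    intro i
    rw [← e'.sum_inner_mul_inner]
    refine Finset.sum_congr rfl fun j _ => ?_
    rw [hd, real_inner_comm]; ring
  have s1 : ∑ i, arctan (θ' i) = ∑ i, ∑ j, ⟪e' j, e i⟫ ^ 2 * arctan (θ' j) := by
    rw [Finset.sum_comm]
    refine Finset.sum_congr rfl fun j _ => ?_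
    rw [← Finset.sum_mul, hp2, one_mul]
  have s2 : ∑ i, arctan (θ i) = ∑ i, ∑ j, ⟪e' j, e i⟫ ^ 2 * arctan (θ i) := by
    refine Finset.sum_congr rfl fun j _ => ?_
    rw [← Finset.sum_mul, hp1, one_mul]
  rw [s1, s2]
  simp only [hn2, hin, Finset.mul_sum, ← Finset.sum_sub_distrib]
  refine (Finset.abs_sum_le_sum_abs _ _).trans (Finset.sum_le_sum fun i _ => ?_)
  refine (Finset.abs_sum_le_sum_abs _ _).trans (Finset.sum_le_sum fun j _ => ?_)
  have := arctan_taylor (θ i) (θ' j)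
  have e1 : ⟪e' j, e i⟫ ^ 2 * arctan (θ' j) - ⟪e' j, e i⟫ ^ 2 * arctan (θ i) -
      1 / (1 + θ i ^ 2) * (⟪e' j, e i⟫ ^ 2 * (θ' j - θ i)) = ⟪e' j, e i⟫ ^ 2 *
      (arctan (θ' j) - arctan (θ i) - (θ' j - θ i) / (1 + θ i ^ 2)) := by ring
  rw [e1, abs_mul, abs_of_nonneg (sq_nonneg _)]
  gcongr

lemma sum_norm_le (e : OrthonormalBasis (Fin n) ℝ E) (B : E →L[ℝ] E) :
    ∑ i, ‖B (e i)‖ ^ 2 ≤ n * ‖B‖ ^ 2 := by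
  calc ∑ i, ‖B (e i)‖ ^ 2 ≤ ∑ i : Fin n, ‖B‖ ^ 2 := by
        refine Finset.sum_le_sum fun i _ => ?_
        have := B.le_opNorm (e i)
        rw [e.orthonormal.1 i, mul_one] at this
        gcongr
    _ = _ := by simp

lemma exists_eig (e : OrthonormalBasis (Fin n) ℝ E) (A : E →L[ℝ] E)
    (hA : ∀ x y, ⟪A x, y⟫ = ⟪x, A y⟫) :
    ∃ (f : OrthonormalBasis (Fin n) ℝ E) (θ : Fin n → ℝ), ∀ i, A (f i) = θ i • f i := by
  have : FiniteDimensional ℝ E := e.toBasis.finiteDimensional_of_finite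
  have hn : Module.finrank ℝ E = n := by
    rw [Module.finrank_eq_card_basis e.toBasis]; simp
  have hs : (A : E →ₗ[ℝ] E).IsSymmetric := fun x y => hA x y
  exact ⟨hs.eigenvectorBasis hn, hs.eigenvalues hn, fun i => hs.apply_eigenvectorBasis hn i⟩

lemma trace_mono (e e' : OrthonormalBasis (Fin n) ℝ E) (A A' : E →L[ℝ] E) (θ θ' : Fin n → ℝ)
    (hA : ∀ i, A (e i) = θ i • e i) (hA' : ∀ i, A' (e' i) = θ' i • e' i)
    (hle : ∀ z, 0 ≤ ⟪z, (A' - A) z⟫) :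
    ∑ i, arctan (θ i) ≤ ∑ i, arctan (θ' i) := by
  set D := A' - A with hD
  have hsym : ∀ t : ℝ, ∀ x y, ⟪(A + t • D) x, y⟫ = ⟪x, (A + t • D) y⟫ := by
    intro t x y
    have h1 := symm_of_eig e A θ hA x y
    have h2 := symm_of_eig e' A' θ' hA' x y
    simp only [hD, _root_.add_apply, _root_.smul_apply,
      _root_.sub_apply, inner_add_left, inner_add_right, inner_sub_left,
      inner_sub_right, real_inner_smul_left, real_inner_smul_right, h1, h2]
  choose f ω hf using fun t : ℝ => exists_eig e (A + t • D) (hsym t)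
  have step : ∀ s t : ℝ, s ≤ t →
      ∑ i, arctan (ω s i) - (t - s) ^ 2 * (n * ‖D‖ ^ 2) ≤ ∑ i, arctan (ω t i) := by
    intro s t hst
    have k := klein (f s) (f t) _ _ (ω s) (ω t) (hf s) (hf t)
    have e1 : A + t • D - (A + s • D) = (t - s) • D := by
      rw [sub_smul]; abel
    rw [e1] at k
    have k2 := sum_norm_le (f s) ((t - s) • D)
    rw [norm_smul, mul_pow, Real.norm_eq_abs, sq_abs] at k2
    have k3 : 0 ≤ ∑ i, 1 / (1 + ω s i ^ 2) * ⟪f s i, ((t - s) • D) (f s i)⟫ := by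
      refine Finset.sum_nonneg fun i _ => mul_nonneg (by positivity) ?_
      rw [_root_.smul_apply, real_inner_smul_right]
      exact mul_nonneg (by linarith) (hle _)
    have := (abs_le.1 k).1
    nlinarith
  have h0 : ∑ i, arctan (ω 0 i) = ∑ i, arctan (θ i) := by
    have k := klein e (f 0) A _ θ (ω 0) hA (hf 0)
    simp at k
    linarith
  have h1 : ∑ i, arctan (ω 1 i) = ∑ i, arctan (θ' i) := by
    have k := klein e' (f 1) A' _ θ' (ω 1) hA' (hf 1)
    simp [hD] at k
    linarith
  rw [← h0, ← h1]
  set C := n * ‖D‖ ^ 2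
  have hN : ∀ N : ℕ, 0 < N → ∀ k : ℕ, ∑ i, arctan (ω 0 i) - k * ((1 / N : ℝ) ^ 2 * C)
      ≤ ∑ i, arctan (ω (k / N) i) := by
    intro N hN k
    induction k with
    | zero => simp
    | succ k ih =>
      have hN' : (0:ℝ) < N := by exact_mod_cast hN
      have := step (k / N) ((k + 1 : ℕ) / N) (by gcongr; simp)
      have e1 : (((k + 1 : ℕ) : ℝ) / N - k / N) = 1 / N := by push_cast; ring
      rw [e1] at this
      push_cast at this ⊢
      linarith
  refine le_of_forall_pos_sub_le fun ε hε => ?_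
  obtain ⟨N, hNC⟩ := exists_nat_gt (max (C / ε) 1)
  have hN1 : (1:ℝ) < N := lt_of_le_of_lt (le_max_right _ _) hNC
  have hN0 : (0:ℝ) < N := by linarith
  have := hN N (by exact_mod_cast hN0) N
  rw [div_self hN0.ne'] at this
  have hc : C / ε < N := lt_of_le_of_lt (le_max_left _ _) hNC
  rw [div_lt_iff₀ hε] at hc
  have : (N:ℝ) * ((1 / N) ^ 2 * C) ≤ ε := by
    have : (N:ℝ) * ((1 / N) ^ 2 * C) = C / N := by field_simp
    rw [this, div_le_iff₀ hN0]; linarith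
  linarith

lemma trace_ineq (e e' : OrthonormalBasis (Fin n) ℝ E) (A A' B : E →L[ℝ] E) (θ θ' : Fin n → ℝ)
    (hA : ∀ i, A (e i) = θ i • e i) (hA' : ∀ i, A' (e' i) = θ' i • e' i)
    (hB : ∀ x y, ⟪B x, y⟫ = ⟪x, B y⟫) (t : ℝ)
    (hle : ∀ z, ⟪z, A' z⟫ ≤ ⟪z, A z⟫ + t * ⟪z, B z⟫) :
    ∑ i, arctan (θ' i) ≤ ∑ i, arctan (θ i) + t * ∑ i, 1 / (1 + θ i ^ 2) * ⟪e i, B (e i)⟫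
      + t ^ 2 * (n * ‖B‖ ^ 2) := by
  have hsym : ∀ x y, ⟪(A + t • B) x, y⟫ = ⟪x, (A + t • B) y⟫ := by
    intro x y
    have h1 := symm_of_eig e A θ hA x y
    simp only [_root_.add_apply, _root_.smul_apply,
      inner_add_left, inner_add_right, real_inner_smul_left, real_inner_smul_right, h1, hB]
  obtain ⟨f, ω, hf⟩ := exists_eig e _ hsym
  have m := trace_mono e' f A' _ θ' ω hA' hf (by
    intro z
    have := hle z
    simp only [_root_.add_apply, _root_.smul_apply,
      _root_.sub_apply, inner_add_right, inner_sub_right, real_inner_smul_right]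
    linarith)
  have k := klein e f A _ θ ω hA hf
  rw [add_sub_cancel_left] at k
  have k2 := sum_norm_le e (t • B)
  rw [norm_smul, mul_pow, Real.norm_eq_abs, sq_abs] at k2
  have k3 : ∑ i, 1 / (1 + θ i ^ 2) * ⟪e i, (t • B) (e i)⟫
      = t * ∑ i, 1 / (1 + θ i ^ 2) * ⟪e i, B (e i)⟫ := by
    rw [Finset.mul_sum]
    refine Finset.sum_congr rfl fun i _ => ?_
    rw [_root_.smul_apply, real_inner_smul_right]; ring
  have := (abs_le.1 k).2
  nlinarith

end

section

lemma second_order_min (q q' : ℝ → ℝ) (c : ℝ) (hq : ∀ t, HasDerivAt q (q' t) t)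
    (hq' : HasDerivAt q' c 0) (hmin : ∀ t, q 0 ≤ q t) : q' 0 = 0 ∧ 0 ≤ c := by
  have h0 : q' 0 = 0 := by
    have : IsLocalMin q 0 := Filter.Eventually.of_forall hmin
    exact this.hasDerivAt_eq_zero (hq 0)
  refine ⟨h0, ?_⟩
  by_contra hc
  push Not at hc
  have h1 := (hasDerivAt_iff_tendsto_slope_zero.1 hq').eventually (gt_mem_nhds hc)
  simp only [zero_add, h0, sub_zero, smul_eq_mul] at h1
  have h2 : ∀ᶠ t in nhdsWithin (0:ℝ) (Set.Ioi 0), t⁻¹ * q' t < 0 :=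
    h1.filter_mono (nhdsWithin_mono _ (fun x hx => ne_of_gt hx))
  obtain ⟨r, hr, hr'⟩ := mem_nhdsGT_iff_exists_Ioo_subset.1 h2
  have hr0 : (0:ℝ) < r := hr
  obtain ⟨ξ, hξ, e⟩ := exists_hasDerivAt_eq_slope q q' (a := 0) (b := r / 2) (by linarith)
    (fun t _ => (hq t).continuousAt.continuousWithinAt) (fun t _ => hq t)
  have h3 : ξ⁻¹ * q' ξ < 0 := hr' ⟨hξ.1, by linarith [hξ.2]⟩
  have h4 : q' ξ < 0 := by
    by_contra h
    push Not at h
    have : 0 ≤ ξ⁻¹ * q' ξ := mul_nonneg (inv_nonneg.2 hξ.1.le) h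
    linarith
  rw [e, div_lt_iff₀ (by linarith)] at h4
  linarith [hmin (r / 2)]

variable {n : ℕ}

lemma grad_comp (Q : EuclideanSpace ℝ (Fin n) → ℝ) (g v : EuclideanSpace ℝ (Fin n))
    (γ : ℝ → EuclideanSpace ℝ (Fin n)) (t : ℝ)
    (hQ : HasGradientAt Q g (γ t)) (hγ : HasDerivAt γ v t) :
    HasDerivAt (fun t => Q (γ t)) ⟪g, v⟫ t := by
  have := hQ.hasFDerivAt.comp_hasDerivAt t hγ
  rw [InnerProductSpace.toDual_apply_apply] at this
  exact this

/-- second order condition in several variables -/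
lemma second_order_min' (Q : EuclideanSpace ℝ (Fin n) → ℝ)
    (D : EuclideanSpace ℝ (Fin n) → EuclideanSpace ℝ (Fin n))
    (B : EuclideanSpace ℝ (Fin n) →L[ℝ] EuclideanSpace ℝ (Fin n)) (x : EuclideanSpace ℝ (Fin n))
    (hQ : ∀ y, HasGradientAt Q (D y) y) (hD : HasFDerivAt D B x) (hmin : ∀ y, Q x ≤ Q y) :
    D x = 0 ∧ ∀ v, 0 ≤ ⟪v, B v⟫ := by
  have key : ∀ v, ⟪D x, v⟫ = 0 ∧ 0 ≤ ⟪v, B v⟫ := by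
    intro v
    have hl : ∀ t : ℝ, HasDerivAt (fun t : ℝ => x + t • v) v t := by
      intro t
      simpa using ((hasDerivAt_id t).smul_const v).const_add x
    have := second_order_min (fun t => Q (x + t • v)) (fun t => ⟪D (x + t • v), v⟫)
      ⟪B v, v⟫ ?_ ?_ (by intro t; simpa using hmin (x + t • v))
    · simp only [zero_smul, add_zero] at this
      exact ⟨this.1, by rw [real_inner_comm]; exact this.2⟩
    · intro t
      exact grad_comp Q _ v _ t (hQ (x + t • v)) (hl t)
    · have h1 : HasFDerivAt D B (x + (0:ℝ) • v) := by simpa using hD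
      have := (h1.comp_hasDerivAt (0:ℝ) (hl 0)).inner ℝ (hasDerivAt_const (0:ℝ) v)
      simpa using this
  exact ⟨by simpa using (key (D x)).1, fun v => (key v).2⟩

lemma scale_mvt (V : EuclideanSpace ℝ (Fin n) → ℝ)
    (G : EuclideanSpace ℝ (Fin n) → EuclideanSpace ℝ (Fin n))
    (hV : ∀ y, HasGradientAt V (G y) y) (x : EuclideanSpace ℝ (Fin n)) (s : ℝ) (hs : 1 < s) :
    ∃ σ ∈ Set.Ioo 1 s, (V (s • x) / s ^ 2 - V x) / (2 * (s - 1))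
      = (-V (σ • x) + (1/2) * ⟪σ • x, G (σ • x)⟫) / σ ^ 3 := by
  have hd : ∀ σ : ℝ, 0 < σ → HasDerivAt (fun σ : ℝ => V (σ • x) / σ ^ 2)
      (2 * ((-V (σ • x) + (1/2) * ⟪σ • x, G (σ • x)⟫) / σ ^ 3)) σ := by
    intro σ hσ
    have h1 : HasDerivAt (fun t : ℝ => t • x) x σ := by
      simpa using (hasDerivAt_id σ).smul_const x
    have h2 := grad_comp V _ x _ σ (hV (σ • x)) h1
    have h3 := h2.div (hasDerivAt_pow 2 σ) (by positivity)
    refine HasDerivAt.congr_deriv h3 ?_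
    simp only [real_inner_smul_left]
    rw [real_inner_comm x]
    field_simp
    push_cast
    ring
  obtain ⟨σ, hσ, e⟩ := exists_hasDerivAt_eq_slope (fun σ : ℝ => V (σ • x) / σ ^ 2) _ hs
    (fun t ht => (hd t (by linarith [ht.1])).continuousAt.continuousWithinAt)
    (fun t ht => hd t (by linarith [ht.1]))
  refine ⟨σ, hσ, ?_⟩
  have : s - 1 ≠ 0 := by linarith
  simp only [one_smul, one_pow, div_one] at e
  rw [mul_comm 2, ← div_div, ← e]
  ring

lemma scale_unif (Φ : EuclideanSpace ℝ (Fin n) → ℝ) (hΦ : Continuous Φ) (R τ : ℝ) (hτ : 0 < τ) :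
    ∃ T0 > 0, ∀ σ ∈ Set.Icc (1:ℝ) (1 + T0), ∀ x, ‖x‖ ≤ R → |Φ (σ • x) / σ ^ 3 - Φ x| ≤ τ := by
  have hc : ContinuousOn (fun p : ℝ × EuclideanSpace ℝ (Fin n) => Φ (p.1 • p.2) / p.1 ^ 3)
      (Set.Icc (1:ℝ) 2 ×ˢ Metric.closedBall 0 R) := by
    apply ContinuousOn.div
    · exact (hΦ.comp (continuous_fst.smul continuous_snd)).continuousOn
    · fun_prop
    · rintro ⟨t, x⟩ ⟨ht, _⟩
      have : 1 ≤ t := ht.1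
      positivity
  have huc := (isCompact_Icc.prod (isCompact_closedBall 0 R)).uniformContinuousOn_of_continuous hc
  obtain ⟨d, hd, h⟩ := Metric.uniformContinuousOn_iff_le.1 huc τ hτ
  refine ⟨min d 1, lt_min hd one_pos, fun σ hσ x hx => ?_⟩
  have h2 : σ ≤ 1 + d := hσ.2.trans (by gcongr; exact min_le_left _ _)
  have h3 : σ ≤ 2 := hσ.2.trans (by linarith [min_le_right d 1])
  have := h (σ, x) ⟨⟨hσ.1, h3⟩, by simpa using hx⟩ (1, x) ⟨⟨le_refl _, by norm_num⟩, by simpa using hx⟩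
    (by rw [dist_prod_same_right, Real.dist_eq, abs_of_nonneg (by linarith [hσ.1])]; linarith)
  simpa [Real.dist_eq] using this

end

section
variable {n : ℕ}

set_option maxHeartbeats 1000000 in
lemma max_principle (V : EuclideanSpace ℝ (Fin n) → ℝ)
    (G : EuclideanSpace ℝ (Fin n) → EuclideanSpace ℝ (Fin n))
    (A : EuclideanSpace ℝ (Fin n) → EuclideanSpace ℝ (Fin n) →L[ℝ] EuclideanSpace ℝ (Fin n))
    (hV : ∀ y, HasGradientAt V (G y) y) (hG : ∀ y, HasFDerivAt G (A y) y) (K M : ℝ) (hK : 0 < K)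
    (Φ : EuclideanSpace ℝ (Fin n) → ℝ) (hΦdef : ∀ y, Φ y = -V y + (1/2) * ⟪y, G y⟫)
    (hspec : ∀ y, ∃ (e : OrthonormalBasis (Fin n) ℝ (EuclideanSpace ℝ (Fin n))) (θ : Fin n → ℝ),
      (∀ i, A y (e i) = θ i • e i) ∧ (∀ i, |θ i| ≤ M) ∧ Φ y = K * ∑ i, arctan (θ i))
    (Ψ : EuclideanSpace ℝ (Fin n) → ℝ)
    (g : EuclideanSpace ℝ (Fin n) → EuclideanSpace ℝ (Fin n))
    (B : EuclideanSpace ℝ (Fin n) → EuclideanSpace ℝ (Fin n) →L[ℝ] EuclideanSpace ℝ (Fin n))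
    (hΨ : ∀ y, HasGradientAt Ψ (g y) y) (hg : ∀ y, HasFDerivAt g (B y) y)
    (hBc : Continuous B) (hBs : ∀ y v w, ⟪B y v, w⟫ = ⟪v, B y w⟫)
    (hco : Tendsto Ψ (cocompact _) atTop) (κ : ℝ) (hκ : 0 < κ)
    (N : Set (EuclideanSpace ℝ (Fin n))) (m : ℝ) (x0 : EuclideanSpace ℝ (Fin n))
    (hN : ∀ x ∈ N, Φ x - Ψ x ≤ m) (hx0 : m < Φ x0 - Ψ x0)
    (hL : ∀ x, x ∉ N → ∀ (e : OrthonormalBasis (Fin n) ℝ (EuclideanSpace ℝ (Fin n)))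
      (θ : Fin n → ℝ), (∀ i, |θ i| ≤ M) →
      K * ∑ i, 1 / (1 + θ i ^ 2) * ⟪e i, B x (e i)⟫ ≤ -κ + (1/2) * ⟪x, g x⟫) : False := by
  have hVc : Continuous V := continuous_iff_continuousAt.2 fun y => (hV y).continuousAt
  have hGc : Continuous G := continuous_iff_continuousAt.2 fun y => (hG y).continuousAt
  have hgc : Continuous g := continuous_iff_continuousAt.2 fun y => (hg y).continuousAt
  have hΨc : Continuous Ψ := continuous_iff_continuousAt.2 fun y => (hΨ y).continuousAt
  have hΦc : Continuous Φ := by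
    have : Φ = fun y => -V y + (1/2) * ⟪y, G y⟫ := funext hΦdef
    rw [this]; fun_prop
  obtain ⟨C0, hC0n, hC0⟩ : ∃ C0, 0 ≤ C0 ∧ ∀ y, |Φ y| ≤ C0 := by
    refine ⟨K * (n * (π / 2)), by positivity, fun y => ?_⟩
    obtain ⟨e, θ, -, -, h⟩ := hspec y
    rw [h, abs_mul, abs_of_pos hK]
    gcongr
    refine (Finset.abs_sum_le_sum_abs _ _).trans ?_
    calc ∑ i, |arctan (θ i)| ≤ ∑ i : Fin n, π / 2 := Finset.sum_le_sum fun i _ =>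
          abs_le.2 ⟨(neg_pi_div_two_lt_arctan _).le, (arctan_lt_pi_div_two _).le⟩
      _ = _ := by simp
  -- a radius containing all relevant maximum points
  obtain ⟨R, hR⟩ : ∃ R, ∀ x, Ψ x ≤ Ψ x0 + 2 * C0 → ‖x‖ ≤ R := by
    have h1 := hco.eventually (eventually_gt_atTop (Ψ x0 + 2 * C0))
    rw [Filter.Eventually, mem_cocompact] at h1
    obtain ⟨t, ht, hts⟩ := h1
    obtain ⟨R, hR⟩ := ht.isBounded.subset_closedBall 0
    refine ⟨R, fun x hx => ?_⟩
    by_contra hcon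
    have : x ∈ tᶜ := fun hxt => hcon (by simpa using hR hxt)
    have := hts this
    simp only [Set.mem_ofPred_eq] at this
    linarith
  obtain ⟨P, hP⟩ : ∃ P, ∀ x, ‖x‖ ≤ R → |⟪x, g x⟫| ≤ P ∧ ‖B x‖ ≤ P := by
    have hc1 : Continuous fun x => ⟪x, g x⟫ := by fun_prop
    obtain ⟨P1, h1⟩ := (isCompact_closedBall (0 : EuclideanSpace ℝ (Fin n)) R).exists_bound_of_continuousOn
      hc1.continuousOn
    obtain ⟨P2, h2⟩ := (isCompact_closedBall (0 : EuclideanSpace ℝ (Fin n)) R).exists_bound_of_continuousOn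
      hBc.continuousOn
    refine ⟨max P1 P2, fun x hx => ⟨?_, ?_⟩⟩
    · exact (h1 x (by simpa using hx)).trans (le_max_left _ _)
    · exact (h2 x (by simpa using hx)).trans (le_max_right _ _)
  have hx0R : ‖x0‖ ≤ R := hR x0 (by linarith)
  have hP0 : 0 ≤ P := (abs_nonneg _).trans (hP x0 hx0R).1
  set τ := min (κ / 16) ((Φ x0 - Ψ x0 - m) / 4) with hτdef
  have hτ : 0 < τ := lt_min (by positivity) (by linarith)
  have hτ1 : τ ≤ κ / 16 := min_le_left _ _
  have hτ2 : τ ≤ (Φ x0 - Ψ x0 - m) / 4 := min_le_right _ _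
  obtain ⟨T0, hT0, hunif⟩ := scale_unif Φ hΦc R τ hτ
  set Z := 4 * n * K * P ^ 2 + 3 * P + 5 * C0 + 1 with hZ
  have hZ0 : 0 < Z := by positivity
  obtain ⟨T, hT, hTT0, hT1, hTZ⟩ : ∃ T : ℝ, 0 < T ∧ T ≤ T0 ∧ T ≤ 1 ∧ T * Z ≤ κ := by
    refine ⟨min T0 (min 1 (κ / Z)), by positivity, min_le_left _ _,
      (min_le_right _ _).trans (min_le_left _ _), ?_⟩
    calc _ ≤ κ / Z * Z := by
          gcongr; exact (min_le_right _ _).trans (min_le_right _ _)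
      _ = κ := by field_simp
  set s := 1 + T with hs
  have hs1 : 1 < s := by linarith
  have hs0 : 0 < s := by linarith
  set gs : EuclideanSpace ℝ (Fin n) → ℝ := fun x => (V (s • x) / s ^ 2 - V x) / (2 * (s - 1))
    with hgs
  have hgsb : ∀ x, |gs x| ≤ C0 := by
    intro x
    obtain ⟨σ, hσ, e⟩ := scale_mvt V G hV x s hs1
    have h1 : (1:ℝ) ≤ σ ^ 3 := one_le_pow₀ hσ.1.le
    simp only [hgs]
    rw [e, ← hΦdef, abs_div, abs_of_pos (show 0 < σ ^ 3 by linarith)]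
    exact (div_le_self (abs_nonneg _) h1).trans (hC0 _)
  have hgsu : ∀ x, ‖x‖ ≤ R → |gs x - Φ x| ≤ τ := by
    intro x hx
    obtain ⟨σ, hσ, e⟩ := scale_mvt V G hV x s hs1
    simp only [hgs]
    rw [e, ← hΦdef]
    exact hunif σ ⟨hσ.1.le, by linarith [hσ.2]⟩ x hx
  -- minimum of Ψ - gs
  obtain ⟨x, hx⟩ : ∃ x, ∀ y, Ψ x - gs x ≤ Ψ y - gs y := by
    refine Continuous.exists_forall_le' (f := fun y => Ψ y - gs y) (by fun_prop) x0 ?_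
    filter_upwards [hco.eventually (eventually_gt_atTop (Ψ x0 + 2 * C0))] with y hy
    have := (abs_le.1 (hgsb y)).2
    have := (abs_le.1 (hgsb x0)).1
    linarith
  have hxR : ‖x‖ ≤ R := by
    apply hR
    have := hx x0
    have := (abs_le.1 (hgsb x)).2
    have := (abs_le.1 (hgsb x0)).1
    linarith
  have hu := abs_le.1 (hgsu x hxR)
  have hu0 := abs_le.1 (hgsu x0 hx0R)
  have hxN : x ∉ N := by
    intro hxN
    have := hN x hxN
    have := hx x0
    linarith
  -- derivatives
  have hT' : s - 1 = T := by simp [hs]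
  have hgrad : ∀ y, HasGradientAt (fun y => Ψ y - gs y)
      (g y - (1 / (2 * T)) • (s⁻¹ • G (s • y) - G y)) y := by
    intro y
    rw [hasGradientAt_iff_hasFDerivAt]
    have h1 : HasFDerivAt (fun y : EuclideanSpace ℝ (Fin n) => s • y)
      (s • ContinuousLinearMap.id ℝ _) y := (hasFDerivAt_id y).const_smul s
    have h2 := (hV (s • y)).hasFDerivAt.comp y h1
    have h3 := (hΨ y).hasFDerivAt.sub (((h2.mul_const (s ^ 2)⁻¹).sub (hV y).hasFDerivAt).mul_const
      (1 / (2 * T)))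
    refine (h3.congr_of_eventuallyEq (Eventually.of_forall fun z => ?_)).congr_fderiv ?_
    · simp only [hgs, hT', Pi.sub_apply, Function.comp]
      field_simp
    · ext v
      simp
      field_simp
      simp
  have hhess : HasFDerivAt (fun y => g y - (1 / (2 * T)) • (s⁻¹ • G (s • y) - G y))
      (B x - (1 / (2 * T)) • (A (s • x) - A x)) x := by
    have h1 : HasFDerivAt (fun y : EuclideanSpace ℝ (Fin n) => s • y)
      (s • ContinuousLinearMap.id ℝ _) x := (hasFDerivAt_id x).const_smul s
    have h2 := (hG (s • x)).comp x h1
    have h3 := (hg x).sub (((h2.const_smul s⁻¹).sub (hG x)).const_smul (1 / (2 * T)))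
    refine h3.congr_fderiv ?_
    ext v : 1
    simp [smul_smul, hs0.ne']
  obtain ⟨hD, hH⟩ := second_order_min' _ _ _ x hgrad hhess hx
  obtain ⟨e, θ, hAe, hθ, hΦx⟩ := hspec x
  obtain ⟨e', θ', hAe', hθ', hΦx'⟩ := hspec (s • x)
  have htr := trace_ineq e e' (A x) (A (s • x)) (B x) θ θ' hAe hAe' (hBs x) (2 * T) (by
    intro z
    have := hH z
    simp only [_root_.sub_apply, _root_.smul_apply, inner_sub_right, real_inner_smul_right] at this
    have e1 : 1 / (2 * T) * (⟪z, A (s • x) z⟫ - ⟪z, A x z⟫) * (2 * T)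
      = (⟪z, A (s • x) z⟫ - ⟪z, A x z⟫) := by field_simp
    nlinarith)
  have hLx := hL x hxN e θ hθ
  set X := ⟪x, g x⟫ with hX
  have hBP := (hP x hxR).2
  have hXP := abs_le.1 (hP x hxR).1
  have hC := abs_le.1 (hC0 x)
  -- identity for Φ (s x)
  have hGs : ⟪x, G (s • x)⟫ = s * (⟪x, G x⟫ + 2 * T * X) := by
    have h1 : ⟪x, g x - (1 / (2 * T)) • (s⁻¹ • G (s • x) - G x)⟫ = 0 := by rw [hD, inner_zero_right]
    simp only [inner_sub_right, real_inner_smul_right] at h1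
    rw [← hX] at h1
    field_simp at h1
    linarith
  have hVs : V (s • x) = s ^ 2 * (V x + 2 * T * gs x) := by
    simp only [hgs, hT']
    field_simp
    ring
  have hid : Φ (s • x) = s ^ 2 * (Φ x + T * (-2 * gs x + X)) := by
    rw [hΦdef (s • x), hΦdef x, real_inner_smul_left, hGs, hVs]
    ring
  have hmain : Φ (s • x) ≤ Φ x + 2 * T * (-κ + (1/2) * X) + 4 * T ^ 2 * (n * K * P ^ 2) := by
    rw [hΦx', hΦx]
    have h1 : ‖B x‖ ^ 2 ≤ P ^ 2 := by gcongr
    calc K * ∑ i, arctan (θ' i) ≤ K * (∑ i, arctan (θ i) + 2 * T * ∑ i, 1 / (1 + θ i ^ 2) * ⟪e i, B x (e i)⟫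
      + (2 * T) ^ 2 * (n * P ^ 2)) := by
          gcongr
          refine htr.trans ?_
          gcongr
      _ = K * ∑ i, arctan (θ i) + 2 * T * (K * ∑ i, 1 / (1 + θ i ^ 2) * ⟪e i, B x (e i)⟫)
        + 4 * T ^ 2 * (n * K * P ^ 2) := by ring
      _ ≤ _ := by gcongr
  rw [hid] at hmain
  have hdiv : (s + 1) * Φ x - 2 * s ^ 2 * gs x + s ^ 2 * X
      ≤ -2 * κ + X + 4 * T * (n * K * P ^ 2) := by
    refine le_of_mul_le_mul_left ?_ hT
    have e3 : T * ((s + 1) * Φ x - 2 * s ^ 2 * gs x + s ^ 2 * X)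
        = s ^ 2 * (Φ x + T * (-2 * gs x + X)) - Φ x := by rw [hs]; ring
    rw [e3]
    linarith
  have e2 : (s + 1) * Φ x - 2 * s ^ 2 * gs x + s ^ 2 * X =
    X + (2 * T + T ^ 2) * X - (3 * T + 2 * T ^ 2) * Φ x - 2 * s ^ 2 * (gs x - Φ x) := by
    rw [hs]; ring
  rw [e2] at hdiv
  have b1 : -(3 * T * P) ≤ (2 * T + T ^ 2) * X := by
    have : T ^ 2 ≤ T := by nlinarith
    have h5 : 2 * T + T ^ 2 ≤ 3 * T := by linarith
    have h6 : (2 * T + T ^ 2) * (-P) ≤ (2 * T + T ^ 2) * X := by gcongr; exact hXP.1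
    nlinarith
  have b2 : (3 * T + 2 * T ^ 2) * Φ x ≤ 5 * T * C0 := by
    have : T ^ 2 ≤ T := by nlinarith
    calc _ ≤ (3 * T + 2 * T ^ 2) * C0 := by gcongr; exact hC.2
      _ ≤ _ := by gcongr; linarith
  have b3 : 2 * s ^ 2 * (gs x - Φ x) ≤ κ / 2 := by
    have : s ^ 2 ≤ 4 := by rw [hs]; nlinarith
    calc _ ≤ 2 * s ^ 2 * τ := by gcongr; exact hu.2
      _ ≤ 2 * 4 * (κ / 16) := by gcongr
      _ = _ := by ring
  rw [hZ] at hTZ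
  nlinarith

end

section
variable {n : ℕ}

lemma barrier_deriv (ε δ α : ℝ) (y1 : EuclideanSpace ℝ (Fin n)) (x : EuclideanSpace ℝ (Fin n)) :
    HasGradientAt (fun x : EuclideanSpace ℝ (Fin n) => ε * ‖x‖ ^ 2 - δ * exp (-α * ‖x - y1‖ ^ 2))
      ((2 * ε) • x + (2 * α * δ * exp (-α * ‖x - y1‖ ^ 2)) • (x - y1)) x := by
  rw [hasGradientAt_iff_hasFDerivAt]
  have h1 : HasFDerivAt (fun x : EuclideanSpace ℝ (Fin n) => ‖x‖ ^ 2) (2 • innerSL ℝ x) x :=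
    (hasStrictFDerivAt_norm_sq x).hasFDerivAt
  have h2 : HasFDerivAt (fun x : EuclideanSpace ℝ (Fin n) => ‖x - y1‖ ^ 2)
      (2 • innerSL ℝ (x - y1)) x := by
    have := (hasStrictFDerivAt_norm_sq (x - y1)).hasFDerivAt.comp x ((hasFDerivAt_id x).sub_const y1)
    exact this
  have h3 := (h1.const_mul ε).sub (((h2.const_mul (-α)).exp).const_mul δ)
  refine h3.congr_fderiv ?_
  ext v
  simp
  ring

def barB (ε δ α : ℝ) (y1 : EuclideanSpace ℝ (Fin n)) (x : EuclideanSpace ℝ (Fin n)) :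
    EuclideanSpace ℝ (Fin n) →L[ℝ] EuclideanSpace ℝ (Fin n) :=
  (2 * ε + 2 * α * δ * exp (-α * ‖x - y1‖ ^ 2)) • ContinuousLinearMap.id ℝ _ -
    (4 * α ^ 2 * δ * exp (-α * ‖x - y1‖ ^ 2)) • (innerSL ℝ (x - y1)).smulRight (x - y1)

lemma barB_apply (ε δ α : ℝ) (y1 x v : EuclideanSpace ℝ (Fin n)) :
    barB ε δ α y1 x v = (2 * ε + 2 * α * δ * exp (-α * ‖x - y1‖ ^ 2)) • v -
    (4 * α ^ 2 * δ * exp (-α * ‖x - y1‖ ^ 2)) • ⟪x - y1, v⟫ • (x - y1) := by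
  simp only [barB, _root_.sub_apply, _root_.smul_apply, ContinuousLinearMap.smulRight_apply,
    ContinuousLinearMap.id_apply, innerSL_apply_apply]

lemma barrier_deriv2 (ε δ α : ℝ) (y1 : EuclideanSpace ℝ (Fin n)) (x : EuclideanSpace ℝ (Fin n)) :
    HasFDerivAt (fun x : EuclideanSpace ℝ (Fin n) =>
      ((2 * ε) • x + (2 * α * δ * exp (-α * ‖x - y1‖ ^ 2)) • (x - y1)))
      (barB ε δ α y1 x) x := by
  have h2 : HasFDerivAt (fun x : EuclideanSpace ℝ (Fin n) => ‖x - y1‖ ^ 2)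
      (2 • innerSL ℝ (x - y1)) x := by
    have := (hasStrictFDerivAt_norm_sq (x - y1)).hasFDerivAt.comp x ((hasFDerivAt_id x).sub_const y1)
    exact this
  have h3 := ((hasFDerivAt_id x).const_smul (2 * ε)).add
    ((((h2.const_mul (-α)).exp).const_mul (2 * α * δ)).smul ((hasFDerivAt_id x).sub_const y1))
  refine h3.congr_fderiv ?_
  ext1 v
  rw [barB_apply]
  simp only [_root_.add_apply, _root_.smul_apply, ContinuousLinearMap.smulRight_apply,
    ContinuousLinearMap.id_apply, id_eq, innerSL_apply_apply, smul_eq_mul, nsmul_eq_mul]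
  module

lemma barB_cont (ε δ α : ℝ) (y1 : EuclideanSpace ℝ (Fin n)) : Continuous (barB ε δ α y1) := by
  unfold barB
  apply Continuous.sub
  · fun_prop
  · have h : Continuous fun x : EuclideanSpace ℝ (Fin n) => x - y1 := by fun_prop
    have h2 : Continuous fun x : EuclideanSpace ℝ (Fin n) =>
        4 * α ^ 2 * δ * exp (-α * ‖x - y1‖ ^ 2) := by fun_prop
    have h3 : Continuous fun x : EuclideanSpace ℝ (Fin n) =>
        (innerSL ℝ (x - y1)).smulRight (x - y1) := by
      have h4 := ((ContinuousLinearMap.smulRightL ℝ (EuclideanSpace ℝ (Fin n))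
        (EuclideanSpace ℝ (Fin n))).continuous.comp
        ((innerSL ℝ).continuous.comp h)).clm_apply h
      exact h4
    exact h2.smul h3

set_option maxHeartbeats 2000000 in
lemma liouville (V : EuclideanSpace ℝ (Fin n) → ℝ)
    (G : EuclideanSpace ℝ (Fin n) → EuclideanSpace ℝ (Fin n))
    (A : EuclideanSpace ℝ (Fin n) → EuclideanSpace ℝ (Fin n) →L[ℝ] EuclideanSpace ℝ (Fin n))
    (hV : ∀ y, HasGradientAt V (G y) y) (hG : ∀ y, HasFDerivAt G (A y) y) (K M : ℝ) (hK : 0 < K)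
    (Φ : EuclideanSpace ℝ (Fin n) → ℝ) (hΦdef : ∀ y, Φ y = -V y + (1/2) * ⟪y, G y⟫)
    (hspec : ∀ y, ∃ (e : OrthonormalBasis (Fin n) ℝ (EuclideanSpace ℝ (Fin n))) (θ : Fin n → ℝ),
      (∀ i, A y (e i) = θ i • e i) ∧ (∀ i, |θ i| ≤ M) ∧ Φ y = K * ∑ i, arctan (θ i))
    (y1 x0 : EuclideanSpace ℝ (Fin n)) : Φ x0 ≤ Φ y1 := by
  by_contra hlt
  push Not at hlt
  have hVc : Continuous V := continuous_iff_continuousAt.2 fun y => (hV y).continuousAt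
  have hGc : Continuous G := continuous_iff_continuousAt.2 fun y => (hG y).continuousAt
  have hΦc : Continuous Φ := by
    have : Φ = fun y => -V y + (1/2) * ⟪y, G y⟫ := funext hΦdef
    rw [this]; fun_prop
  set η := Φ x0 - Φ y1 with hη
  have hη0 : 0 < η := by linarith
  obtain ⟨r, hr, hball⟩ : ∃ r > 0, ∀ x ∈ Metric.ball y1 r, Φ x < Φ x0 - η / 2 := by
    have := hΦc.continuousAt.eventually (gt_mem_nhds (show Φ y1 < Φ x0 - η / 2 by linarith))
    exact Metric.eventually_nhds_iff_ball.1 this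
  set l := 1 / (1 + M ^ 2) with hl
  have hl0 : 0 < l := by positivity
  set α := ‖y1‖ / (2 * K * l * r) + n / (l * r ^ 2) + 1 with hα
  have hα0 : 0 < α := by positivity
  have hα1 : ‖y1‖ ≤ 2 * α * K * l * r := by
    have : ‖y1‖ / (2 * K * l * r) ≤ α := by
      have : (0:ℝ) ≤ n / (l * r ^ 2) := by positivity
      linarith
    rw [div_le_iff₀ (by positivity)] at this
    linarith
  have hα2 : n ≤ α * l * r ^ 2 := by
    have : n / (l * r ^ 2) ≤ α := by
      have : 0 ≤ ‖y1‖ / (2 * K * l * r) := by positivity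
      linarith
    rw [div_le_iff₀ (by positivity)] at this
    linarith
  set δ := η / 8 with hδ
  have hδ0 : 0 < δ := by positivity
  set ρ := sqrt (2 * K * n + 1) with hρ
  have hρ2 : ρ ^ 2 = 2 * K * n + 1 := Real.sq_sqrt (by positivity)
  have hρ0 : 0 ≤ ρ := Real.sqrt_nonneg _
  set k1 := exp (-α * (ρ + ‖y1‖) ^ 2) with hk1
  have hk0 : 0 < k1 := exp_pos _
  obtain ⟨ε, hε, hε1, hε2⟩ : ∃ ε : ℝ, 0 < ε ∧ ε * ‖x0‖ ^ 2 ≤ η / 8 ∧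
      ε * (2 * K * n + 1) ≤ α * δ * k1 * r ^ 2 := by
    refine ⟨min (η / 8 / (‖x0‖ ^ 2 + 1)) (α * δ * k1 * r ^ 2 / (2 * K * n + 1)),
      by positivity, ?_, ?_⟩
    · calc _ ≤ η / 8 / (‖x0‖ ^ 2 + 1) * (‖x0‖ ^ 2 + 1) := by
            gcongr
            · exact min_le_left _ _
            · linarith
        _ = _ := by field_simp
    · calc _ ≤ (α * δ * k1 * r ^ 2 / (2 * K * n + 1)) * (2 * K * n + 1) := by
            gcongr
            · exact min_le_right _ _
        _ = _ := by field_simp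
  refine max_principle V G A hV hG K M hK Φ hΦdef hspec _ _ _ (barrier_deriv ε δ α y1)
    (barrier_deriv2 ε δ α y1) (barB_cont ε δ α y1) ?_ ?_ ε hε (Metric.ball y1 r)
    (Φ x0 - 3 * η / 8) x0 ?_ ?_ ?_
  · intro y v w
    simp only [barB_apply, inner_sub_left, inner_sub_right, real_inner_smul_left,
      real_inner_smul_right]
    rw [real_inner_comm v y, real_inner_comm v y1]
    ring
  · have h1 : Tendsto (fun x : EuclideanSpace ℝ (Fin n) => ε * ‖x‖ ^ 2 - δ) (cocompact _) atTop := by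
      apply tendsto_atTop_add_const_right
      exact ((tendsto_pow_atTop two_ne_zero).comp tendsto_norm_cocompact_atTop).const_mul_atTop hε
    refine tendsto_atTop_mono (fun x => ?_) h1
    have : exp (-α * ‖x - y1‖ ^ 2) ≤ 1 := exp_le_one_iff.2 (by
      have : 0 ≤ α * ‖x - y1‖ ^ 2 := by positivity
      linarith)
    nlinarith
  · intro x hx
    have h1 := hball x hx
    have : exp (-α * ‖x - y1‖ ^ 2) ≤ 1 := exp_le_one_iff.2 (by
      have : 0 ≤ α * ‖x - y1‖ ^ 2 := by positivity
      linarith)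
    have h2 : 0 ≤ ε * ‖x‖ ^ 2 := by positivity
    have h3 : δ * exp (-α * ‖x - y1‖ ^ 2) ≤ δ * 1 := by gcongr
    linarith
  · have h2 : 0 ≤ δ * exp (-α * ‖x0 - y1‖ ^ 2) := by positivity
    linarith
  · intro x hx e θ hθ
    set z := x - y1 with hz
    set p := exp (-α * ‖z‖ ^ 2) with hp
    have hp0 : 0 < p := exp_pos _
    have hzr : r ≤ ‖z‖ := by
      rw [Metric.mem_ball, dist_eq_norm] at hx
      push Not at hx
      exact hx
    have hin : ∀ i, ⟪e i, barB ε δ α y1 x (e i)⟫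
        = (2 * ε + 2 * α * δ * p) - 4 * α ^ 2 * δ * p * ⟪z, e i⟫ ^ 2 := by
      intro i
      rw [barB_apply, inner_sub_right, real_inner_smul_right, real_inner_smul_right,
        real_inner_smul_right, real_inner_self_eq_norm_sq, e.orthonormal.1 i, real_inner_comm z]
      ring
    have hterm : ∀ i, 1 / (1 + θ i ^ 2) * ⟪e i, barB ε δ α y1 x (e i)⟫
        ≤ (2 * ε + 2 * α * δ * p) - 4 * α ^ 2 * δ * p * l * ⟪z, e i⟫ ^ 2 := by
      intro i
      rw [hin]
      have hθ2 : θ i ^ 2 ≤ M ^ 2 := sq_le_sq' (abs_le.1 (hθ i)).1 (abs_le.1 (hθ i)).2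
      have k1 : 1 / (1 + θ i ^ 2) ≤ 1 := by
        rw [div_le_one (by positivity)]; nlinarith [sq_nonneg (θ i)]
      have k2 : l ≤ 1 / (1 + θ i ^ 2) := by
        rw [hl]; gcongr
      have c1 : 0 ≤ 2 * ε + 2 * α * δ * p := by positivity
      have c2 : 0 ≤ 4 * α ^ 2 * δ * p * ⟪z, e i⟫ ^ 2 := by positivity
      have d1 := mul_le_mul_of_nonneg_right k1 c1
      have d2 := mul_le_mul_of_nonneg_right k2 c2
      rw [mul_sub]
      have d3 : 4 * α ^ 2 * δ * p * l * ⟪z, e i⟫ ^ 2 = l * (4 * α ^ 2 * δ * p * ⟪z, e i⟫ ^ 2) := by ring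
      rw [d3]
      rw [one_mul] at d1
      exact sub_le_sub d1 d2
    have hsum : ∑ i, 1 / (1 + θ i ^ 2) * ⟪e i, barB ε δ α y1 x (e i)⟫
        ≤ n * (2 * ε + 2 * α * δ * p) - 4 * α ^ 2 * δ * p * l * ‖z‖ ^ 2 := by
      refine (Finset.sum_le_sum fun i _ => hterm i).trans ?_
      rw [Finset.sum_sub_distrib, ← Finset.mul_sum, e.sum_sq_inner_left]
      rw [Finset.sum_const, Finset.card_univ, Fintype.card_fin, nsmul_eq_mul]
    have hxg : ⟪x, (2 * ε) • x + (2 * α * δ * p) • z⟫ = 2 * ε * ‖x‖ ^ 2 +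
        2 * α * δ * p * ⟪x, z⟫ := by
      rw [inner_add_right, real_inner_smul_right, real_inner_smul_right, real_inner_self_eq_norm_sq]
    rw [hxg]
    have hxz : ‖z‖ ^ 2 - ‖y1‖ * ‖z‖ ≤ ⟪x, z⟫ := by
      have e1 : x = z + y1 := by rw [hz]; abel
      have e2 : ⟪x, z⟫ = ‖z‖ ^ 2 + ⟪y1, z⟫ := by
        conv_lhs => rw [e1]
        rw [inner_add_left, real_inner_self_eq_norm_sq]
      have := (abs_le.1 (abs_real_inner_le_norm y1 z)).1
      linarith
    have hbr : 2 * K * n - 4 * α * K * l * ‖z‖ ^ 2 - ⟪x, z⟫ ≤ -r ^ 2 := by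
      have h1 : ‖y1‖ * ‖z‖ ≤ 2 * α * K * l * ‖z‖ ^ 2 := by
        calc _ ≤ (2 * α * K * l * r) * ‖z‖ := by gcongr
          _ ≤ (2 * α * K * l * ‖z‖) * ‖z‖ := by gcongr
          _ = _ := by ring
      have h2 : r ^ 2 ≤ ‖z‖ ^ 2 := by gcongr
      have h3 : K * n ≤ K * (α * l * ‖z‖ ^ 2) := by
        gcongr
        exact hα2.trans (by gcongr)
      have h3' : K * (α * l * ‖z‖ ^ 2) = α * K * l * ‖z‖ ^ 2 := by ring
      rw [h3'] at h3
      linarith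
    have hfin : ε * (2 * K * n + 1) - ε * ‖x‖ ^ 2 - α * δ * p * r ^ 2 ≤ 0 := by
      by_cases hxρ : ρ ≤ ‖x‖
      · have h1 : ρ ^ 2 ≤ ‖x‖ ^ 2 := by gcongr
        rw [hρ2] at h1
        have : 0 ≤ α * δ * p * r ^ 2 := by positivity
        have := mul_le_mul_of_nonneg_left h1 hε.le
        linarith
      · push Not at hxρ
        have h1 : ‖z‖ ≤ ρ + ‖y1‖ := (norm_sub_le _ _).trans (by linarith)
        have h2 : k1 ≤ p := by
          rw [hk1, hp]
          apply exp_le_exp.2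
          have : α * ‖z‖ ^ 2 ≤ α * (ρ + ‖y1‖) ^ 2 := by gcongr
          linarith
        have h3 : α * δ * k1 * r ^ 2 ≤ α * δ * p * r ^ 2 := by gcongr
        have : 0 ≤ ε * ‖x‖ ^ 2 := by positivity
        linarith
    calc _ ≤ K * (n * (2 * ε + 2 * α * δ * p) - 4 * α ^ 2 * δ * p * l * ‖z‖ ^ 2) := by gcongr
      _ = -ε + ε * (2 * K * n + 1) + α * δ * p * (2 * K * n - 4 * α * K * l * ‖z‖ ^ 2 - ⟪x, z⟫)
          + α * δ * p * ⟪x, z⟫ := by ring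
      _ ≤ -ε + ε * (2 * K * n + 1) + α * δ * p * (-r ^ 2) + α * δ * p * ⟪x, z⟫ := by gcongr
      _ ≤ _ := by linarith

lemma homog (V : EuclideanSpace ℝ (Fin n) → ℝ)
    (G : EuclideanSpace ℝ (Fin n) → EuclideanSpace ℝ (Fin n))
    (A : EuclideanSpace ℝ (Fin n) →L[ℝ] EuclideanSpace ℝ (Fin n))
    (hV : ∀ y, HasGradientAt V (G y) y) (hG : HasFDerivAt G A 0) (c : ℝ)
    (hc : ∀ y, -V y + (1/2) * ⟪y, G y⟫ = c) (y : EuclideanSpace ℝ (Fin n)) : G y = A y := by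
  have h1 : ∀ s : ℝ, 1 < s → ∀ x, V (s • x) = s ^ 2 * V x - (1 - s ^ 2) * c := by
    intro s hs x
    have hd : ∀ σ : ℝ, 0 < σ → HasDerivAt (fun σ : ℝ => (V (σ • x) + c) / σ ^ 2) 0 σ := by
      intro σ hσ
      have h1 : HasDerivAt (fun t : ℝ => t • x) x σ := by
        simpa using (hasDerivAt_id σ).smul_const x
      have h2 := (grad_comp V _ x _ σ (hV (σ • x)) h1).add_const c
      have h3 := h2.div (hasDerivAt_pow 2 σ) (by positivity)
      refine HasDerivAt.congr_deriv h3 ?_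
      have := hc (σ • x)
      rw [real_inner_smul_left, real_inner_comm] at this
      rw [div_eq_zero_iff]; left
      push_cast
      linear_combination 2 * σ * this
    obtain ⟨σ, hσ, e⟩ := exists_hasDerivAt_eq_slope (fun σ : ℝ => (V (σ • x) + c) / σ ^ 2) _ hs
      (fun t ht => (hd t (by linarith [ht.1])).continuousAt.continuousWithinAt)
      (fun t ht => hd t (by linarith [ht.1]))
    have hs0 : s - 1 ≠ 0 := by linarith
    have hs1 : s ≠ 0 := by linarith
    simp only [one_smul, one_pow, div_one] at e
    field_simp at e
    linarith
  have h2 : ∀ s : ℝ, 1 < s → ∀ x, G (s • x) = s • G x := by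
    intro s hs x
    have hs0 : s ≠ 0 := by linarith
    have d1 : HasFDerivAt (fun y : EuclideanSpace ℝ (Fin n) => s • y)
      (s • ContinuousLinearMap.id ℝ _) x := (hasFDerivAt_id x).const_smul s
    have d2 := (hV (s • x)).hasFDerivAt.comp x d1
    have d3 := ((hV x).hasFDerivAt.const_mul (s ^ 2)).sub_const ((1 - s ^ 2) * c)
    have d4 : V ∘ (fun y : EuclideanSpace ℝ (Fin n) => s • y) =
      fun y => s ^ 2 * V y - (1 - s ^ 2) * c := funext fun y => h1 s hs y
    have d2' : HasFDerivAt (V ∘ (fun y : EuclideanSpace ℝ (Fin n) => s • y)) _ x := d2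
    rw [d4] at d2'
    have d5 := d2'.unique d3
    refine ext_inner_right ℝ fun v => ?_
    have d6 := congrArg (fun f => f v) d5
    simp at d6
    rw [real_inner_smul_left]
    have : s * (⟪G (s • x), v⟫ - s * ⟪G x, v⟫) = 0 := by linear_combination d6
    rcases mul_eq_zero.1 this with h | h
    · exact absurd h hs0
    · linarith
  have h0 : G 0 = 0 := by
    have := h2 2 (by norm_num) 0
    rw [smul_zero, two_smul] at this
    simpa using this
  have h3 : ∀ t : ℝ, 0 < t → t < 1 → t⁻¹ • G (t • y) = G y := by
    intro t ht ht1
    have := h2 t⁻¹ (one_lt_inv₀ ht |>.2 ht1) (t • y)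
    rw [smul_smul, inv_mul_cancel₀ ht.ne', one_smul] at this
    exact this.symm
  have hl : HasDerivAt (fun t : ℝ => t • y) y 0 := by
    simpa using (hasDerivAt_id (0:ℝ)).smul_const y
  have hG' : HasFDerivAt G A ((0:ℝ) • y) := by simpa using hG
  have h4 := hasDerivAt_iff_tendsto_slope_zero.1 (hG'.comp_hasDerivAt (0:ℝ) hl)
  have h5 : Tendsto (fun t : ℝ => t⁻¹ • G (t • y)) (nhdsWithin 0 (Set.Ioi 0)) (nhds (A y)) := by
    have := h4.mono_left (nhdsWithin_mono (0:ℝ) (fun x (hx : x ∈ Set.Ioi 0) => ne_of_gt hx))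
    simpa [h0, Function.comp_def] using this
  have h6 : Tendsto (fun t : ℝ => t⁻¹ • G (t • y)) (nhdsWithin 0 (Set.Ioi 0)) (nhds (G y)) := by
    refine tendsto_const_nhds.congr' ?_
    filter_upwards [Ioo_mem_nhdsGT (show (0:ℝ) < 1 by norm_num)] with t ht
    exact (h3 t ht.1 ht.2).symm
  exact tendsto_nhds_unique h6 h5

end

section
variable {n : ℕ}

lemma mono_convex (F : EuclideanSpace ℝ (Fin n) → EuclideanSpace ℝ (Fin n))
    (H : EuclideanSpace ℝ (Fin n) → EuclideanSpace ℝ (Fin n) →L[ℝ] EuclideanSpace ℝ (Fin n))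
    (b : ℝ) (B : Set (EuclideanSpace ℝ (Fin n))) (hB : Convex ℝ B)
    (hF : ∀ x ∈ B, HasFDerivAt F (H x) x) (hH : ∀ x ∈ B, ∀ z, b * ‖z‖ ^ 2 ≤ ⟪H x z, z⟫)
    (x x' : EuclideanSpace ℝ (Fin n)) (hx : x ∈ B) (hx' : x' ∈ B) :
    b * ‖x - x'‖ ≤ ‖F x - F x'‖ := by
  have hmem : ∀ t ∈ Set.Icc (0:ℝ) 1, x' + t • (x - x') ∈ B := fun t ht =>
    hB.add_smul_sub_mem hx' hx ht
  have hl : ∀ t : ℝ, HasDerivAt (fun t : ℝ => x' + t • (x - x')) (x - x') t := by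
    intro t
    simpa using ((hasDerivAt_id t).smul_const (x - x')).const_add x'
  have hd : ∀ t ∈ Set.Icc (0:ℝ) 1, HasDerivAt (fun t : ℝ => ⟪F (x' + t • (x - x')), x - x'⟫)
      ⟪H (x' + t • (x - x')) (x - x'), x - x'⟫ t := by
    intro t ht
    have h1 := (hF _ (hmem t ht)).comp_hasDerivAt t (hl t)
    have h2 := h1.inner ℝ (hasDerivAt_const t (x - x'))
    refine HasDerivAt.congr_deriv h2 ?_
    simp
  obtain ⟨t, ht, e⟩ := exists_hasDerivAt_eq_slope
    (fun t : ℝ => ⟪F (x' + t • (x - x')), x - x'⟫) _ (zero_lt_one)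
    (fun t ht => (hd t ht).continuousAt.continuousWithinAt)
    (fun t ht => hd t ⟨ht.1.le, ht.2.le⟩)
  have h1 := hH _ (hmem t ⟨ht.1.le, ht.2.le⟩) (x - x')
  rw [e] at h1
  simp only [one_smul, zero_smul, add_zero, add_sub_cancel, sub_zero, div_one] at h1
  rw [← inner_sub_left] at h1
  have h2 := h1.trans (real_inner_le_norm _ _)
  rcases (norm_nonneg (x - x')).eq_or_lt with h | h
  · rw [← h]; simp
  · refine le_of_mul_le_mul_right ?_ h
    linarith [h2, sq (‖x - x'‖), mul_assoc b ‖x - x'‖ ‖x - x'‖]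

lemma local_surj (F : EuclideanSpace ℝ (Fin n) → EuclideanSpace ℝ (Fin n))
    (H : EuclideanSpace ℝ (Fin n) → EuclideanSpace ℝ (Fin n) →L[ℝ] EuclideanSpace ℝ (Fin n))
    (b : ℝ) (hb : 0 < b) (x : EuclideanSpace ℝ (Fin n)) (ρ : ℝ) (hρ : 0 < ρ)
    (hF : ∀ z ∈ Metric.closedBall x ρ, HasFDerivAt F (H z) z)
    (hH : ∀ y ∈ Metric.closedBall x ρ, ∀ z, b * ‖z‖ ^ 2 ≤ ⟪H y z, z⟫)
    (y : EuclideanSpace ℝ (Fin n)) (hy : ‖y - F x‖ < b * ρ / 2) :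
    ∃ x' ∈ Metric.closedBall x ρ, F x' = y := by
  have hc : ContinuousOn (fun z => ‖F z - y‖ ^ 2) (Metric.closedBall x ρ) := by
    have : ContinuousOn F (Metric.closedBall x ρ) := fun z hz =>
      (hF z hz).continuousAt.continuousWithinAt
    fun_prop
  obtain ⟨x', hx', hmin⟩ := (isCompact_closedBall x ρ).exists_isMinOn
    (Metric.nonempty_closedBall.2 hρ.le) hc
  refine ⟨x', hx', ?_⟩
  have hxx : x ∈ Metric.closedBall x ρ := Metric.mem_closedBall_self hρ.le
  have h1 : ‖F x' - y‖ ^ 2 ≤ ‖F x - y‖ ^ 2 := hmin hxx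
  have h1' : ‖F x' - y‖ ≤ ‖F x - y‖ := by
    exact (sq_le_sq₀ (norm_nonneg _) (norm_nonneg _)).1 h1
  have h2 : b * ‖x' - x‖ ≤ ‖F x' - F x‖ := mono_convex F H b _ (convex_closedBall x ρ) hF hH _ _ hx' hxx
  have h3 : ‖x' - x‖ < ρ := by
    have h4 : ‖F x' - F x‖ ≤ ‖F x' - y‖ + ‖y - F x‖ := norm_sub_le_norm_sub_add_norm_sub _ _ _
    rw [norm_sub_rev (F x) y] at h1'
    have : b * ‖x' - x‖ < b * ρ := by linarith
    exact lt_of_mul_lt_mul_left this hb.le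
  have h4 : Metric.closedBall x ρ ∈ nhds x' := by
    refine mem_of_superset (Metric.isOpen_ball.mem_nhds ?_) Metric.ball_subset_closedBall
    rw [Metric.mem_ball, dist_eq_norm]; exact h3
  have h5 : IsLocalMin (fun z => ‖F z - y‖ ^ 2) x' := hmin.isLocalMin h4
  have h6 := ((hF x' hx').sub_const y).norm_sq
  have h7 := h5.hasFDerivAt_eq_zero h6
  have h8 := congrArg (fun f => f (F x' - y)) h7
  simp at h8
  have h9 := hH x' hx' (F x' - y)
  rw [real_inner_comm] at h9
  have h10 : ⟪F x' - y, H x' (F x' - y)⟫ = 0 := by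
    simpa [inner_sub_left] using h8
  rw [h10] at h9
  have h11 : ‖F x' - y‖ ^ 2 ≤ 0 := by
    by_contra hh
    push Not at hh
    have := mul_pos hb hh
    linarith
  have h12 : ‖F x' - y‖ = 0 := by
    have := sq_nonneg (‖F x' - y‖)
    exact pow_eq_zero_iff two_ne_zero |>.1 (le_antisymm h11 this)
  exact sub_eq_zero.1 (norm_eq_zero.1 h12)

lemma seg_lift (Ω : Set (EuclideanSpace ℝ (Fin n)))
    (F : EuclideanSpace ℝ (Fin n) → EuclideanSpace ℝ (Fin n))
    (H : EuclideanSpace ℝ (Fin n) → EuclideanSpace ℝ (Fin n) →L[ℝ] EuclideanSpace ℝ (Fin n))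
    (b : ℝ) (hb : 0 < b)
    (hF : ∀ z ∈ Ω, HasFDerivAt F (H z) z)
    (hH : ∀ y ∈ Ω, ∀ z, b * ‖z‖ ^ 2 ≤ ⟪H y z, z⟫)
    (hK : ∀ R : ℝ, ∃ ρ > 0, ∀ x ∈ Ω, ‖x‖ ≤ R → ‖F x‖ ≤ R → Metric.closedBall x ρ ⊆ Ω)
    (x0 : EuclideanSpace ℝ (Fin n)) (hx0 : x0 ∈ Ω) (y : EuclideanSpace ℝ (Fin n)) :
    ∃ g : ℝ → EuclideanSpace ℝ (Fin n), g 0 = x0 ∧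
      (∀ s ∈ Set.Icc (0:ℝ) 1, ∀ t ∈ Set.Icc (0:ℝ) 1, ‖g s - g t‖ ≤ ‖y - F x0‖ / b * |s - t|) ∧
      ∀ t ∈ Set.Icc (0:ℝ) 1, g t ∈ Ω ∧ F (g t) = F x0 + t • (y - F x0) := by
  set y0 := F x0 with hy0
  set L := ‖y - y0‖ / b with hL
  have hL0 : 0 ≤ L := by positivity
  obtain ⟨ρ, hρ, hball⟩ := hK (‖x0‖ + L + ‖y0‖ + ‖y - y0‖)
  obtain ⟨N, hN⟩ := exists_nat_gt (‖y - y0‖ / (b * ρ / 2))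
  have hbρ : 0 < b * ρ / 2 := by positivity
  have hN0 : (0:ℝ) < N := lt_of_le_of_lt (by positivity) hN
  have hstep : ∀ T : ℝ, 0 ≤ T → T + 1 / N ≤ 1 →
      (∃ g : ℝ → EuclideanSpace ℝ (Fin n), g 0 = x0 ∧
      (∀ s ∈ Set.Icc (0:ℝ) T, ∀ t ∈ Set.Icc (0:ℝ) T, ‖g s - g t‖ ≤ L * |s - t|) ∧
      ∀ t ∈ Set.Icc (0:ℝ) T, g t ∈ Ω ∧ F (g t) = y0 + t • (y - y0)) →
      (∃ g : ℝ → EuclideanSpace ℝ (Fin n), g 0 = x0 ∧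
      (∀ s ∈ Set.Icc (0:ℝ) (T + 1 / N), ∀ t ∈ Set.Icc (0:ℝ) (T + 1 / N),
        ‖g s - g t‖ ≤ L * |s - t|) ∧
      ∀ t ∈ Set.Icc (0:ℝ) (T + 1 / N), g t ∈ Ω ∧ F (g t) = y0 + t • (y - y0)) := by
    rintro T hT hT1 ⟨g, hg0, hgL, hg⟩
    have hTT : T ∈ Set.Icc (0:ℝ) T := ⟨hT, le_rfl⟩
    have hT1' : T ≤ 1 := by
      have : (0:ℝ) < 1 / N := by positivity
      linarith
    obtain ⟨hgT, hFgT⟩ := hg T hTT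
    have hB : Metric.closedBall (g T) ρ ⊆ Ω := by
      apply hball _ hgT
      · have h1 := hgL T hTT 0 ⟨le_rfl, hT⟩
        rw [hg0, sub_zero, abs_of_nonneg hT] at h1
        have h2 : ‖g T‖ ≤ ‖g T - x0‖ + ‖x0‖ := by
          simpa using norm_add_le (g T - x0) x0
        have h3 : L * T ≤ L * 1 := by gcongr
        have := norm_nonneg y0
        have := norm_nonneg (y - y0)
        linarith
      · rw [hFgT]
        have h1 := norm_add_le y0 (T • (y - y0))
        rw [norm_smul, Real.norm_of_nonneg hT] at h1
        have h3 : T * ‖y - y0‖ ≤ 1 * ‖y - y0‖ := by gcongr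
        have := norm_nonneg x0
        linarith
    have hFB : ∀ z ∈ Metric.closedBall (g T) ρ, HasFDerivAt F (H z) z := fun z hz => hF z (hB hz)
    have hHB : ∀ y ∈ Metric.closedBall (g T) ρ, ∀ z, b * ‖z‖ ^ 2 ≤ ⟪H y z, z⟫ :=
      fun z hz => hH z (hB hz)
    have hex : ∀ t : ℝ, ∃ x', t ∈ Set.Icc T (T + 1 / N) → x' ∈ Metric.closedBall (g T) ρ ∧
        F x' = y0 + t • (y - y0) := by
      intro t
      by_cases ht : t ∈ Set.Icc T (T + 1 / N)
      · obtain ⟨x', h1, h2⟩ := local_surj F H b hb (g T) ρ hρ hFB hHB (y0 + t • (y - y0)) (by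
          rw [hFgT]
          have : y0 + t • (y - y0) - (y0 + T • (y - y0)) = (t - T) • (y - y0) := by module
          rw [this, norm_smul, Real.norm_of_nonneg (by linarith [ht.1])]
          have h5 : ‖y - y0‖ < N * (b * ρ / 2) := (div_lt_iff₀ hbρ).1 hN
          calc (t - T) * ‖y - y0‖ ≤ (1 / N) * ‖y - y0‖ := by
                gcongr; linarith [ht.2]
            _ < (1 / N) * (N * (b * ρ / 2)) := by gcongr
            _ = _ := by field_simp)
        exact ⟨x', fun _ => ⟨h1, h2⟩⟩
      · exact ⟨0, fun h => absurd h ht⟩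
    choose h hh using hex
    have hhL : ∀ s ∈ Set.Icc T (T + 1 / N), ∀ t ∈ Set.Icc T (T + 1 / N),
        ‖h s - h t‖ ≤ L * |s - t| := by
      intro s hs t ht
      have h1 := mono_convex F H b _ (convex_closedBall (g T) ρ) hFB hHB _ _ (hh s hs).1 (hh t ht).1
      rw [(hh s hs).2, (hh t ht).2] at h1
      have : y0 + s • (y - y0) - (y0 + t • (y - y0)) = (s - t) • (y - y0) := by module
      rw [this, norm_smul, Real.norm_eq_abs] at h1
      have h2 : ‖h s - h t‖ ≤ |s - t| * ‖y - y0‖ / b := (le_div_iff₀' hb).2 h1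
      refine h2.trans (le_of_eq ?_)
      rw [hL]; ring
    have hNp : (0:ℝ) < 1 / N := by positivity
    have hTm : T ∈ Set.Icc T (T + 1 / N) := ⟨le_rfl, by linarith⟩
    have hhT : h T = g T := by
      have h1 := mono_convex F H b _ (convex_closedBall (g T) ρ) hFB hHB _ _ (hh T hTm).1
        (Metric.mem_closedBall_self hρ.le)
      rw [(hh T hTm).2, hFgT, sub_self, norm_zero] at h1
      have h2 : ‖h T - g T‖ ≤ 0 := by
        by_contra hc
        push Not at hc
        have := mul_pos hb hc
        linarith
      exact sub_eq_zero.1 (norm_le_zero_iff.1 h2)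
    have hcross : ∀ s ∈ Set.Icc 0 T, ∀ t ∈ Set.Icc T (T + 1 / N), ‖g s - h t‖ ≤ L * |s - t| := by
      intro s hs t ht
      have h1 := hgL s hs T hTT
      have h2 := hhL T hTm t ht
      rw [hhT] at h2
      have h3 := norm_sub_le_norm_sub_add_norm_sub (g s) (g T) (h t)
      rw [abs_of_nonpos (by linarith [hs.2])] at h1
      rw [abs_of_nonpos (by linarith [ht.1])] at h2
      rw [abs_of_nonpos (by linarith [ht.1, hs.2])]
      linarith
    refine ⟨fun t => if t ≤ T then g t else h t, by simp [hT, hg0], ?_, ?_⟩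
    · intro s hs t ht
      by_cases h1 : s ≤ T <;> by_cases h2 : t ≤ T
      · simp only [h1, h2, if_true]; exact hgL s ⟨hs.1, h1⟩ t ⟨ht.1, h2⟩
      · simp only [h1, h2, if_true, if_false]
        exact hcross s ⟨hs.1, h1⟩ t ⟨(not_le.1 h2).le, ht.2⟩
      · simp only [h1, h2, if_true, if_false]
        rw [norm_sub_rev, abs_sub_comm]
        exact hcross t ⟨ht.1, h2⟩ s ⟨(not_le.1 h1).le, hs.2⟩
      · simp only [h1, h2, if_false]
        exact hhL s ⟨(not_le.1 h1).le, hs.2⟩ t ⟨(not_le.1 h2).le, ht.2⟩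
    · intro t ht
      by_cases h2 : t ≤ T
      · simp only [h2, if_true]; exact hg t ⟨ht.1, h2⟩
      · simp only [h2, if_false]
        have := hh t ⟨(not_le.1 h2).le, ht.2⟩
        exact ⟨hB this.1, this.2⟩
  have hind : ∀ k : ℕ, k ≤ N → (∃ g : ℝ → EuclideanSpace ℝ (Fin n), g 0 = x0 ∧
      (∀ s ∈ Set.Icc (0:ℝ) (k / N), ∀ t ∈ Set.Icc (0:ℝ) (k / N), ‖g s - g t‖ ≤ L * |s - t|) ∧
      ∀ t ∈ Set.Icc (0:ℝ) (k / N), g t ∈ Ω ∧ F (g t) = y0 + t • (y - y0)) := by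
    intro k
    induction k with
    | zero =>
      intro _
      refine ⟨fun _ => x0, rfl, ?_, ?_⟩
      · intro s _ t _
        rw [sub_self, norm_zero]; positivity
      · intro t ht
        simp only [Nat.cast_zero, zero_div, Set.Icc_self, Set.mem_singleton_iff] at ht
        subst ht
        exact ⟨hx0, by simp [hy0]⟩
    | succ k ih =>
      intro hk
      have e : (((k + 1 : ℕ) : ℝ)) / N = k / N + 1 / N := by push_cast; ring
      rw [e]
      refine hstep _ (by positivity) ?_ (ih (by omega))
      rw [← e, div_le_one hN0]
      exact_mod_cast hk
  have := hind N le_rfl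
  rwa [div_self hN0.ne'] at this

lemma section_exists (Ω : Set (EuclideanSpace ℝ (Fin n)))
    (F : EuclideanSpace ℝ (Fin n) → EuclideanSpace ℝ (Fin n))
    (H : EuclideanSpace ℝ (Fin n) → EuclideanSpace ℝ (Fin n) →L[ℝ] EuclideanSpace ℝ (Fin n))
    (b : ℝ) (hb : 0 < b)
    (hF : ∀ z ∈ Ω, HasFDerivAt F (H z) z)
    (hH : ∀ y ∈ Ω, ∀ z, b * ‖z‖ ^ 2 ≤ ⟪H y z, z⟫)
    (hK : ∀ R : ℝ, ∃ ρ > 0, ∀ x ∈ Ω, ‖x‖ ≤ R → ‖F x‖ ≤ R → Metric.closedBall x ρ ⊆ Ω)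
    (x0 : EuclideanSpace ℝ (Fin n)) (hx0 : x0 ∈ Ω) :
    ∃ S : EuclideanSpace ℝ (Fin n) → EuclideanSpace ℝ (Fin n), Continuous S ∧
      ∀ y, S y ∈ Ω ∧ F (S y) = y := by
  choose g hg0 hgL hg using seg_lift Ω F H b hb hF hH hK x0 hx0
  have h1m : (1:ℝ) ∈ Set.Icc (0:ℝ) 1 := ⟨zero_le_one, le_rfl⟩
  have h0m : (0:ℝ) ∈ Set.Icc (0:ℝ) 1 := ⟨le_rfl, zero_le_one⟩
  have hgc : ∀ y, ContinuousOn (g y) (Set.Icc 0 1) := by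
    intro y
    refine LipschitzOnWith.continuousOn (K := Real.toNNReal (‖y - F x0‖ / b)) ?_
    refine LipschitzOnWith.of_dist_le_mul fun s hs t ht => ?_
    rw [dist_eq_norm, Real.dist_eq, Real.coe_toNNReal _ (by positivity)]
    exact hgL y s hs t ht
  refine ⟨fun y => g y 1, ?_, fun y => ⟨(hg y 1 h1m).1, ?_⟩⟩
  swap
  · rw [(hg y 1 h1m).2, one_smul, add_sub_cancel]
  rw [continuous_iff_continuousAt]
  intro y
  obtain ⟨ρ, hρ, hball⟩ := hK (‖x0‖ + ‖y - F x0‖ / b + ‖F x0‖ + ‖y - F x0‖)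
  have hB : ∀ t ∈ Set.Icc (0:ℝ) 1, Metric.closedBall (g y t) ρ ⊆ Ω := by
    intro t ht
    apply hball _ (hg y t ht).1
    · have h1 := hgL y t ht 0 h0m
      rw [hg0, sub_zero, abs_of_nonneg ht.1] at h1
      have h2 : ‖g y t‖ ≤ ‖g y t - x0‖ + ‖x0‖ := by
        simpa using norm_add_le (g y t - x0) x0
      have h3 : ‖y - F x0‖ / b * t ≤ ‖y - F x0‖ / b * 1 := by
        gcongr; exact ht.2
      have := norm_nonneg (F x0)
      have := norm_nonneg (y - F x0)
      linarith
    · rw [(hg y t ht).2]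
      have h1 := norm_add_le (F x0) (t • (y - F x0))
      rw [norm_smul, Real.norm_of_nonneg ht.1] at h1
      have h3 : t * ‖y - F x0‖ ≤ 1 * ‖y - F x0‖ := by
        gcongr; exact ht.2
      have := norm_nonneg x0
      have : 0 ≤ ‖y - F x0‖ / b := by positivity
      linarith
  have hkey : ∀ y', ∀ t ∈ Set.Icc (0:ℝ) 1, ‖g y' t - g y t‖ ≤ ρ →
      b * ‖g y' t - g y t‖ ≤ ‖y' - y‖ := by
    intro y' t ht hd
    have h1 := mono_convex F H b _ (convex_closedBall (g y t) ρ) (fun z hz => hF z (hB t ht hz))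
      (fun z hz => hH z (hB t ht hz)) (g y' t) (g y t)
      (by rw [Metric.mem_closedBall, dist_eq_norm]; exact hd) (Metric.mem_closedBall_self hρ.le)
    rw [(hg y' t ht).2, (hg y t ht).2] at h1
    have : F x0 + t • (y' - F x0) - (F x0 + t • (y - F x0)) = t • (y' - y) := by module
    rw [this, norm_smul, Real.norm_of_nonneg ht.1] at h1
    refine h1.trans ?_
    calc _ ≤ 1 * ‖y' - y‖ := by
          gcongr; exact ht.2
      _ = _ := one_mul _
  have hd1 : ∀ y', ‖y' - y‖ < b * ρ → b * ‖g y' 1 - g y 1‖ ≤ ‖y' - y‖ := by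
    intro y' hy'
    apply hkey y' 1 h1m
    by_contra hc
    push Not at hc
    have hcont : ContinuousOn (fun t => ‖g y' t - g y t‖) (Set.Icc 0 1) :=
      ((hgc y').sub (hgc y)).norm
    have := intermediate_value_Icc zero_le_one hcont
    obtain ⟨t, ht, e⟩ := this (show ρ ∈ Set.Icc _ _ from ⟨by simp [hg0, hρ.le], hc.le⟩)
    simp only at e
    have := hkey y' t ht e.le
    rw [e] at this
    linarith
  rw [Metric.continuousAt_iff]
  intro ε hε
  refine ⟨min (b * ρ) (b * ε), by positivity, fun {y'} hy' => ?_⟩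
  rw [dist_eq_norm] at hy' ⊢
  have h1 := hd1 y' (lt_of_lt_of_le hy' (min_le_left _ _))
  have h2 := lt_of_lt_of_le hy' (min_le_right _ _)
  exact lt_of_mul_lt_mul_left (h1.trans_lt h2) hb.le

end

section
variable {n : ℕ}

lemma grad_has (Ω : Set (EuclideanSpace ℝ (Fin n))) (hΩo : IsOpen Ω)
    (u : EuclideanSpace ℝ (Fin n) → ℝ) (hu : ContDiffOn ℝ 2 u Ω)
    (x : EuclideanSpace ℝ (Fin n)) (hx : x ∈ Ω) : HasGradientAt u (gradient u x) x :=
  ((hu.differentiableOn (by norm_num)).differentiableAt (hΩo.mem_nhds hx)).hasGradientAt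

lemma grad_deriv (Ω : Set (EuclideanSpace ℝ (Fin n))) (hΩo : IsOpen Ω)
    (u : EuclideanSpace ℝ (Fin n) → ℝ) (hu : ContDiffOn ℝ 2 u Ω)
    (x : EuclideanSpace ℝ (Fin n)) (hx : x ∈ Ω) :
    HasFDerivAt (gradient u) (fderiv ℝ (gradient u) x) x ∧
    ∀ v w, ⟪fderiv ℝ (gradient u) x v, w⟫ = fderiv ℝ (fderiv ℝ u) x v w := by
  have h1 : DifferentiableAt ℝ (fderiv ℝ u) x :=
    ((hu.fderiv_of_isOpen hΩo (m := 1) (by norm_num)).differentiableOn (by norm_num)).differentiableAt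
      (hΩo.mem_nhds hx)
  let T : (EuclideanSpace ℝ (Fin n) →L[ℝ] ℝ) →L[ℝ] EuclideanSpace ℝ (Fin n) :=
    LinearMap.toContinuousLinearMap
      { toFun := fun f => (InnerProductSpace.toDual ℝ (EuclideanSpace ℝ (Fin n))).symm f
        map_add' := fun f g => map_add _ f g
        map_smul' := fun c f => by
          rw [map_smulₛₗ]; simp }
  have h2 : HasFDerivAt (gradient u) (T.comp (fderiv ℝ (fderiv ℝ u) x)) x :=
    T.hasFDerivAt.comp x h1.hasFDerivAt
  rw [h2.fderiv]
  refine ⟨h2, fun v w => ?_⟩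
  change ⟪(InnerProductSpace.toDual ℝ (EuclideanSpace ℝ (Fin n))).symm
    (fderiv ℝ (fderiv ℝ u) x v), w⟫ = _
  rw [InnerProductSpace.toDual_symm_apply]

lemma hess_entry (Ω : Set (EuclideanSpace ℝ (Fin n))) (hΩo : IsOpen Ω)
    (u : EuclideanSpace ℝ (Fin n) → ℝ) (hu : ContDiffOn ℝ 2 u Ω)
    (x : EuclideanSpace ℝ (Fin n)) (hx : x ∈ Ω) (i j : Fin n) :
    Hess n u x i j = fderiv ℝ (gradient u) x (EuclideanSpace.single i 1) j := by
  have h := (grad_deriv Ω hΩo u hu x hx).2 (EuclideanSpace.single i 1) (EuclideanSpace.single j 1)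
  rw [EuclideanSpace.inner_single_right] at h
  simp at h
  rw [h, Hess, Matrix.of_apply, iteratedFDeriv_two_apply]
  rfl

lemma hess_herm (a b : ℝ)
    (u : EuclideanSpace ℝ (Fin n) → ℝ)
    (x : EuclideanSpace ℝ (Fin n))
    (hadm : (Hess n u x + (a + b) • (1 : Matrix (Fin n) (Fin n) ℝ)).PosDef) :
    (Hess n u x).IsHermitian := by
  have h1 := hadm.isHermitian
  have h2 : ((a + b) • (1 : Matrix (Fin n) (Fin n) ℝ)).IsHermitian := by
    rw [Matrix.IsHermitian, Matrix.conjTranspose_smul, Matrix.conjTranspose_one]; simp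
  have := h1.sub h2
  rwa [add_sub_cancel_right] at this

lemma hess_apply_s5 (Ω : Set (EuclideanSpace ℝ (Fin n))) (hΩo : IsOpen Ω)
    (u : EuclideanSpace ℝ (Fin n) → ℝ) (hu : ContDiffOn ℝ 2 u Ω)
    (x : EuclideanSpace ℝ (Fin n)) (hx : x ∈ Ω) (hh : (Hess n u x).IsHermitian)
    (v : EuclideanSpace ℝ (Fin n)) :
    fderiv ℝ (gradient u) x v = WithLp.toLp 2 (Hess n u x *ᵥ v.ofLp) := by
  have hv : v = ∑ i, v i • EuclideanSpace.single i (1:ℝ) := by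
    ext j
    simp [Finset.sum_apply, Pi.single_apply]
  conv_lhs => rw [hv]
  rw [map_sum]
  ext j
  simp only [map_smul, WithLp.ofLp_sum, WithLp.ofLp_smul, Finset.sum_apply, Pi.smul_apply,
    smul_eq_mul, Matrix.mulVec, dotProduct]
  refine Finset.sum_congr rfl fun i _ => ?_
  rw [← hess_entry Ω hΩo u hu x hx, mul_comm]
  congr 1
  have := hh.apply i j
  simpa using this.symm

lemma hess_spec (a b : ℝ) (Ω : Set (EuclideanSpace ℝ (Fin n))) (hΩo : IsOpen Ω)
    (u : EuclideanSpace ℝ (Fin n) → ℝ) (hu : ContDiffOn ℝ 2 u Ω)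
    (x : EuclideanSpace ℝ (Fin n)) (hx : x ∈ Ω)
    (hadm : (Hess n u x + (a + b) • (1 : Matrix (Fin n) (Fin n) ℝ)).PosDef) :
    (∀ z, z ≠ 0 → 0 < ⟪fderiv ℝ (gradient u) x z, z⟫ + (a + b) * ‖z‖ ^ 2) ∧
    ∃ e : OrthonormalBasis (Fin n) ℝ (EuclideanSpace ℝ (Fin n)),
      (∀ i, fderiv ℝ (gradient u) x (e i) = eigs (Hess n u x) i • e i) ∧
      ∀ i, 0 < eigs (Hess n u x) i + a + b := by
  have hh := hess_herm a b u x hadm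
  have hpos : ∀ z, z ≠ 0 → 0 < ⟪fderiv ℝ (gradient u) x z, z⟫ + (a + b) * ‖z‖ ^ 2 := by
    intro z hz
    have hz' : z.ofLp ≠ 0 := by
      intro h; apply hz; ext i; simp [h]
    have h1 := hadm.dotProduct_mulVec_pos hz'
    rw [Matrix.add_mulVec, dotProduct_add, Matrix.smul_mulVec, Matrix.one_mulVec,
      dotProduct_smul] at h1
    rw [hess_apply_s5 Ω hΩo u hu x hx hh, real_inner_comm, EuclideanSpace.inner_eq_star_dotProduct,
      ← real_inner_self_eq_norm_sq, EuclideanSpace.inner_eq_star_dotProduct]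
    rw [dotProduct_comm, dotProduct_comm z.ofLp]
    simpa using h1
  refine ⟨hpos, hh.eigenvectorBasis, ?_⟩
  have he : eigs (Hess n u x) = hh.eigenvalues := by
    rw [eigs, dif_pos hh]
  have h1 : ∀ i, fderiv ℝ (gradient u) x (hh.eigenvectorBasis i) =
      eigs (Hess n u x) i • hh.eigenvectorBasis i := by
    intro i
    rw [hess_apply_s5 Ω hΩo u hu x hx hh, hh.mulVec_eigenvectorBasis, he]
    ext j; simp
  refine ⟨h1, fun i => ?_⟩
  have h2 := hpos (hh.eigenvectorBasis i) (hh.eigenvectorBasis.orthonormal.ne_zero i)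
  rw [h1, real_inner_smul_left, real_inner_self_eq_norm_sq,
    hh.eigenvectorBasis.orthonormal.1 i] at h2
  linarith

end

section
variable {n : ℕ}

lemma ray_seg (Ω : Set (EuclideanSpace ℝ (Fin n)))
    (u : EuclideanSpace ℝ (Fin n) → ℝ) (g : EuclideanSpace ℝ (Fin n) → EuclideanSpace ℝ (Fin n))
    (hg : ∀ x ∈ Ω, HasGradientAt u (g x) x) (C : ℝ)
    (hC : ∀ x ∈ Ω, |-u x + (1/2) * ⟪x, g x⟫| ≤ C)
    (x : EuclideanSpace ℝ (Fin n)) (s t : ℝ) (hs : 0 < s) (hst : s < t)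
    (hmem : ∀ r ∈ Set.Icc s t, r • x ∈ Ω) :
    |u (t • x) * s ^ 2 - u (s • x) * t ^ 2| ≤ C * (t ^ 2 - s ^ 2) := by
  have hf : ∀ r ∈ Set.Icc s t, HasDerivAt (fun r : ℝ => u (r • x) / r ^ 2)
      (2 * (-u (r • x) + (1/2) * ⟪r • x, g (r • x)⟫) / r ^ 3) r := by
    intro r hr
    have hr0 : 0 < r := hs.trans_le hr.1
    have h1 : HasDerivAt (fun t : ℝ => t • x) x r := by
      simpa using (hasDerivAt_id r).smul_const x
    have h2 := grad_comp u _ x _ r (hg (r • x) (hmem r hr)) h1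
    have h3 := h2.div (hasDerivAt_pow 2 r) (by positivity)
    refine HasDerivAt.congr_deriv h3 ?_
    rw [real_inner_smul_left, real_inner_comm]
    push_cast
    field_simp
    ring
  have hgg : ∀ r ∈ Set.Icc s t, HasDerivAt (fun r : ℝ => 1 / r ^ 2) (-2 / r ^ 3) r := by
    intro r hr
    have hr0 : 0 < r := hs.trans_le hr.1
    have h3 := (hasDerivAt_const r (1:ℝ)).div (hasDerivAt_pow 2 r) (by positivity)
    refine HasDerivAt.congr_deriv h3 ?_
    push_cast
    field_simp
    ring
  obtain ⟨c, hc, e⟩ := exists_ratio_hasDerivAt_eq_ratio_slope (fun r : ℝ => u (r • x) / r ^ 2) _ hst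
    (fun r hr => (hf r hr).continuousAt.continuousWithinAt)
    (fun r hr => hf r ⟨hr.1.le, hr.2.le⟩) (fun r : ℝ => 1 / r ^ 2) _
    (fun r hr => (hgg r hr).continuousAt.continuousWithinAt)
    (fun r hr => hgg r ⟨hr.1.le, hr.2.le⟩)
  have hφ := hC (c • x) (hmem c ⟨hc.1.le, hc.2.le⟩)
  set φ := -u (c • x) + (1/2) * ⟪c • x, g (c • x)⟫ with hφd
  have hc0 : 0 < c := hs.trans hc.1
  have ht0 : 0 < t := hs.trans hst
  have e2 : u (t • x) * s ^ 2 - u (s • x) * t ^ 2 = (t ^ 2 - s ^ 2) * φ := by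
    field_simp at e
    linarith
  have h0 : 0 ≤ t ^ 2 - s ^ 2 := by
    have : s ^ 2 ≤ t ^ 2 := by gcongr
    linarith
  rw [e2, abs_mul, abs_of_nonneg h0, mul_comm]
  gcongr

lemma ray_univ (Ω : Set (EuclideanSpace ℝ (Fin n))) (hΩo : IsOpen Ω) (hne : Ω.Nonempty)
    (u : EuclideanSpace ℝ (Fin n) → ℝ) (g : EuclideanSpace ℝ (Fin n) → EuclideanSpace ℝ (Fin n))
    (hg : ∀ x ∈ Ω, HasGradientAt u (g x) x) (C : ℝ)
    (hC : ∀ x ∈ Ω, |-u x + (1/2) * ⟪x, g x⟫| ≤ C)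
    (hblow : ∀ p ∈ frontier Ω, ∀ z : ℕ → EuclideanSpace ℝ (Fin n), (∀ k, z k ∈ Ω) →
        Tendsto z atTop (nhds p) → Tendsto (fun k => |u (z k)|) atTop atTop) :
    Ω = Set.univ := by
  have key : ∀ (x : EuclideanSpace ℝ (Fin n)) (s M : ℝ) (τ : ℕ → ℝ),
      Tendsto τ atTop (nhds s) → (∀ k, τ k • x ∈ Ω) → (∀ k, |u (τ k • x)| ≤ M) → s • x ∈ Ω := by
    intro x s M τ hτ hm hb
    by_contra hs
    have ht : Tendsto (fun k => τ k • x) atTop (nhds (s • x)) := hτ.smul_const x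
    have hp : s • x ∈ frontier Ω := by
      rw [hΩo.frontier_eq]
      exact ⟨mem_closure_of_tendsto ht (Eventually.of_forall hm), hs⟩
    have h1 := hblow _ hp _ hm ht
    obtain ⟨k, hk⟩ := (h1.eventually_gt_atTop M).exists
    linarith [hb k]
  obtain ⟨x0, hx0⟩ := hne
  have hC0 : 0 ≤ C := (abs_nonneg _).trans (hC x0 hx0)
  have hcl : ∀ x : EuclideanSpace ℝ (Fin n), IsClosed {t : ℝ | t • x ∉ Ω} := by
    intro x
    have h : Continuous fun t : ℝ => t • x := by fun_prop
    exact (hΩo.preimage h).isClosed_compl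
  have hup : ∀ x ∈ Ω, ∀ t : ℝ, 1 < t → t • x ∈ Ω := by
    intro x hx t ht
    by_contra hn
    set B := {r : ℝ | r • x ∉ Ω} ∩ Set.Icc 1 t with hB
    have hBc : IsCompact B := isCompact_Icc.inter_left (hcl x)
    have hBn : B.Nonempty := ⟨t, hn, ht.le, le_rfl⟩
    obtain ⟨s, ⟨hs1, hs2⟩, hmin⟩ := hBc.exists_isLeast hBn
    have hs3 : 1 < s := by
      rcases hs2.1.eq_or_lt with h | h
      · exfalso; apply hs1; rw [← h, one_smul]; exact hx
      · exact h
    have hmem : ∀ r ∈ Set.Ico 1 s, r • x ∈ Ω := by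
      intro r hr
      by_contra hr'
      have := hmin (show r ∈ B from ⟨hr', hr.1, hr.2.le.trans hs2.2⟩)
      linarith [hr.2]
    obtain ⟨τ, _, hτ, hτl⟩ := exists_seq_strictMono_tendsto' hs3
    refine hs1 (key x s (|u x| * s ^ 2 + C * s ^ 2) τ hτl (fun k => hmem _ ⟨(hτ k).1.le, (hτ k).2⟩) ?_)
    intro k
    have h1 := ray_seg Ω u g hg C hC x 1 (τ k) one_pos (hτ k).1
      (fun r hr => hmem r ⟨hr.1, hr.2.trans_lt (hτ k).2⟩)
    rw [one_smul, one_pow, mul_one] at h1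
    have h3 : 1 < τ k := (hτ k).1
    have h2 : (τ k) ^ 2 ≤ s ^ 2 := by
      have := (hτ k).2
      gcongr
    have h4 : |u (τ k • x)| ≤ |u (τ k • x) - u x * τ k ^ 2| + |u x * τ k ^ 2| := by
      have h := abs_add_le (u (τ k • x) - u x * τ k ^ 2) (u x * τ k ^ 2)
      rwa [sub_add_cancel] at h
    rw [abs_mul, abs_of_nonneg (sq_nonneg (τ k))] at h4
    have h5 : |u x| * τ k ^ 2 ≤ |u x| * s ^ 2 := by gcongr
    have h6 : C * (τ k ^ 2 - 1) ≤ C * s ^ 2 := by gcongr; linarith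
    linarith
  have hdown : ∀ x ∈ Ω, ∀ t : ℝ, 0 ≤ t → t < 1 → t • x ∈ Ω := by
    intro x hx t ht0 ht
    by_contra hn
    set B := {r : ℝ | r • x ∉ Ω} ∩ Set.Icc t 1 with hB
    have hBc : IsCompact B := isCompact_Icc.inter_left (hcl x)
    have hBn : B.Nonempty := ⟨t, hn, le_rfl, ht.le⟩
    obtain ⟨s, ⟨hs1, hs2⟩, hmax⟩ := hBc.exists_isGreatest hBn
    have hs3 : s < 1 := by
      rcases hs2.2.eq_or_lt with h | h
      · exfalso; apply hs1; rw [h, one_smul]; exact hx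
      · exact h
    have hmem : ∀ r ∈ Set.Ioc s 1, r • x ∈ Ω := by
      intro r hr
      by_contra hr'
      have := hmax (show r ∈ B from ⟨hr', hs2.1.trans hr.1.le, hr.2⟩)
      linarith [hr.1]
    obtain ⟨τ, _, hτ, hτl⟩ := exists_seq_strictAnti_tendsto' hs3
    refine hs1 (key x s (|u x| + C) τ hτl (fun k => hmem _ ⟨(hτ k).1, (hτ k).2.le⟩) ?_)
    intro k
    have h0 : 0 < τ k := (ht0.trans hs2.1).trans_lt (hτ k).1
    have h1 := ray_seg Ω u g hg C hC x (τ k) 1 h0 (hτ k).2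
      (fun r hr => hmem r ⟨(hτ k).1.trans_le hr.1, hr.2⟩)
    rw [one_smul, one_pow, mul_one] at h1
    have h3 : τ k < 1 := (hτ k).2
    have h2 : (τ k) ^ 2 ≤ 1 := by nlinarith
    have h4 : |u (τ k • x)| ≤ |u x * τ k ^ 2 - u (τ k • x)| + |u x * τ k ^ 2| := by
      rw [abs_sub_comm]
      have h := abs_add_le (u (τ k • x) - u x * τ k ^ 2) (u x * τ k ^ 2)
      rwa [sub_add_cancel] at h
    rw [abs_mul, abs_of_nonneg (sq_nonneg (τ k))] at h4
    have h5 : |u x| * τ k ^ 2 ≤ |u x| * 1 := by gcongr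
    have h6 : C * (1 - τ k ^ 2) ≤ C * 1 := by
      gcongr; linarith [sq_nonneg (τ k)]
    linarith
  have hzero : (0 : EuclideanSpace ℝ (Fin n)) ∈ Ω := by
    simpa using hdown x0 hx0 0 le_rfl zero_lt_one
  obtain ⟨ε, hε, hball⟩ := Metric.isOpen_iff.1 hΩo 0 hzero
  ext y
  simp only [Set.mem_univ, iff_true]
  obtain ⟨N, hN⟩ := exists_nat_gt (max 1 (‖y‖ / ε))
  have hN1 : (1:ℝ) < N := (le_max_left _ _).trans_lt hN
  have hN2 : ‖y‖ / ε < N := (le_max_right _ _).trans_lt hN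
  have hN0 : (0:ℝ) < N := by linarith
  have h1 : (N:ℝ)⁻¹ • y ∈ Ω := by
    apply hball
    rw [mem_ball_zero_iff, norm_smul, norm_inv, Real.norm_of_nonneg hN0.le,
      inv_mul_lt_iff₀ hN0]
    exact (div_lt_iff₀ hε).1 hN2
  have h2 := hup _ h1 N hN1
  rwa [smul_smul, mul_inv_cancel₀ hN0.ne', one_smul] at h2

lemma proper_K (Ω : Set (EuclideanSpace ℝ (Fin n))) (hΩo : IsOpen Ω)
    (g : EuclideanSpace ℝ (Fin n) → EuclideanSpace ℝ (Fin n)) (m : ℝ)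
    (hblow : ∀ p ∈ frontier Ω, ∀ z : ℕ → EuclideanSpace ℝ (Fin n), (∀ k, z k ∈ Ω) →
        Tendsto z atTop (nhds p) → Tendsto (fun k => ‖g (z k)‖) atTop atTop) (R : ℝ) :
    ∃ ρ > 0, ∀ x ∈ Ω, ‖x‖ ≤ R → ‖g x + m • x‖ ≤ R → Metric.closedBall x ρ ⊆ Ω := by
  by_contra hcon
  push Not at hcon
  have hk : ∀ k : ℕ, ∃ x w, x ∈ Ω ∧ ‖x‖ ≤ R ∧ ‖g x + m • x‖ ≤ R ∧ w ∉ Ω ∧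
      ‖w - x‖ ≤ 1 / ((k:ℝ) + 1) := by
    intro k
    obtain ⟨x, h1, h2, h3, h4⟩ := hcon (1 / ((k:ℝ) + 1)) (by positivity)
    obtain ⟨w, hw1, hw2⟩ := Set.not_subset.1 h4
    exact ⟨x, w, h1, h2, h3, hw2, by rwa [Metric.mem_closedBall, dist_eq_norm] at hw1⟩
  choose x w hx hxR hFR hw hwx using hk
  obtain ⟨p, _, φ, hφ, hlim⟩ := (isCompact_closedBall (0 : EuclideanSpace ℝ (Fin n)) R).tendsto_subseq
    (x := x) (fun k => by rw [mem_closedBall_zero_iff]; exact hxR k)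
  have hwl : Tendsto (fun k => w (φ k)) atTop (nhds p) := by
    have h0 : Tendsto (fun k => w k - x k) atTop (nhds 0) :=
      squeeze_zero_norm hwx tendsto_one_div_add_atTop_nhds_zero_nat
    have h1 := (h0.comp hφ.tendsto_atTop).add hlim
    simpa [Function.comp_def] using h1
  have hpn : p ∉ Ω := by
    have := hΩo.isClosed_compl.mem_of_tendsto hwl (Eventually.of_forall fun k => hw (φ k))
    exact this
  have hp : p ∈ frontier Ω := by
    rw [hΩo.frontier_eq]
    exact ⟨mem_closure_of_tendsto hlim (Eventually.of_forall fun k => hx (φ k)), hpn⟩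
  have h1 := hblow p hp (x ∘ φ) (fun k => hx _) hlim
  obtain ⟨k, hk⟩ := (h1.eventually_gt_atTop (R + |m| * R)).exists
  have h2 : ‖g (x (φ k))‖ ≤ ‖g (x (φ k)) + m • x (φ k)‖ + ‖m • x (φ k)‖ := by
    simpa using norm_sub_le (g (x (φ k)) + m • x (φ k)) (m • x (φ k))
  rw [norm_smul, Real.norm_eq_abs] at h2
  have h3 : |m| * ‖x (φ k)‖ ≤ |m| * R := by
    gcongr; exact hxR _
  have := hFR (φ k)
  simp only [Function.comp_apply] at hk
  linarith

end

section
variable {n : ℕ}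

lemma arctan_id (b μ : ℝ) (hb : 0 < b) (hμ : 0 < μ) :
    arctan ((μ - 2 * b) / μ) + arctan (5 * b * (μ + b)⁻¹ - 2) = - arctan (1 / 3) := by
  have h1 : 5 * b * (μ + b)⁻¹ - 2 = (3 * b - 2 * μ) / (μ + b) := by
    field_simp; ring
  have hpos : 0 < 3 * ((μ - b) ^ 2 + b ^ 2) := by positivity
  have h2 : 1 - (μ - 2 * b) / μ * ((3 * b - 2 * μ) / (μ + b)) =
      3 * ((μ - b) ^ 2 + b ^ 2) / (μ * (μ + b)) := by
    field_simp; ring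
  have h3 : 0 < 1 - (μ - 2 * b) / μ * ((3 * b - 2 * μ) / (μ + b)) := by
    rw [h2]; positivity
  rw [h1, arctan_add (by linarith), h2, ← arctan_neg]
  congr 1
  rw [div_eq_iff (by positivity)]
  field_simp
  ring

lemma equiv_of_pos (H : EuclideanSpace ℝ (Fin n) →L[ℝ] EuclideanSpace ℝ (Fin n))
    (b : ℝ) (hb : 0 < b) (hH : ∀ z, b * ‖z‖ ^ 2 ≤ ⟪H z, z⟫) :
    ∃ f : EuclideanSpace ℝ (Fin n) ≃L[ℝ] EuclideanSpace ℝ (Fin n),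
      (f : EuclideanSpace ℝ (Fin n) →L[ℝ] EuclideanSpace ℝ (Fin n)) = H := by
  have hinj : Function.Injective (H : EuclideanSpace ℝ (Fin n) →ₗ[ℝ] EuclideanSpace ℝ (Fin n)) := by
    rw [← LinearMap.ker_eq_bot, LinearMap.ker_eq_bot']
    intro z hz
    have h1 := hH z
    have hz' : H z = 0 := hz
    rw [hz', inner_zero_left] at h1
    by_contra hne
    have : 0 < b * ‖z‖ ^ 2 := by
      have := norm_pos_iff.2 hne
      positivity
    linarith
  refine ⟨(LinearEquiv.ofInjectiveEndo _ hinj).toContinuousLinearEquiv, ?_⟩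
  ext1 v
  rfl

lemma core (a b c : ℝ) (ha0 : 0 < a) (hb : 0 < b) (hc : 0 < c)
    (Ω : Set (EuclideanSpace ℝ (Fin n))) (hΩo : IsOpen Ω) (hne : Ω.Nonempty)
    (u : EuclideanSpace ℝ (Fin n) → ℝ)
    (hu : ContDiffOn ℝ 2 u Ω)
    (hadm : ∀ x ∈ Ω, (Hess n u x + (a + b) • (1 : Matrix (Fin n) (Fin n) ℝ)).PosDef)
    (heq : ∀ x ∈ Ω, c *
        ∑ i, Real.arctan ((eigs (Hess n u x) i + a - b) / (eigs (Hess n u x) i + a + b))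
      = -u x + (1/2) * ⟪x, gradient u x⟫)
    (hblow :
      ∀ p ∈ frontier Ω, ∀ z : ℕ → EuclideanSpace ℝ (Fin n), (∀ k, z k ∈ Ω) →
        Tendsto z atTop (nhds p) → Tendsto (fun k => ‖gradient u (z k)‖) atTop atTop) :
    Ω = Set.univ ∧ IsQuadPoly n u := by
  set m := a + 2 * b with hm
  set D := fun x => fderiv ℝ (gradient u) x with hD
  set F := fun x => gradient u x + m • x with hFd
  set H : EuclideanSpace ℝ (Fin n) → EuclideanSpace ℝ (Fin n) →L[ℝ] EuclideanSpace ℝ (Fin n) :=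
    fun x => D x + m • ContinuousLinearMap.id ℝ _ with hHd
  have hF : ∀ z ∈ Ω, HasFDerivAt F (H z) z := fun z hz =>
    (grad_deriv Ω hΩo u hu z hz).1.add ((hasFDerivAt_id z).const_smul m)
  have hHv : ∀ x v, H x v = D x v + m • v := fun x v => rfl
  have hH : ∀ y ∈ Ω, ∀ z, b * ‖z‖ ^ 2 ≤ ⟪H y z, z⟫ := by
    intro y hy z
    by_cases hz : z = 0
    · simp [hz]
    · have := (hess_spec a b Ω hΩo u hu y hy (hadm y hy)).1 z hz
      rw [hHv, inner_add_left, real_inner_smul_left, real_inner_self_eq_norm_sq]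
      have e : m * ‖z‖ ^ 2 = (a + b) * ‖z‖ ^ 2 + b * ‖z‖ ^ 2 := by rw [hm]; ring
      rw [e]
      linarith
  obtain ⟨x0, hx0⟩ := hne
  obtain ⟨S, hSc, hS⟩ := section_exists Ω F H b hb hF hH (proper_K Ω hΩo (gradient u) m hblow) x0 hx0
  have hT : ∀ y, ∃ T : EuclideanSpace ℝ (Fin n) →L[ℝ] EuclideanSpace ℝ (Fin n),
      HasFDerivAt S T y ∧ ∀ v, T (H (S y) v) = v := by
    intro y
    obtain ⟨f, hf⟩ := equiv_of_pos (H (S y)) b hb (hH _ (hS y).1)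
    refine ⟨f.symm, ?_, ?_⟩
    · refine HasFDerivAt.of_local_left_inverse (f := F) hSc.continuousAt ?_
        (Eventually.of_forall fun y => (hS y).2)
      rw [hf]; exact hF _ (hS y).1
    · intro v
      rw [← hf]
      exact f.symm_apply_apply v
  choose T hTd hTi using hT
  have hy : ∀ y, gradient u (S y) + m • S y = y := fun y => (hS y).2
  set C0 := 5 * b * c * (n * arctan (1 / 3)) with hC0
  set V : EuclideanSpace ℝ (Fin n) → ℝ := fun y =>
    5 * b * (⟪y, S y⟫ - u (S y) - m / 2 * ‖S y‖ ^ 2) - ‖y‖ ^ 2 + C0 with hVd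
  set G : EuclideanSpace ℝ (Fin n) → EuclideanSpace ℝ (Fin n) :=
    fun y => (5 * b) • S y - (2:ℝ) • y with hGd
  set A : EuclideanSpace ℝ (Fin n) → EuclideanSpace ℝ (Fin n) →L[ℝ] EuclideanSpace ℝ (Fin n) :=
    fun y => (5 * b) • T y - (2:ℝ) • ContinuousLinearMap.id ℝ _ with hAd
  have hV : ∀ y, HasGradientAt V (G y) y := by
    intro y
    rw [hasGradientAt_iff_hasFDerivAt]
    have h1 := (hasFDerivAt_id y).inner ℝ (hTd y)
    have h2 := (grad_has Ω hΩo u hu (S y) (hS y).1).hasFDerivAt.comp y (hTd y)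
    have h3 := (hTd y).norm_sq
    have h4 := (hasFDerivAt_id y).norm_sq
    obtain ⟨p, hp⟩ : ∃ p, p = gradient u (S y) := ⟨_, rfl⟩
    rw [← hp] at h2
    have h5 := ((((h1.sub h2).sub (h3.const_mul (m / 2))).const_mul (5 * b)).sub h4).add_const C0
    refine h5.congr_fderiv ?_
    ext1 v
    have e : ⟪y, T y v⟫ = ⟪p, T y v⟫ + m * ⟪S y, T y v⟫ := by
      have h := congrArg (fun w => ⟪w, T y v⟫) (hy y)
      simp only [inner_add_left, real_inner_smul_left] at h
      rw [hp]; exact h.symm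
    simp [hGd]
    rw [e, real_inner_comm v (S y)]
    left; ring
  have hG : ∀ y, HasFDerivAt G (A y) y := fun y =>
    ((hTd y).const_smul (5 * b)).sub ((hasFDerivAt_id y).const_smul (2:ℝ))
  set Φ : EuclideanSpace ℝ (Fin n) → ℝ := fun y => -V y + (1/2) * ⟪y, G y⟫ with hΦd
  have hΦ : ∀ y, Φ y = -(5 * b) * (-u (S y) + (1/2) * ⟪S y, gradient u (S y)⟫) - C0 := by
    intro y
    have e : ⟪y, S y⟫ = ⟪S y, gradient u (S y)⟫ + m * ‖S y‖ ^ 2 := by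
      have h := congrArg (fun w => ⟪w, S y⟫) (hy y)
      simp only [inner_add_left, real_inner_smul_left, real_inner_self_eq_norm_sq] at h
      rw [real_inner_comm (gradient u (S y))]; exact h.symm
    simp only [hΦd, hVd, hGd]
    rw [inner_sub_right, real_inner_smul_right, real_inner_smul_right, real_inner_self_eq_norm_sq, e]
    ring
  have hspec : ∀ y, ∃ (e : OrthonormalBasis (Fin n) ℝ (EuclideanSpace ℝ (Fin n))) (θ : Fin n → ℝ),
      (∀ i, A y (e i) = θ i • e i) ∧ (∀ i, |θ i| ≤ 3) ∧
        Φ y = (5 * b * c) * ∑ i, arctan (θ i) := by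
    intro y
    obtain ⟨-, e, he, hpos⟩ := hess_spec a b Ω hΩo u hu (S y) (hS y).1 (hadm _ (hS y).1)
    set l := eigs (Hess n u (S y)) with hl
    have hlm : ∀ i, l i + m = (l i + a + b) + b := fun i => by rw [hm]; ring
    refine ⟨e, fun i => 5 * b * (l i + a + b + b)⁻¹ - 2, ?_, ?_, ?_⟩
    · intro i
      have h1 : H (S y) (e i) = (l i + a + b + b) • e i := by
        rw [hHv, ← hlm, add_smul (l i) m]
        exact congrArg (fun w => w + m • e i) (he i)
      have hp : l i + a + b + b ≠ 0 := by
        have := hpos i; positivity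
      have h2 : T y (e i) = (l i + a + b + b)⁻¹ • e i := by
        have h3 := hTi y (e i)
        rw [h1, map_smul] at h3
        rw [eq_inv_smul_iff₀ hp]
        exact h3
      simp only [hAd, _root_.sub_apply, _root_.smul_apply, ContinuousLinearMap.id_apply]
      rw [h2, smul_smul, sub_smul]
    · intro i
      have hp := hpos i
      have h1 : 0 < 5 * b * (l i + a + b + b)⁻¹ := by positivity
      have h2 : 5 * b * (l i + a + b + b)⁻¹ ≤ 5 := by
        rw [← div_eq_mul_inv, div_le_iff₀ (by positivity)]
        linarith
      rw [abs_le]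
      constructor <;> linarith
    · rw [hΦ, ← heq _ (hS y).1]
      have h1 : ∀ i, arctan ((l i + a - b) / (l i + a + b)) =
          - arctan (1 / 3) - arctan (5 * b * (l i + a + b + b)⁻¹ - 2) := by
        intro i
        have := arctan_id b (l i + a + b) hb (hpos i)
        rw [← this]
        have e1 : l i + a + b - 2 * b = l i + a - b := by ring
        rw [e1]; ring
      rw [Finset.sum_congr rfl (fun i _ => h1 i), Finset.sum_sub_distrib, Finset.sum_const,
        Finset.card_univ, Fintype.card_fin, nsmul_eq_mul, hC0]
      ring
  have hK : 0 < 5 * b * c := by positivity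
  have hconst : ∀ y, Φ y = Φ 0 := fun y => le_antisymm
    (liouville V G A hV hG _ 3 hK Φ (fun _ => rfl) hspec 0 y)
    (liouville V G A hV hG _ 3 hK Φ (fun _ => rfl) hspec y 0)
  have hlin := homog V G (A 0) hV (hG 0) (Φ 0) hconst
  have hSlin : ∀ y, S y = T 0 y := by
    intro y
    have h1 := hlin y
    simp only [hGd, hAd, _root_.sub_apply, _root_.smul_apply, ContinuousLinearMap.id_apply] at h1
    have h2 := sub_left_injective h1
    exact smul_right_injective _ (by positivity : (5 * b) ≠ 0) h2
  have hsurj : ∀ x, ∃ y, S y = x := fun x => ⟨H (S 0) x, by rw [hSlin, hTi]⟩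
  have huniv : Ω = Set.univ := by
    ext x
    obtain ⟨y, rfl⟩ := hsurj x
    simp [(hS y).1]
  refine ⟨huniv, ?_⟩
  have hall : ∀ x, x ∈ Ω := fun x => by rw [huniv]; trivial
  obtain ⟨k, hk⟩ : ∃ k : ℝ, ∀ x, -u x + (1/2) * ⟪x, gradient u x⟫ = k := by
    refine ⟨-(Φ 0 + C0) / (5 * b), fun x => ?_⟩
    obtain ⟨y, rfl⟩ := hsurj x
    have h1 := hconst y
    rw [hΦ] at h1
    rw [eq_div_iff (by positivity)]
    linarith
  have hlin2 := homog u (gradient u) (D 0) (fun y => grad_has Ω hΩo u hu y (hall y))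
    (grad_deriv Ω hΩo u hu 0 (hall 0)).1 k hk
  have hh := hess_herm a b u 0 (hadm 0 (hall 0))
  refine ⟨Hess n u 0, 0, -k, ?_, fun x => ?_⟩
  · have h1 : (Hess n u 0)ᴴ = Hess n u 0 := hh
    rwa [Matrix.conjTranspose_eq_transpose_of_trivial] at h1
  · have h1 := hk x
    have h2 : ⟪x, gradient u x⟫ = ∑ i, ∑ j, Hess n u 0 i j * x i * x j := by
      rw [hlin2 x, hD]
      simp only
      rw [hess_apply_s5 Ω hΩo u hu 0 (hall 0) hh, PiLp.inner_apply]
      refine Finset.sum_congr rfl fun i _ => ?_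
      simp only [Matrix.mulVec, dotProduct, RCLike.inner_apply, conj_trivial, Finset.sum_mul]
      refine Finset.sum_congr rfl fun j _ => ?_
      ring
    rw [h2] at h1
    rw [inner_zero_left]
    linarith

end

theorem bernstein_domain_tau_gt_pi_div_four (n : ℕ) (hn : 1 ≤ n) (a b : ℝ)
    (ha0 : 0 < a) (ha1 : a < 1) (hb : b = Real.sqrt (1 - a ^ 2))
    (Ω : Set (EuclideanSpace ℝ (Fin n))) (hΩo : IsOpen Ω) (hΩc : IsConnected Ω)
    (u : EuclideanSpace ℝ (Fin n) → ℝ)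
    (hu : ContDiffOn ℝ 2 u Ω)
    (hadm : ∀ x ∈ Ω, (Hess n u x + (a + b) • (1 : Matrix (Fin n) (Fin n) ℝ)).PosDef)
    (heq : ∀ x ∈ Ω, (Real.sqrt (a ^ 2 + 1) / b) *
        ∑ i, Real.arctan ((eigs (Hess n u x) i + a - b) / (eigs (Hess n u x) i + a + b))
      = -u x + (1/2) * ⟪x, gradient u x⟫)
    (hblow :
      (∀ p ∈ frontier Ω, ∀ z : ℕ → EuclideanSpace ℝ (Fin n), (∀ k, z k ∈ Ω) →
        Tendsto z atTop (nhds p) → Tendsto (fun k => ‖gradient u (z k)‖) atTop atTop) ∨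
      (∀ p ∈ frontier Ω, ∀ z : ℕ → EuclideanSpace ℝ (Fin n), (∀ k, z k ∈ Ω) →
        Tendsto z atTop (nhds p) → Tendsto (fun k => |u (z k)|) atTop atTop)) :
    Ω = Set.univ ∧ IsQuadPoly n u := by
  have hb0 : 0 < b := by
    rw [hb]; exact Real.sqrt_pos.mpr (by nlinarith)
  have hc : 0 < Real.sqrt (a ^ 2 + 1) / b :=
    div_pos (Real.sqrt_pos.mpr (by positivity)) hb0
  rcases hblow with h | h
  · exact core a b _ ha0 hb0 hc Ω hΩo hΩc.nonempty u hu hadm heq h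
  · have huniv : Ω = Set.univ := by
      refine ray_univ Ω hΩo hΩc.nonempty u (gradient u) (grad_has Ω hΩo u hu)
        (Real.sqrt (a ^ 2 + 1) / b * (n * (π / 2))) ?_ h
      intro x hx
      rw [← heq x hx, abs_mul, abs_of_pos hc]
      refine mul_le_mul_of_nonneg_left ?_ hc.le
      refine (Finset.abs_sum_le_sum_abs _ _).trans ?_
      refine (Finset.sum_le_card_nsmul _ _ (π / 2) ?_).trans ?_
      · intro i _
        exact abs_le.mpr ⟨(Real.neg_pi_div_two_lt_arctan _).le, (Real.arctan_lt_pi_div_two _).le⟩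
      · simp
    refine core a b _ ha0 hb0 hc Ω hΩo hΩc.nonempty u hu hadm heq ?_
    intro p hp
    rw [huniv, frontier_univ] at hp
    exact absurd hp (Set.notMem_empty p)
end
end
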